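/- arXiv:0810.5310 — 2 statements merged into one kernel-verified Lean document; each statement's English description precedes it below -/
import Mathlib

section
/- There exist a fractional O_K-ideal 𝒜 in K and a totally positive element d ∈ F such that the symmetric bilinear form b_d(x,y) = Tr_{K/ℚ}(d x ȳ) makes (𝒜, b_d) a positive definite even unimodular ℤ-lattice of rank 2(p-1); that is, b_d(x,x) ∈ 2ℤ for all x ∈ 𝒜 and the dual lattice {x ∈ K : b_d(x,y) ∈ ℤ for all y ∈ 𝒜} equals 𝒜. -/
section File_c1
set_option maxHeartbeats 1000000 in
lemma stepC_pigeon (q l : ℕ) (hq : q.Prime) (hl : 0 < l) (hql : ¬ q ∣ l)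
    (hm : (l : ℤ) ∣ (q : ℤ) + 1) (s0 : ℤ) (hs0 : (q : ℤ) ∣ s0 ^ 2 - l) :
    ∃ a b z : ℤ, z ≠ 0 ∧ a ^ 2 + q * b ^ 2 = l * z ^ 2 := by
  classical
  have hq0 := hq.pos
  have : NeZero q := ⟨hq0.ne'⟩
  have : NeZero l := ⟨hl.ne'⟩
  let A := Nat.sqrt (q * l)
  let B := Nat.sqrt l
  let Z := Nat.sqrt q
  let S : Finset (ℕ × ℕ × ℕ) := Finset.range (A+1) ×ˢ (Finset.range (B+1) ×ˢ Finset.range (Z+1))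
  let f : ℕ × ℕ × ℕ → ZMod q × ZMod l := fun x => ((x.1 : ZMod q) - s0 * x.2.2, (x.1 : ZMod l) - x.2.1)
  have hA : q * l < (A+1)*(A+1) := Nat.lt_succ_sqrt _
  have hB : l < (B+1)*(B+1) := Nat.lt_succ_sqrt _
  have hZ : q < (Z+1)*(Z+1) := Nat.lt_succ_sqrt _
  have hA' : A * A ≤ q * l := Nat.sqrt_le _
  have hB' : B * B ≤ l := Nat.sqrt_le _
  have hZ' : Z * Z ≤ q := Nat.sqrt_le _
  have hcard : (Finset.univ : Finset (ZMod q × ZMod l)).card < S.card := by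
    rw [Finset.card_univ, Fintype.card_prod, ZMod.card, ZMod.card]
    simp only [S, Finset.card_product, Finset.card_range]
    have h1 : (q * l) * (q * l) < ((A+1)*((B+1)*(Z+1))) * ((A+1)*((B+1)*(Z+1))) := by
      calc (q*l)*(q*l) < ((A+1)*(A+1)) * (q * l) := by
            apply Nat.mul_lt_mul_of_pos_right hA (by positivity)
        _ ≤ ((A+1)*(A+1)) * (((Z+1)*(Z+1)) * ((B+1)*(B+1))) := by
            gcongr
        _ = _ := by ring
    by_contra hcon
    push Not at hcon
    exact absurd (Nat.mul_le_mul hcon hcon) (not_le.2 h1)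
  obtain ⟨x, hx, y, hy, hxy, hfxy⟩ := Finset.exists_ne_map_eq_of_card_lt_of_maps_to hcard
    (f := f) (fun _ _ => Finset.mem_coe.2 (Finset.mem_univ _))
  obtain ⟨a1, b1, z1⟩ := x
  obtain ⟨a2, b2, z2⟩ := y
  simp only [S, Finset.mem_product, Finset.mem_range] at hx hy
  simp only [f, Prod.mk.injEq] at hfxy
  obtain ⟨h1, h2⟩ := hfxy
  set a : ℤ := a1 - a2 with ha
  set b : ℤ := b1 - b2 with hb
  set z : ℤ := z1 - z2 with hz
  have d1 : (q : ℤ) ∣ a - s0 * z := by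
    rw [← ZMod.intCast_zmod_eq_zero_iff_dvd]
    push_cast [ha, hz]
    linear_combination h1
  have d2 : (l : ℤ) ∣ a - b := by
    rw [← ZMod.intCast_zmod_eq_zero_iff_dvd]
    push_cast [ha, hb]
    linear_combination h2
  have ba : a ^ 2 ≤ q * l := by
    have : |a| ≤ A := by rw [abs_le]; constructor <;> omega
    have := sq_le_sq' (by linarith [(abs_le.1 this).1]) (abs_le.1 this).2
    have h3 : ((A * A : ℕ) : ℤ) ≤ ((q * l : ℕ) : ℤ) := by exact_mod_cast hA'
    push_cast at h3
    nlinarith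
  have bb : b ^ 2 ≤ l := by
    have : |b| ≤ B := by rw [abs_le]; constructor <;> omega
    have := sq_le_sq' (by linarith [(abs_le.1 this).1]) (abs_le.1 this).2
    have h3 : ((B * B : ℕ) : ℤ) ≤ ((l : ℕ) : ℤ) := by exact_mod_cast hB'
    push_cast at h3
    nlinarith
  have bz : z ^ 2 ≤ q := by
    have : |z| ≤ Z := by rw [abs_le]; constructor <;> omega
    have := sq_le_sq' (by linarith [(abs_le.1 this).1]) (abs_le.1 this).2
    have h3 : ((Z * Z : ℕ) : ℤ) ≤ ((q : ℕ) : ℤ) := by exact_mod_cast hZ'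
    push_cast at h3
    nlinarith
  have hne : ¬ (a = 0 ∧ b = 0 ∧ z = 0) := by
    rintro ⟨h1, h2, h3⟩
    apply hxy
    simp only [Prod.mk.injEq]
    omega
  have hqZ : Prime (q : ℤ) := Nat.prime_iff_prime_int.1 hq
  have dq : (q : ℤ) ∣ a ^ 2 + q * b ^ 2 - l * z ^ 2 := by
    obtain ⟨u, hu⟩ := d1
    obtain ⟨v, hv⟩ := hs0
    refine ⟨u * (a + s0 * z) + b ^ 2 + v * z ^ 2, ?_⟩
    linear_combination (a + s0 * z) * hu + z ^ 2 * hv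
  have dl : (l : ℤ) ∣ a ^ 2 + q * b ^ 2 - l * z ^ 2 := by
    obtain ⟨u, hu⟩ := d2
    obtain ⟨v, hv⟩ := hm
    refine ⟨u * (a + b) + v * b ^ 2 - z ^ 2, ?_⟩
    linear_combination (a + b) * hu + b ^ 2 * hv
  have hcop : IsCoprime (q : ℤ) (l : ℤ) := by
    rw [Nat.isCoprime_iff_coprime]
    exact (Nat.Prime.coprime_iff_not_dvd hq).2 hql
  obtain ⟨k, hk⟩ := hcop.mul_dvd dq dl
  have hq0' : (0 : ℤ) < q := by exact_mod_cast hq0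
  have hl0' : (0 : ℤ) < l := by exact_mod_cast hl
  have hql0 : (0 : ℤ) < q * l := by positivity
  have nsq : ∀ w : ℤ, w ^ 2 ≠ q := by
    intro w hw
    have h1 : (q : ℤ) ∣ w := hqZ.dvd_of_dvd_pow (n := 2) (by rw [hw])
    obtain ⟨v, rfl⟩ := h1
    have : (q : ℤ) ∣ 1 := ⟨v ^ 2, by
      have : (q : ℤ) * (q * v ^ 2) = q * 1 := by linear_combination hw
      exact (mul_left_cancel₀ hq0'.ne' this).symm⟩
    exact hqZ.not_dvd_one this
  have nsq2 : ∀ w : ℤ, w ^ 2 ≠ q * l := by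
    intro w hw
    have h1 : (q : ℤ) ∣ w := hqZ.dvd_of_dvd_pow (n := 2) (by rw [hw]; exact dvd_mul_right _ _)
    obtain ⟨v, rfl⟩ := h1
    have : (q : ℤ) ∣ l := ⟨v ^ 2, by
      have : (q : ℤ) * (q * v ^ 2) = q * l := by linear_combination hw
      exact (mul_left_cancel₀ hq0'.ne' this).symm⟩
    exact hql (by exact_mod_cast this)
  have ba' : a ^ 2 < q * l := lt_of_le_of_ne ba (nsq2 a)
  have bz' : z ^ 2 < q := lt_of_le_of_ne bz (nsq z)
  have k1 : k < 2 := by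
    by_contra hcon
    push Not at hcon
    have e1 := mul_le_mul_of_nonneg_left bb hq0'.le
    have e2 := mul_nonneg hl0'.le (sq_nonneg z)
    have e3 := mul_le_mul_of_nonneg_left hcon hql0.le
    linarith
  have k2 : -1 < k := by
    by_contra hcon
    push Not at hcon
    have e1 := mul_lt_mul_of_pos_left bz' hl0'
    have e2 := mul_nonneg hq0'.le (sq_nonneg b)
    have e3 := mul_le_mul_of_nonneg_left hcon hql0.le
    have e4 := sq_nonneg a
    linarith
  have : k = 0 ∨ k = 1 := by omega
  rcases this with rfl | rfl
  · refine ⟨a, b, z, ?_, by linarith⟩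
    intro hz0
    rw [hz0] at hk
    have hb0 : b = 0 := by
      by_contra hb
      have e1 : 0 < (q : ℤ) * b ^ 2 := by positivity
      have e2 := sq_nonneg a
      linarith
    have ha0 : a = 0 := by
      rw [hb0] at hk
      have : a ^ 2 = 0 := by linarith
      exact pow_eq_zero_iff (two_ne_zero) |>.1 this
    exact hne ⟨ha0, hb0, hz0⟩
  · refine ⟨a * z - q * b, a + b * z, z ^ 2 + q, by positivity, ?_⟩
    linear_combination (z ^ 2 + q) * hk

/-- given `s² + q t² = 4 l z²`, minimal -/
lemma stepC_min (q l : ℕ) (hq : q.Prime) (hq4 : q % 4 = 3) (hl : 0 < l)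
    (h : ∃ a b z : ℤ, z ≠ 0 ∧ a ^ 2 + q * b ^ 2 = l * z ^ 2) :
    ∃ s t z w : ℤ, 0 < z ∧ s ^ 2 + q * t ^ 2 = 4 * l * z ^ 2 ∧ s + q * t = 2 * w ∧
      (∃ k0 k1 k2 : ℤ, z * k0 + s * k1 + w * k2 = 1) ∧
      (l % 2 = 1 → ∃ k0 k1 k2 : ℤ, (2 * z) * k0 + s * k1 + w * k2 = 1) := by
  classical
  have hqZ : Prime (q : ℤ) := Nat.prime_iff_prime_int.1 hq
  have hq0' : (0 : ℤ) < q := by exact_mod_cast hq.pos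
  let P : ℕ → Prop := fun z => 0 < z ∧ ∃ s t w : ℤ, s ^ 2 + q * t ^ 2 = 4 * l * (z : ℤ) ^ 2 ∧ s + q * t = 2 * w
  have hP : ∃ z, P z := by
    obtain ⟨a, b, z, hz, h⟩ := h
    refine ⟨z.natAbs, by omega, 2 * a, 2 * b, a + q * b, ?_, by ring⟩
    rw [Int.natCast_natAbs, sq_abs]
    linear_combination 4 * h
  obtain ⟨hz, s, t, w, h1, h2⟩ := Nat.find_spec hP
  set z := Nat.find hP with hzdef
  have hmin : ∀ z', P z' → z ≤ z' := fun z' h => Nat.find_min' hP h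
  have key : ∀ r : ℕ, r.Prime → (r : ℤ) ∣ z → (r : ℤ) ∣ s → (r : ℤ) ∣ w → False := by
    intro r hr hrz hrs hrw
    have hrZ : Prime (r : ℤ) := Nat.prime_iff_prime_int.1 hr
    have hr0 : (r : ℤ) ≠ 0 := hrZ.ne_zero
    obtain ⟨z1, hz1⟩ := (Int.natCast_dvd_natCast.1 hrz)
    obtain ⟨s1, hs1⟩ := hrs
    obtain ⟨w1, hw1⟩ := hrw
    have hrt : (r : ℤ) ∣ t := by
      have h3 : (r : ℤ) ∣ q * t := ⟨2 * w1 - s1, by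
        linear_combination h2 - hs1 + 2 * hw1⟩
      rcases hrZ.dvd_or_dvd h3 with h4 | h4
      · have : r = q := (Nat.prime_dvd_prime_iff_eq hr hq).1 (by exact_mod_cast h4)
        subst this
        have : (r : ℤ) * (t ^ 2) = r * (r * (4 * l * z1 ^ 2 - s1 ^ 2)) := by
          rw [hz1, hs1] at h1
          push_cast at h1
          linear_combination h1
        have := mul_left_cancel₀ hr0 this
        exact hrZ.dvd_of_dvd_pow (n := 2) ⟨_, this⟩
      · exact h4
    obtain ⟨t1, ht1⟩ := hrt
    have : P z1 := by
      refine ⟨?_, s1, t1, w1, ?_, ?_⟩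
      · rcases Nat.eq_zero_or_pos z1 with h | h
        · rw [h] at hz1; simp at hz1; omega
        · exact h
      · have : (r : ℤ) ^ 2 * (s1 ^ 2 + q * t1 ^ 2) = r ^ 2 * (4 * l * (z1 : ℤ) ^ 2) := by
          rw [hz1, hs1, ht1] at h1
          push_cast at h1
          linear_combination h1
        exact mul_left_cancel₀ (pow_ne_zero 2 hr0) this
      · have : (r : ℤ) * (s1 + q * t1) = r * (2 * w1) := by
          rw [hs1, ht1, hw1] at h2
          linear_combination h2
        exact mul_left_cancel₀ hr0 this
    have hle := hmin _ this
    have h5 := hr.two_le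
    have : 0 < z1 := this.1
    nlinarith
  have bez : ∀ N : ℤ, (∀ r : ℕ, r.Prime → (r : ℤ) ∣ N → (r : ℤ) ∣ s → (r : ℤ) ∣ w → False) →
      ∃ k0 k1 k2 : ℤ, N * k0 + s * k1 + w * k2 = 1 := by
    intro N hN
    have : Int.gcd N (Int.gcd s w) = 1 := by
      by_contra hcon
      obtain ⟨r, hr, hd⟩ := Nat.exists_prime_and_dvd hcon
      have hd' : (r : ℤ) ∣ (Int.gcd N (Int.gcd s w) : ℕ) := by exact_mod_cast hd
      have e1 := hd'.trans (Int.gcd_dvd_left _ _)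
      have e2 := hd'.trans (Int.gcd_dvd_right _ _)
      exact hN r hr e1 (e2.trans (Int.gcd_dvd_left _ _)) (e2.trans (Int.gcd_dvd_right _ _))
    have hb := Int.gcd_eq_gcd_ab N (Int.gcd s w)
    rw [this] at hb
    have hb2 := Int.gcd_eq_gcd_ab s w
    generalize Int.gcdB N (Int.gcd s w) = g1 at hb
    generalize Int.gcdA N (Int.gcd s w) = g0 at hb
    rw [hb2] at hb
    push_cast at hb
    exact ⟨g0, s.gcdA w * g1, s.gcdB w * g1, by linear_combination -hb⟩
  refine ⟨s, t, z, w, by exact_mod_cast hz, h1, h2, bez _ key, fun hl2 => bez _ ?_⟩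
  intro r hr hrz hrs hrw
  by_cases hrz' : (r : ℤ) ∣ z
  · exact key r hr hrz' hrs hrw
  have hrZ : Prime (r : ℤ) := Nat.prime_iff_prime_int.1 hr
  have hr2 : (r : ℤ) ∣ 2 := by
    rcases hrZ.dvd_or_dvd hrz with h | h
    · exact h
    · exact absurd h hrz'
  have : r = 2 := (Nat.prime_dvd_prime_iff_eq hr Nat.prime_two).1 (by exact_mod_cast hr2)
  subst this
  push_cast at hrz' hrs hrw
  obtain ⟨s1, rfl⟩ := hrs
  obtain ⟨w1, rfl⟩ := hrw
  obtain ⟨q1, hq1⟩ : ∃ q1 : ℤ, (q : ℤ) = 4 * q1 + 3 := ⟨q / 4, by omega⟩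
  obtain ⟨l1, hl1⟩ : ∃ l1 : ℤ, (l : ℤ) = 2 * l1 + 1 := ⟨l / 2, by omega⟩
  obtain ⟨z1, hz1⟩ : ∃ z1 : ℤ, (z : ℤ) = 2 * z1 + 1 := ⟨z / 2, by omega⟩
  rw [hq1] at h1 h2
  obtain ⟨t1, rfl⟩ : ∃ t1 : ℤ, t = 2 * t1 := ⟨2 * w1 - s1 - (2 * q1 + 1) * t, by linear_combination h2⟩
  have h3 : s1 + t1 = 2 * (w1 - (2*q1+1) * t1) := by
    linarith
  have h4 : s1 = 2 * (w1 - (2*q1+1) * t1) - t1 := by linarith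
  generalize (w1 - (2*q1+1) * t1) = v at h4
  rw [hl1, hz1, h4] at h1
  have : 2 * (2 * v ^ 2 - 2 * v * t1 + t1 ^ 2 * (2 * q1 + 2)) = 2 * (l1 * (2 * z1+1)^2 + 2 * z1 ^ 2 + 2 * z1) + 1 := by
    linarith
  omega

lemma stepC (l p : ℕ) (hl : 0 < l) (hp : p.Prime) (hp1 : p % 4 = 1) (hpl : ¬ p ∣ l) :
    ∃ q : ℕ, q.Prime ∧ q % 4 = 3 ∧ q ≠ p ∧ (q : ZMod p) ^ ((p - 1) / 2) = -1 ∧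
    ∃ s t z w : ℤ, 0 < z ∧ s ^ 2 + q * t ^ 2 = 4 * l * z ^ 2 ∧ s + q * t = 2 * w ∧
      (∃ k0 k1 k2 : ℤ, z * k0 + s * k1 + w * k2 = 1) ∧
      (l % 2 = 1 → ∃ k0 k1 k2 : ℤ, (2 * z) * k0 + s * k1 + w * k2 = 1) := by
  have : Fact p.Prime := ⟨hp⟩
  have hp2 : p ≠ 2 := by rintro rfl; omega
  obtain ⟨nr, hnr⟩ := FiniteField.exists_nonsquare (F := ZMod p) (by rwa [ZMod.ringChar_zmod_n])
  have hnr0 : nr ≠ 0 := by rintro rfl; exact hnr (IsSquare.zero)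
  have hcop : Nat.Coprime p (4 * l) := by
    rw [Nat.Prime.coprime_iff_not_dvd hp, hp.dvd_mul, not_or]
    refine ⟨?_, hpl⟩
    rw [show 4 = 2 ^ 2 by norm_num]
    intro h
    exact hp2 ((Nat.prime_dvd_prime_iff_eq hp Nat.prime_two).1 (hp.dvd_of_dvd_pow h))
  obtain ⟨c, hc1, hc2⟩ := Nat.chineseRemainder hcop nr.val (4 * l - 1)
  have hccop : Nat.Coprime c (p * (4 * l)) := by
    apply Nat.Coprime.mul_right
    · have : Nat.Coprime nr.val p := by
        rw [Nat.coprime_comm, Nat.Prime.coprime_iff_not_dvd hp]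
        intro h
        rw [← ZMod.natCast_eq_zero_iff, ZMod.natCast_zmod_val] at h
        exact hnr0 h
      rw [Nat.Coprime, hc1.gcd_eq]
      exact this
    · rw [Nat.Coprime, hc2.gcd_eq]
      exact (Nat.coprime_self_sub_left (by omega)).2 (Nat.coprime_one_left _)
  obtain ⟨q, hqgt, hq, hqc⟩ := Nat.forall_exists_prime_gt_and_modEq (p + l) (q := p * (4 * l)) (a := c)
    (by have := hp.pos; positivity) hccop
  have hqp : q ≡ nr.val [MOD p] := (hqc.of_mul_right _).trans hc1
  have hq4l : q ≡ 4 * l - 1 [MOD 4 * l] := (hqc.of_mul_left _).trans hc2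
  have hq4 : q % 4 = 3 := by
    have := hq4l.of_mul_right l
    rw [Nat.ModEq] at this
    omega
  have hqnr : (q : ZMod p) = nr := by
    rw [(ZMod.natCast_eq_natCast_iff _ _ _).2 hqp, ZMod.natCast_zmod_val]
  have hdiv : ((4 * l : ℕ) : ℤ) ∣ (q : ℤ) + 1 := by
    have := (Nat.modEq_iff_dvd.1 hq4l)
    rw [Nat.cast_sub (by omega)] at this
    have h2 := dvd_sub (dvd_refl ((4 * l : ℕ) : ℤ)) this
    have e : ((4 * l : ℕ) : ℤ) - (((4 * l : ℕ) : ℤ) - (1 : ℕ) - q) = (q : ℤ) + 1 := by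
      push_cast; ring
    rwa [e] at h2
  have : Fact q.Prime := ⟨hq⟩
  have hql : ¬ q ∣ l := fun h => by have := Nat.le_of_dvd hl h; omega
  have hj : legendreSym q (l : ℤ) = 1 := by
    rw [jacobiSym.legendreSym.to_jacobiSym, jacobiSym.mod_right' l (hq.odd_of_ne_two (by omega))]
    have e : q % (4 * l) = 4 * l - 1 := by
      rw [hq4l]; exact Nat.mod_eq_of_lt (by omega)
    rw [e]
    have e2 : jacobiSym (4 * l : ℤ) (4 * l - 1) = 1 := by
      rw [jacobiSym.mod_left]
      have : (4 * (l : ℤ)) % ((4 * l - 1 : ℕ) : ℤ) = 1 % ((4 * l - 1 : ℕ) : ℤ) := by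
        apply Int.emod_emod_of_dvd _ (dvd_refl _) |>.symm.trans
        rw [Int.emod_emod_of_dvd _ (dvd_refl _)]
        apply Int.ModEq.symm
        rw [Int.modEq_iff_dvd]
        rw [Nat.cast_sub (by omega)]
        push_cast
        exact dvd_refl _
      rw [this, ← jacobiSym.mod_left, jacobiSym.one_left]
    rw [jacobiSym.mul_left] at e2
    have e4 : jacobiSym 4 (4 * l - 1) = 1 := by
      rw [show (4 : ℤ) = 2 ^ 2 by norm_num, jacobiSym.pow_left]
      apply jacobiSym.sq_one
      have : Int.gcd ((2 : ℕ) : ℤ) ((4 * l - 1 : ℕ) : ℤ) = 1 := by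
        rw [Int.gcd_natCast_natCast]
        exact (Nat.coprime_two_left.2 ⟨2 * l - 1, by omega⟩)
      exact this
    rw [e4, one_mul] at e2
    exact e2
  obtain ⟨s0, hs0⟩ : ∃ s0 : ℤ, (q : ℤ) ∣ s0 ^ 2 - l := by
    have hl0 : ((l : ℤ) : ZMod q) ≠ 0 := by
      rw [Int.cast_natCast, Ne, ZMod.natCast_eq_zero_iff]; exact hql
    obtain ⟨y, hy⟩ := (legendreSym.eq_one_iff q hl0).1 hj
    refine ⟨y.val, ?_⟩
    rw [← ZMod.intCast_zmod_eq_zero_iff_dvd]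
    push_cast
    rw [ZMod.natCast_zmod_val]
    push_cast at hy
    rw [hy]; ring
  refine ⟨q, hq, hq4, by omega, ?_, stepC_min q l hq hq4 hl
    (stepC_pigeon q l hq hl hql ((Int.natCast_dvd_natCast.2 (dvd_mul_left l 4)).trans hdiv) s0 hs0)⟩
  rw [hqnr]
  have e : (p - 1) / 2 = p / 2 := by omega
  rw [e]
  rcases ZMod.pow_div_two_eq_neg_one_or_one p hnr0 with h | h
  · exact absurd ((ZMod.euler_criterion p hnr0).2 h) hnr
  · exact h
end File_c1

section File_s1
open Polynomial in
lemma sign_lemma_pow (a : ℕ) (T : Module.End (ZMod 2) (ℕ → ZMod 2)) (hT : ∀ f i, T f i = f (i + 1))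
    (S : ℕ → ZMod 2) (hS : ∀ i, S (i + 2 ^ a) = S i + 1) :
    ∀ m ≤ 2 ^ a, ∀ f : ℕ → ZMod 2, ((T - 1) ^ (m + 1)) f = 0 →
      ∃ P : (ZMod 2)[X], f = aeval T P (((T - 1) ^ (2 ^ a - m)) S) := by
  have hTk : ∀ k f i, (T ^ k) f i = f (i + k) := by
    intro k
    induction k with
    | zero => intro f i; simp
    | succ k ih => intro f i; rw [pow_succ, Module.End.mul_apply, ih, hT]; congr 1
  have hSN : (((T - 1) ^ (2 ^ a) : Module.End (ZMod 2) (ℕ → ZMod 2))) S = 1 := by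
    have : ((X - 1 : (ZMod 2)[X]) ^ (2 ^ a)) = X ^ (2 ^ a) - 1 := by
      rw [sub_pow_char_pow, one_pow]
    have h2 := congrArg (aeval T) this
    simp only [map_pow, map_sub, aeval_X, map_one] at h2
    rw [h2]
    ext i
    simp [hTk, hS]
  have hconst : ∀ f : ℕ → ZMod 2, (T - 1) f = 0 → f = f 0 • (1 : ℕ → ZMod 2) := by
    intro f hf
    ext i
    induction i with
    | zero => simp
    | succ i ih =>
      have := congrFun hf i
      simp only [LinearMap.sub_apply, Module.End.one_apply, Pi.sub_apply, hT, Pi.zero_apply] at this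
      rw [sub_eq_zero.1 this, ih]; simp
  intro m
  induction m with
  | zero =>
    intro _ f hf
    refine ⟨C (f 0), ?_⟩
    rw [zero_add, pow_one] at hf
    rw [Nat.sub_zero, hSN, aeval_C, Module.algebraMap_end_apply]
    exact hconst f hf
  | succ m ih =>
    intro hm f hf
    obtain ⟨P, hP⟩ := ih (by omega) ((T - 1) f) (by
      rw [← Module.End.mul_apply, ← pow_succ]; exact hf)
    have hc : Commute (T - 1) (aeval T P) := by
      have h1 : T - 1 = aeval T (X - 1 : (ZMod 2)[X]) := by simp
      rw [h1]
      exact Commute.map (Commute.all _ _) (aeval T)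
    have e1 : 2 ^ a - m = (2 ^ a - (m + 1)) + 1 := by omega
    set g := aeval T P (((T - 1) ^ (2 ^ a - (m + 1))) S) with hg
    have hfg : (T - 1) (f - g) = 0 := by
      rw [map_sub, hP, hg, e1, pow_succ', ← Module.End.mul_apply, ← Module.End.mul_apply, ← Module.End.mul_apply,
        ← mul_assoc, hc.eq]
      exact sub_self _
    have h2 := hconst _ hfg
    refine ⟨P + C ((f - g) 0) * (X - 1) ^ (m + 1), ?_⟩
    rw [map_add, LinearMap.add_apply, ← hg, map_mul, aeval_C, map_pow, map_sub, aeval_X, map_one,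
      Module.End.mul_apply, Module.algebraMap_end_apply, ← Module.End.mul_apply, ← pow_add,
      show m + 1 + (2 ^ a - (m + 1)) = 2 ^ a by omega, hSN, ← h2]
    abel

lemma sign_lemma (n : ℕ) (hn : 0 < n) (s s' : ℕ → ZMod 2) (hs : ∀ i, s (i + n) = s i + 1)
    (hs' : ∀ i, s' (i + n) = s' i + 1) :
    ∃ A B : Finset ℕ, Odd A.card ∧ Odd B.card ∧ ∀ i, ∑ k ∈ A, s (i + k) = ∑ k ∈ B, s' (i + k) := by
  classical
  obtain ⟨a, m, hm, hnm⟩ := Nat.exists_eq_two_pow_mul_odd hn.ne'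
  let T : Module.End (ZMod 2) (ℕ → ZMod 2) :=
    { toFun := fun f i => f (i + 1), map_add' := fun _ _ => rfl, map_smul' := fun _ _ => rfl }
  have hT : ∀ f i, T f i = f (i + 1) := fun _ _ => rfl
  have hTk : ∀ k f i, (T ^ k) f i = f (i + k) := by
    intro k
    induction k with
    | zero => intro f i; simp
    | succ k ih => intro f i; rw [pow_succ, Module.End.mul_apply, ih, hT]; congr 1
  have two0 : (1 : ZMod 2) + 1 = 0 := by decide
  let H : Polynomial (ZMod 2) := ∑ k ∈ Finset.range m, Polynomial.X ^ (2 * 2 ^ a * k)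
  have hH : ∀ f i, Polynomial.aeval T H f i = ∑ k ∈ Finset.range m, f (i + 2 * 2 ^ a * k) := by
    intro f i
    simp [H, map_sum, LinearMap.sum_apply, Finset.sum_apply, hTk]
  have hper : ∀ f : ℕ → ZMod 2, (∀ i, f (i + n) = f i + 1) →
      ∀ i, Polynomial.aeval T H f (i + 2 ^ a) = Polynomial.aeval T H f i + 1 := by
    intro f hf
    have h1 : ∀ i, Polynomial.aeval T H f (i + 2 * 2 ^ a) = Polynomial.aeval T H f i := by
      intro i
      rw [hH, hH]
      have e : ∀ k, f (i + 2 * 2 ^ a + 2 * 2 ^ a * k) = f (i + 2 * 2 ^ a * (k + 1)) := by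
        intro k; congr 1; ring
      simp only [e]
      have e2 := Finset.sum_range_succ (fun k => f (i + 2 * 2 ^ a * k)) m
      rw [Finset.sum_range_succ'] at e2
      have e3 : f (i + 2 * 2 ^ a * m) = f (i + 2 * 2 ^ a * 0) := by
        rw [show i + 2 * 2 ^ a * m = i + n + n by rw [hnm]; ring, hf, hf, add_assoc, two0]; simp
      rw [e3] at e2
      exact add_right_cancel e2
    have h2 : ∀ j i, Polynomial.aeval T H f (i + 2 * 2 ^ a * j) = Polynomial.aeval T H f i := by
      intro j
      induction j with
      | zero => intro i; simp
      | succ j ih => intro i; rw [mul_add, ← add_assoc, mul_one, h1, ih]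
    intro i
    obtain ⟨j, hj⟩ := hm
    rw [← h2 j (i + 2 ^ a), show i + 2 ^ a + 2 * 2 ^ a * j = i + n by rw [hnm, hj]; ring]
    rw [hH, hH]
    have : ∀ k, f (i + n + 2 * 2 ^ a * k) = f (i + 2 * 2 ^ a * k) + 1 := by
      intro k; rw [← hf]; congr 1; ring
    simp only [this, Finset.sum_add_distrib]
    simp only [Finset.sum_const, Finset.card_range, hj, nsmul_eq_mul, mul_one]
    push_cast
    rw [show (2 : ZMod 2) = 0 from two0]; simp
  have hS := hper s hs
  have hS' := hper s' hs'
  obtain ⟨P, hP⟩ := sign_lemma_pow a T hT _ hS (2 ^ a) le_rfl (Polynomial.aeval T H s') (by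
    have : ((Polynomial.X - 1 : Polynomial (ZMod 2)) ^ (2 ^ a)) = Polynomial.X ^ (2 ^ a) - 1 := by
      rw [sub_pow_char_pow, one_pow]
    have h2 := congrArg (Polynomial.aeval T) this
    simp only [map_pow, map_sub, Polynomial.aeval_X, map_one] at h2
    rw [pow_succ', h2]
    ext i
    rw [Module.End.mul_apply]
    simp [hTk, hS', hT])
  rw [Nat.sub_self, pow_zero, Module.End.one_apply, ← Module.End.mul_apply, ← map_mul] at hP
  set Q := P * H
  have hQ : ∀ f i, Polynomial.aeval T Q f i = ∑ k ∈ Q.support, f (i + k) := by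
    intro f i
    rw [Polynomial.aeval_eq_sum_range, ]
    rw [LinearMap.sum_apply, Finset.sum_apply]
    symm
    apply Finset.sum_subset_zero_on_sdiff
    · exact Polynomial.supp_subset_range_natDegree_succ
    · intro k hk
      rw [Finset.mem_sdiff, Polynomial.notMem_support_iff] at hk
      rw [hk.2]; simp
    · intro k hk
      have h0 := Polynomial.mem_support_iff.1 hk
      have : Q.coeff k = 1 := by
        generalize Q.coeff k = c at h0
        revert c; decide
      rw [this, one_smul, hTk]
  let B := (Finset.range m).image (fun k => 2 * 2 ^ a * k)
  have hinj : Function.Injective (fun k : ℕ => 2 * 2 ^ a * k) := 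
    fun x y h => Nat.eq_of_mul_eq_mul_left (by positivity) h
  have hB : ∀ f i, Polynomial.aeval T H f i = ∑ k ∈ B, f (i + k) := by
    intro f i
    rw [hH, Finset.sum_image (fun x _ y _ h => hinj h)]
  have hBc : B.card = m := by
    rw [Finset.card_image_of_injective _ hinj, Finset.card_range]
  have hmain : ∀ i, ∑ k ∈ Q.support, s (i + k) = ∑ k ∈ B, s' (i + k) := by
    intro i
    rw [← hQ, ← hB, hP]
  refine ⟨Q.support, B, ?_, by rw [hBc]; exact hm, hmain⟩
  have h1 := hmain (0 + n)
  have e1 : ∀ k, s (0 + n + k) = s (0 + k) + 1 := by intro k; rw [← hs]; congr 1; ring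
  have e2 : ∀ k, s' (0 + n + k) = s' (0 + k) + 1 := by intro k; rw [← hs']; congr 1; ring
  simp only [e1, e2, Finset.sum_add_distrib, hmain 0] at h1
  have h2 := add_left_cancel h1
  rw [Finset.sum_const, Finset.sum_const, hBc, nsmul_eq_mul, nsmul_eq_mul, mul_one, mul_one] at h2
  obtain ⟨j, hj⟩ := hm
  rw [hj] at h2
  push_cast at h2
  rw [show (2 : ZMod 2) = 0 from two0, zero_mul, zero_add] at h2
  rw [← Nat.not_even_iff_odd, ← ZMod.natCast_eq_zero_iff_even, h2]
  decide
end File_s1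

section File_l0
open Polynomial IntermediateField NumberField

lemma cyc_aut (n : ℕ) [NeZero n] (C : Type) [Field C] [CharZero C] [IsCyclotomicExtension {n} ℚ C] {ζ : C}
    (hζ : IsPrimitiveRoot ζ n) (a : ℕ) (ha : a.Coprime n) : ∃ σ : C ≃ₐ[ℚ] C, σ ζ = ζ ^ a := by
  have hμ := hζ.pow_of_coprime a ha
  have hirr : Irreducible (cyclotomic n ℚ) := cyclotomic.irreducible_rat (NeZero.pos n)
  have h0 : minpoly ℚ (hζ.powerBasis ℚ).gen = minpoly ℚ (hμ.powerBasis ℚ).gen := by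
    rw [IsPrimitiveRoot.powerBasis_gen, IsPrimitiveRoot.powerBasis_gen,
      ← hζ.minpoly_eq_cyclotomic_of_irreducible hirr, ← hμ.minpoly_eq_cyclotomic_of_irreducible hirr]
  refine ⟨(hζ.powerBasis ℚ).equivOfMinpoly (hμ.powerBasis ℚ) h0, ?_⟩
  have h1 := PowerBasis.equivOfMinpoly_gen _ _ h0
  generalize (hζ.powerBasis ℚ).equivOfMinpoly (hμ.powerBasis ℚ) h0 = σ at h1
  rwa [IsPrimitiveRoot.powerBasis_gen, IsPrimitiveRoot.powerBasis_gen] at h1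

section L0
variable {K : Type} [Field K] [NumberField K] {p : ℕ} {α ζ : K} {l : ℕ}

lemma L0_cyc (hp : p.Prime) (hζ : IsPrimitiveRoot ζ p) : IsCyclotomicExtension {p} ℚ ℚ⟮ζ⟯ := by
  have : NeZero p := ⟨hp.ne_zero⟩
  exact hζ.intermediateField_adjoin_isCyclotomicExtension ℚ

lemma L0_ext {L : Type} [Field L] [Algebra ℚ L] (hgen : IntermediateField.adjoin ℚ {α, ζ} = ⊤) (f g : K →ₐ[ℚ] L) (h1 : f α = g α)
    (h2 : f ζ = g ζ) : f = g := by
  have : (IntermediateField.adjoin ℚ {α, ζ}) ≤ (AlgHom.equalizer f g).toIntermediateField (by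
      intro x hx
      rw [AlgHom.mem_equalizer] at hx ⊢
      rw [map_inv₀, map_inv₀, hx]) := by
    rw [IntermediateField.adjoin_le_iff]
    rintro x (rfl | rfl)
    · exact h1
    · exact h2
  rw [hgen] at this
  ext x
  exact this (IntermediateField.mem_top (x := x))

lemma L0_notmem (hp : p.Prime) (hp1 : p % 4 = 1) (hζ : IsPrimitiveRoot ζ p)
    (hl : 0 < l) (hα : α ^ 2 = -(l : K)) (conj : K ≃ₐ[ℚ] K) (hcα : conj α = -α) (hcζ : conj ζ = ζ⁻¹) :
    α ∉ ℚ⟮ζ⟯ := by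
  intro hmem
  have : NeZero p := ⟨hp.ne_zero⟩
  have : Fact p.Prime := ⟨hp⟩
  have hcyc := L0_cyc hp hζ
  let M := ℚ⟮ζ⟯
  let ζM : M := AdjoinSimple.gen ℚ ζ
  have hζMc : (ζM : K) = ζ := AdjoinSimple.coe_gen ℚ ζ
  have hζM : IsPrimitiveRoot ζM p := by
    rw [← hζMc] at hζ
    exact IsPrimitiveRoot.coe_submonoidClass_iff.1 hζ
  obtain ⟨t, ht⟩ := (ZMod.exists_sq_eq_neg_one_iff (p := p)).2 (by omega)
  have ht0 : t ≠ 0 := by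
    rintro rfl
    simp at ht
  obtain ⟨σ, hσ⟩ := cyc_aut p M hζM t.val (ZMod.val_coe_unit_coprime (Units.mk0 t ht0))
  let a : M := ⟨α, hmem⟩
  have ha : a ^ 2 = -(l : M) := by
    apply Subtype.ext
    push_cast
    exact hα
  have hσa : σ (σ a) = a := by
    have h1 : (σ a) ^ 2 = a ^ 2 := by rw [← map_pow, ha]; simp
    rcases sq_eq_sq_iff_eq_or_eq_neg.1 h1 with h | h
    · rw [h, h]
    · rw [h, map_neg, h, neg_neg]
  have hσζ : ((σ (σ ζM) : M) : K) = conj (ζM : K) := by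
    rw [hσ, map_pow, hσ, ← pow_mul]
    push_cast
    rw [hζMc, hcζ]
    apply eq_inv_of_mul_eq_one_left
    rw [← pow_succ]
    rw [hζ.pow_eq_one_iff_dvd, ← ZMod.natCast_eq_zero_iff]
    push_cast
    rw [ZMod.natCast_zmod_val, ← ht]; simp
  have heq : ((conj : K →ₐ[ℚ] K).comp M.val) = M.val.comp ((σ.trans σ : M ≃ₐ[ℚ] M) : M →ₐ[ℚ] M) := by
    apply IntermediateField.algHom_ext_of_eq_adjoin ℚ (rfl : M = ℚ⟮ζ⟯)
    intro x hx
    obtain rfl : x = ζ := hx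
    exact hσζ.symm
  have h1 := congrArg (fun f : M →ₐ[ℚ] K => f a) heq
  have h2 : conj α = ((σ (σ a) : M) : K) := h1
  rw [hσa, hcα] at h2
  have h3 : -α = α := h2
  have h4 : α = 0 := by
    have : (2 : K) * α = 0 := by linear_combination -h3
    simpa using this
  rw [h4] at hα
  simp at hα
  omega

lemma L0_minpoly (hα : α ^ 2 = -(l : K)) (hnm : α ∉ ℚ⟮ζ⟯) :
    minpoly ℚ⟮ζ⟯ α = X ^ 2 + C (l : ℚ⟮ζ⟯) := by
  symm
  apply minpoly.eq_of_irreducible_of_monic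
  · have hd : (X ^ 2 + C (l : ℚ⟮ζ⟯)).natDegree = 2 := natDegree_X_pow_add_C
    rw [Polynomial.irreducible_iff_roots_eq_zero_of_degree_le_three (by rw [hd]) (by rw [hd]; norm_num)]
    rw [Multiset.eq_zero_iff_forall_notMem]
    intro x hx
    have hx := (mem_roots'.1 hx).2
    simp only [IsRoot.def, eval_add, eval_pow, eval_X, eval_C] at hx
    have h1 : ((x : K)) ^ 2 = α ^ 2 := by
      rw [hα]
      have := congrArg (fun y : ℚ⟮ζ⟯ => (y : K)) hx
      push_cast at this
      linear_combination this
    apply hnm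
    rcases sq_eq_sq_iff_eq_or_eq_neg.1 h1 with h | h
    · rw [← h]; exact x.2
    · rw [← neg_eq_iff_eq_neg.2 h]; exact neg_mem x.2
  · simp only [map_add, map_pow, aeval_X, aeval_C, hα, map_natCast]; ring
  · exact monic_X_pow_add_C _ two_ne_zero

lemma L0_top (hgen : IntermediateField.adjoin ℚ {α, ζ} = ⊤) :
    Algebra.adjoin ℚ⟮ζ⟯ {α} = ⊤ := by
  have h1 : IntermediateField.adjoin ℚ⟮ζ⟯ {α} = ⊤ := by
    have h0 := IntermediateField.adjoin_adjoin_left ℚ ({ζ} : Set K) ({α} : Set K)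
    rw [Set.union_singleton, hgen] at h0
    exact (IntermediateField.restrictScalars_eq_top_iff (K := ℚ)).1 h0
  have h2 := IntermediateField.adjoin_simple_toSubalgebra_of_isAlgebraic
    (Algebra.IsAlgebraic.isAlgebraic (R := ℚ⟮ζ⟯) α)
  rw [← h2, h1, IntermediateField.top_toSubalgebra]

/-- the power basis -/
noncomputable def L0_pb (hgen : IntermediateField.adjoin ℚ {α, ζ} = ⊤) : PowerBasis ℚ⟮ζ⟯ K :=
  PowerBasis.ofAdjoinEqTop (Algebra.IsIntegral.isIntegral α) (L0_top hgen)

lemma L0_pb_gen (hgen : IntermediateField.adjoin ℚ {α, ζ} = ⊤) : (L0_pb hgen).gen = α := by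
  simp [L0_pb]

lemma L0_finrank2 (hα : α ^ 2 = -(l : K)) (hnm : α ∉ ℚ⟮ζ⟯)
    (hgen : IntermediateField.adjoin ℚ {α, ζ} = ⊤) : Module.finrank ℚ⟮ζ⟯ K = 2 := by
  rw [(L0_pb hgen).finrank, ← (L0_pb hgen).natDegree_minpoly, L0_pb_gen, L0_minpoly hα hnm]
  exact natDegree_X_pow_add_C

lemma L0_finrankM (hp : p.Prime) (hζ : IsPrimitiveRoot ζ p) : Module.finrank ℚ ℚ⟮ζ⟯ = p - 1 := by
  have : NeZero p := ⟨hp.ne_zero⟩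
  have := L0_cyc hp hζ
  rw [IsCyclotomicExtension.finrank (n := p) ℚ⟮ζ⟯ (cyclotomic.irreducible_rat hp.pos), Nat.totient_prime hp]

lemma L0_finrank (hp : p.Prime) (hζ : IsPrimitiveRoot ζ p) (hα : α ^ 2 = -(l : K)) (hnm : α ∉ ℚ⟮ζ⟯)
    (hgen : IntermediateField.adjoin ℚ {α, ζ} = ⊤) : Module.finrank ℚ K = 2 * (p - 1) := by
  rw [← Module.finrank_mul_finrank ℚ ℚ⟮ζ⟯ K, L0_finrank2 hα hnm hgen, L0_finrankM hp hζ, mul_comm]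

lemma L0_decomp (hα : α ^ 2 = -(l : K)) (hgen : IntermediateField.adjoin ℚ {α, ζ} = ⊤) (x : K) :
    ∃ m ∈ ℚ⟮ζ⟯, ∃ m' ∈ ℚ⟮ζ⟯, x = m + m' * α := by
  have hx : x ∈ Algebra.adjoin ℚ⟮ζ⟯ {α} := by rw [L0_top hgen]; trivial
  induction hx using Algebra.adjoin_induction with
  | mem x hx => obtain rfl : x = α := hx; exact ⟨0, zero_mem _, 1, one_mem _, by ring⟩
  | algebraMap r => exact ⟨r, r.2, 0, zero_mem _, by simp [IntermediateField.algebraMap_apply]⟩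
  | add x y _ _ hx hy =>
    obtain ⟨a, ha, b, hb, rfl⟩ := hx
    obtain ⟨c, hc, d, hd, rfl⟩ := hy
    exact ⟨a + c, add_mem ha hc, b + d, add_mem hb hd, by ring⟩
  | mul x y _ _ hx hy =>
    obtain ⟨a, ha, b, hb, rfl⟩ := hx
    obtain ⟨c, hc, d, hd, rfl⟩ := hy
    exact ⟨a * c - l * (b * d), sub_mem (mul_mem ha hc) (mul_mem (_root_.natCast_mem _ _) (mul_mem hb hd)),
      a * d + b * c, add_mem (mul_mem ha hd) (mul_mem hb hc), by linear_combination b * d * hα⟩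

lemma L0_tau (hα : α ^ 2 = -(l : K)) (hnm : α ∉ ℚ⟮ζ⟯)
    (hgen : IntermediateField.adjoin ℚ {α, ζ} = ⊤) : ∃ τ : K →ₐ[ℚ⟮ζ⟯] K, τ α = -α := by
  have h0 : aeval (-α) (minpoly ℚ⟮ζ⟯ (L0_pb hgen).gen) = 0 := by
    rw [L0_pb_gen, L0_minpoly hα hnm]
    simp [hα]
  refine ⟨(L0_pb hgen).lift (-α) h0, ?_⟩
  have h1 := (L0_pb hgen).lift_gen (-α) h0
  generalize (L0_pb hgen).lift (-α) h0 = τ at h1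
  rwa [L0_pb_gen] at h1

lemma L1_M (hp : p.Prime) (hζ : IsPrimitiveRoot ζ p) (x : K) (hx : x ∈ ℚ⟮ζ⟯) (hi : IsIntegral ℤ x) :
    x ∈ Algebra.adjoin ℤ {ζ} := by
  have : NeZero p := ⟨hp.ne_zero⟩
  have : Fact p.Prime := ⟨hp⟩
  have hcyc := L0_cyc hp hζ
  let ζM : ℚ⟮ζ⟯ := AdjoinSimple.gen ℚ ζ
  have hζMc : (ζM : K) = ζ := AdjoinSimple.coe_gen ℚ ζ
  have hζM : IsPrimitiveRoot ζM p := by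
    rw [← hζMc] at hζ
    exact IsPrimitiveRoot.coe_submonoidClass_iff.1 hζ
  have hic := IsCyclotomicExtension.Rat.isIntegralClosure_adjoin_singleton_of_prime hζM
  have hxi : IsIntegral ℤ (⟨x, hx⟩ : ℚ⟮ζ⟯) := by
    rw [← isIntegral_algebraMap_iff (B := K) (algebraMap ℚ⟮ζ⟯ K).injective]
    exact hi
  obtain ⟨y, hy⟩ := hic.isIntegral_iff.1 hxi
  have h1 : (⟨x, hx⟩ : ℚ⟮ζ⟯) ∈ Algebra.adjoin ℤ {ζM} := by rw [← hy]; exact y.2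
  have h2 : (ℚ⟮ζ⟯.val.restrictScalars ℤ) ⟨x, hx⟩ ∈ (Algebra.adjoin ℤ {ζM}).map (ℚ⟮ζ⟯.val.restrictScalars ℤ) := ⟨_, h1, rfl⟩
  rw [AlgHom.map_adjoin, Set.image_singleton] at h2
  have e1 : (ℚ⟮ζ⟯.val.restrictScalars ℤ) ζM = ζ := hζMc
  rw [e1] at h2
  exact h2

end L0
end File_l0

section File_l1
open Polynomial IntermediateField NumberField
section L1
variable {K : Type} [Field K] [NumberField K] {p : ℕ} {α ζ : K} {l : ℕ}

lemma L1_frob (hζ : IsPrimitiveRoot ζ p) (hp : p.Prime) (r : ℕ) (hr : r.Prime)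
    (hrp : r ≠ p) (c : K) (hc : c ∈ Algebra.adjoin ℤ {ζ}) :
    ∃ y ∈ Algebra.adjoin ℤ {ζ}, c ^ (r ^ (p - 1)) = c + r * y := by
  have : Fact r.Prime := ⟨hr⟩
  have : Fact p.Prime := ⟨hp⟩
  induction hc using Algebra.adjoin_induction with
  | mem x hx =>
    obtain rfl : x = ζ := hx
    refine ⟨0, zero_mem _, ?_⟩
    have h1 : (r ^ (p - 1)) % p = 1 % p := by
      have : ((r ^ (p - 1) : ℕ) : ZMod p) = (1 : ℕ) := by
        push_cast
        apply ZMod.pow_card_sub_one_eq_one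
        rw [Ne, ZMod.natCast_eq_zero_iff]
        intro h
        exact hrp ((Nat.prime_dvd_prime_iff_eq hp hr).1 h).symm
      exact (ZMod.natCast_eq_natCast_iff _ _ _).1 this
    rw [Nat.mod_eq_of_lt hp.one_lt] at h1
    rw [← Nat.div_add_mod (r ^ (p - 1)) p, h1, pow_add, pow_mul, hζ.pow_eq_one]
    simp
  | algebraMap n =>
    have : (r : ℤ) ∣ n ^ (r ^ (p - 1)) - n := by
      rw [← ZMod.intCast_zmod_eq_zero_iff_dvd]
      push_cast
      rw [ZMod.pow_card_pow, sub_self]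
    obtain ⟨k, hk⟩ := this
    refine ⟨algebraMap ℤ K k, Subalgebra.algebraMap_mem _ _, ?_⟩
    have := congrArg (Int.cast : ℤ → K) hk
    push_cast at this
    simp only [eq_intCast]
    linear_combination this
  | add x y hx hy ihx ihy =>
    obtain ⟨a, ha, ha'⟩ := ihx
    obtain ⟨b, hb, hb'⟩ := ihy
    obtain ⟨w, hw⟩ := exists_add_pow_prime_pow_eq hr (⟨x, hx⟩ : Algebra.adjoin ℤ {ζ}) ⟨y, hy⟩ (p - 1)
    have hw2 := congrArg (Subtype.val) hw
    push_cast at hw2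
    refine ⟨a + b + x * y * w, add_mem (add_mem ha hb) (mul_mem (mul_mem hx hy) w.2), ?_⟩
    rw [hw2, ha', hb']
    ring
  | mul x y hx hy ihx ihy =>
    obtain ⟨a, ha, ha'⟩ := ihx
    obtain ⟨b, hb, hb'⟩ := ihy
    have hr' : (r : K) ∈ Algebra.adjoin ℤ {ζ} := natCast_mem _ _
    refine ⟨a * y + x * b + r * a * b, by
      exact add_mem (add_mem (mul_mem ha hy) (mul_mem hx hb)) (mul_mem (mul_mem hr' ha) hb), ?_⟩
    rw [mul_pow, ha', hb']
    ring

lemma L1_red (hζ : IsPrimitiveRoot ζ p) (hp : p.Prime) (r : ℕ) (hr : r.Prime)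
    (hrp : r ≠ p) (c : K) (hc : c ∈ Algebra.adjoin ℤ {ζ})
    (h : ∃ y ∈ Algebra.adjoin ℤ {ζ}, c ^ 2 = r * y) : ∃ y ∈ Algebra.adjoin ℤ {ζ}, c = r * y := by
  obtain ⟨y, hy, hcy⟩ := h
  obtain ⟨w, hw, hcw⟩ := L1_frob hζ hp r hr hrp c hc
  have h2 : 2 ≤ r ^ (p - 1) := by
    calc 2 ≤ r := hr.two_le
      _ = r ^ 1 := (pow_one r).symm
      _ ≤ r ^ (p - 1) := Nat.pow_le_pow_right hr.pos (by have := hp.two_le; omega)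
  obtain ⟨k, hk⟩ := Nat.exists_eq_add_of_le h2
  rw [hk, pow_add, hcy] at hcw
  exact ⟨y * c ^ k - w, sub_mem (mul_mem hy (pow_mem hc _)) hw, by linear_combination -hcw⟩

/-- squarefree version -/
lemma L1_redsf (hζ : IsPrimitiveRoot ζ p) (hp : p.Prime) (n : ℕ) :
    Squarefree n → ¬ p ∣ n → ∀ (c : K), c ∈ Algebra.adjoin ℤ {ζ} → 
    (∃ y ∈ Algebra.adjoin ℤ {ζ}, c ^ 2 = n * y) → ∃ y ∈ Algebra.adjoin ℤ {ζ}, c = n * y := by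
  induction n using Nat.recOnMul with
  | zero => intro h; exact absurd h not_squarefree_zero
  | one => intro _ _ c hc _; exact ⟨c, hc, by simp⟩
  | prime r hr =>
    intro _ hpr c hc h
    exact L1_red hζ hp r hr (by rintro rfl; exact hpr dvd_rfl) c hc h
  | mul a b iha ihb =>
    intro hsq hpn c hc ⟨y, hy, hcy⟩
    have ha0 : ∀ k : ℕ, (k : K) ∈ Algebra.adjoin ℤ {ζ} := fun k => natCast_mem _ _
    have hab : Nat.Coprime a b := Nat.coprime_of_squarefree_mul hsq
    push_cast at hcy
    obtain ⟨u, hu, hcu⟩ := iha (hsq.of_mul_left) (fun h => hpn (h.mul_right _)) c hc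
      ⟨b * y, mul_mem (ha0 _) hy, by rw [hcy]; ring⟩
    obtain ⟨v, hv, hcv⟩ := ihb (hsq.of_mul_right) (fun h => hpn (h.mul_left _)) c hc
      ⟨a * y, mul_mem (ha0 _) hy, by rw [hcy]; ring⟩
    obtain ⟨s, t, hst⟩ := (Nat.isCoprime_iff_coprime.2 hab)
    have hst' := congrArg (Int.cast : ℤ → K) hst
    push_cast at hst'
    refine ⟨s * v + t * u, add_mem (mul_mem (intCast_mem _ _) hv) (mul_mem (intCast_mem _ _) hu), ?_⟩
    push_cast
    linear_combination (-c) * hst' + s * a * hcv + t * b * hcu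

lemma L1_pre (hp : p.Prime) (hζ : IsPrimitiveRoot ζ p) (hl : 0 < l) (hsq : Squarefree l) (hpl : ¬ p ∣ l)
    (hα : α ^ 2 = -(l : K)) (hnm : α ∉ ℚ⟮ζ⟯)
    (hgen : IntermediateField.adjoin ℚ {α, ζ} = ⊤) (x : K) (hx : IsIntegral ℤ x) :
    ∃ A ∈ Algebra.adjoin ℤ {ζ}, ∃ B ∈ Algebra.adjoin ℤ {ζ}, ∃ D ∈ Algebra.adjoin ℤ {ζ},
      2 * x = A + B * α ∧ A ^ 2 + l * B ^ 2 = 4 * D := by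
  obtain ⟨m, hm, m', hm', rfl⟩ := L0_decomp hα hgen x
  obtain ⟨τ, hτ⟩ := L0_tau hα hnm hgen
  have hτM : ∀ y ∈ ℚ⟮ζ⟯, τ y = y := fun y hy => τ.commutes ⟨y, hy⟩
  have hτx : τ (m + m' * α) = m - m' * α := by
    rw [map_add, map_mul, hτM m hm, hτM m' hm', hτ]; ring
  have hx' : IsIntegral ℤ (m - m' * α) := by
    rw [← hτx]; exact hx.map (τ.restrictScalars ℤ)
  have hαi : IsIntegral ℤ α := by
    apply IsIntegral.of_pow (n := 2) (by norm_num)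
    rw [hα]; exact (IsIntegral.neg (isIntegral_algebraMap (R := ℤ) (x := (l : ℤ)))) |> fun h => by simpa using h
  have hlM : (l : K) ∈ ℚ⟮ζ⟯ := _root_.natCast_mem _ _
  have h1 : 2 * m ∈ Algebra.adjoin ℤ {ζ} := by
    apply L1_M hp hζ
    · rw [two_mul]; exact add_mem hm hm
    · have e : 2 * m = (m + m' * α) + (m - m' * α) := by ring
      rw [e]; exact hx.add hx'
  have h2 : 2 * l * m' ∈ Algebra.adjoin ℤ {ζ} := by
    apply L1_M hp hζ
    · rw [mul_assoc, two_mul]; exact add_mem (mul_mem hlM hm') (mul_mem hlM hm')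
    · have e : 2 * l * m' = ((m - m' * α) - (m + m' * α)) * α := by
        linear_combination 2 * m' * hα
      rw [e]; exact (hx'.sub hx).mul hαi
  have h3 : m ^ 2 + l * m' ^ 2 ∈ Algebra.adjoin ℤ {ζ} := by
    apply L1_M hp hζ
    · exact add_mem (pow_mem hm _) (mul_mem hlM (pow_mem hm' _))
    · have e : m ^ 2 + l * m' ^ 2 = (m + m' * α) * (m - m' * α) := by
        linear_combination (m' ^ 2) * hα
      rw [e]; exact hx.mul hx'
  have h4 : ∃ y ∈ Algebra.adjoin ℤ {ζ}, 2 * l * m' = l * y := by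
    apply L1_redsf hζ hp l hsq hpl _ h2
    refine ⟨4 * (m ^ 2 + l * m' ^ 2) - (2 * m) ^ 2, sub_mem (mul_mem ?_ h3) (pow_mem h1 _), by ring⟩
    exact_mod_cast natCast_mem (Algebra.adjoin ℤ {ζ}) 4
  obtain ⟨B, hB, hBm⟩ := h4
  have hl0 : (l : K) ≠ 0 := by exact_mod_cast hl.ne'
  have hBm' : B = 2 * m' := by
    apply mul_left_cancel₀ hl0
    rw [← hBm]; ring
  refine ⟨_, h1, B, hB, _, h3, ?_, ?_⟩
  · rw [hBm']; ring
  · rw [hBm']; ring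

lemma L1_odd (hp : p.Prime) (hp2 : p ≠ 2) (hζ : IsPrimitiveRoot ζ p) (hl : 0 < l) (hsq : Squarefree l) (hpl : ¬ p ∣ l)
    (hα : α ^ 2 = -(l : K)) (hnm : α ∉ ℚ⟮ζ⟯) (h4 : l % 4 = 3)
    (hgen : IntermediateField.adjoin ℚ {α, ζ} = ⊤) (x : K) (hx : IsIntegral ℤ x) :
    ∃ a ∈ Algebra.adjoin ℤ {ζ}, ∃ b ∈ Algebra.adjoin ℤ {ζ}, x = a + b * ((1 + α) / 2) := by
  obtain ⟨A, hA, B, hB, D, hD, h1, h2⟩ := L1_pre hp hζ hl hsq hpl hα hnm hgen x hx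
  obtain ⟨k, hk⟩ : ∃ k : ℕ, l = 4 * k + 3 := ⟨l / 4, by omega⟩
  have hn : ∀ k : ℕ, (k : K) ∈ Algebra.adjoin ℤ {ζ} := fun k => natCast_mem _ _
  have h2' : (2 : K) ∈ Algebra.adjoin ℤ {ζ} := by exact_mod_cast hn 2
  have hlk : (l : K) = 4 * k + 3 := by rw [hk]; push_cast; ring
  obtain ⟨y, hy, hy'⟩ := L1_red hζ hp 2 Nat.prime_two (Ne.symm hp2) (A - B) (sub_mem hA hB)
    ⟨2 * D - (2 * k + 1) * B ^ 2 - A * B, sub_mem (sub_mem (mul_mem h2' hD) (mul_mem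
      (add_mem (mul_mem h2' (hn k)) (one_mem _)) (pow_mem hB 2))) (mul_mem hA hB), by
      push_cast
      rw [hlk] at h2
      linear_combination h2⟩
  push_cast at hy'
  refine ⟨y, hy, B, hB, ?_⟩
  apply mul_left_cancel₀ (two_ne_zero (α := K))
  linear_combination h1 + hy'

lemma L1_even (hp : p.Prime) (hp2 : p ≠ 2) (hζ : IsPrimitiveRoot ζ p) (hl : 0 < l) (hsq : Squarefree l) (hpl : ¬ p ∣ l)
    (hα : α ^ 2 = -(l : K)) (hnm : α ∉ ℚ⟮ζ⟯) (h4 : l % 4 = 1 ∨ l % 4 = 2)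
    (hgen : IntermediateField.adjoin ℚ {α, ζ} = ⊤) (x : K) (hx : IsIntegral ℤ x) :
    ∃ a ∈ Algebra.adjoin ℤ {ζ}, ∃ b ∈ Algebra.adjoin ℤ {ζ}, x = a + b * α := by
  obtain ⟨A, hA, B, hB, D, hD, h1, h2⟩ := L1_pre hp hζ hl hsq hpl hα hnm hgen x hx
  have hn : ∀ k : ℕ, (k : K) ∈ Algebra.adjoin ℤ {ζ} := fun k => natCast_mem _ _
  have h2' : (2 : K) ∈ Algebra.adjoin ℤ {ζ} := by exact_mod_cast hn 2
  have two0 := (two_ne_zero (α := K))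
  have red2 : ∀ c ∈ Algebra.adjoin ℤ {ζ}, ∀ y ∈ Algebra.adjoin ℤ {ζ}, c ^ 2 = 2 * y → 
      ∃ y ∈ Algebra.adjoin ℤ {ζ}, c = 2 * y := by
    intro c hc y hy h
    have := L1_red hζ hp 2 Nat.prime_two (Ne.symm hp2) c hc ⟨y, hy, by push_cast; exact h⟩
    push_cast at this
    exact this
  have key : (∃ a ∈ Algebra.adjoin ℤ {ζ}, A = 2 * a) ∧ ∃ b ∈ Algebra.adjoin ℤ {ζ}, B = 2 * b := by
    rcases h4 with h4 | h4
    · obtain ⟨k, hk⟩ : ∃ k : ℕ, l = 4 * k + 1 := ⟨l / 4, by omega⟩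
      have hlk : (l : K) = 4 * k + 1 := by rw [hk]; push_cast; ring
      rw [hlk] at h2
      obtain ⟨e, he, hAe⟩ := red2 (A + B) (add_mem hA hB) (2 * D - 2 * k * B ^ 2 + A * B)
        (add_mem (sub_mem (mul_mem h2' hD) (mul_mem (mul_mem h2' (hn k)) (pow_mem hB 2))) (mul_mem hA hB))
        (by linear_combination h2)
      obtain ⟨b, hb, hBb⟩ := red2 B hB (D - k * B ^ 2 - (e ^ 2 - e * B))
        (sub_mem (sub_mem hD (mul_mem (hn k) (pow_mem hB 2))) (sub_mem (pow_mem he 2) (mul_mem he hB)))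
        (by
          have hA' : A = 2 * e - B := by linear_combination hAe
          rw [hA'] at h2
          apply mul_left_cancel₀ two0
          linear_combination h2)
      exact ⟨⟨e - b, sub_mem he hb, by linear_combination hAe - hBb⟩, b, hb, hBb⟩
    · obtain ⟨k, hk⟩ : ∃ k : ℕ, l = 4 * k + 2 := ⟨l / 4, by omega⟩
      have hlk : (l : K) = 4 * k + 2 := by rw [hk]; push_cast; ring
      rw [hlk] at h2
      obtain ⟨a, ha, hAa⟩ := red2 A hA (2 * D - (2 * k + 1) * B ^ 2)
        (sub_mem (mul_mem h2' hD) (mul_mem (add_mem (mul_mem h2' (hn k)) (one_mem _)) (pow_mem hB 2)))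
        (by linear_combination h2)
      obtain ⟨b, hb, hBb⟩ := red2 B hB (D - k * B ^ 2 - a ^ 2)
        (sub_mem (sub_mem hD (mul_mem (hn k) (pow_mem hB 2))) (pow_mem ha 2))
        (by
          rw [hAa] at h2
          apply mul_left_cancel₀ two0
          linear_combination h2)
      exact ⟨⟨a, ha, hAa⟩, b, hb, hBb⟩
  obtain ⟨⟨a, ha, hAa⟩, b, hb, hBb⟩ := key
  refine ⟨a, ha, b, hb, ?_⟩
  apply mul_left_cancel₀ two0
  rw [h1, hAa, hBb]; ring
end L1
end File_l1

section File_a1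
open IntermediateField NumberField

section stepA
variable {q : ℕ} {C : Type} [Field C]

/-- product over residues -/
noncomputable def FF (ψ : AddChar (ZMod q) C) (y : C) (S : Finset (ZMod q)) : C :=
  ∏ b ∈ S, (y * ψ b - (y * ψ b)⁻¹)

lemma FF_univ [Fact q.Prime] (hq2 : q ≠ 2) {ξ : C} (hξ : IsPrimitiveRoot ξ q) (y : C) (hy : y ≠ 0) :
    FF (AddChar.zmodChar q hξ.pow_eq_one) y Finset.univ = y ^ q - (y ^ q)⁻¹ := by
  classical
  have hq := Fact.out (p := q.Prime)
  set ψ := AddChar.zmodChar q hξ.pow_eq_one with hψ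
  have hne : ∀ b, ψ b ≠ 0 := fun b => (ψ.val_isUnit b).ne_zero
  have h20 : (2 : ZMod q) ≠ 0 := by
    intro h
    have : ((2 : ℕ) : ZMod q) = 0 := by exact_mod_cast h
    rw [ZMod.natCast_eq_zero_iff] at this
    exact hq2 ((Nat.prime_dvd_prime_iff_eq hq Nat.prime_two).1 this)
  have hsum : ∑ b : ZMod q, b = 0 := by
    have h1 : ∑ b : ZMod q, b = ∑ b : ZMod q, -b := (Equiv.sum_comp (Equiv.neg (ZMod q)) (fun b => b)).symm
    rw [Finset.sum_neg_distrib] at h1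
    have : (2 : ZMod q) * ∑ b : ZMod q, b = 0 := by linear_combination h1
    exact (mul_eq_zero.1 this).resolve_left h20
  have hprod : ∏ b : ZMod q, ψ b = 1 := by
    have hgen : ∀ S : Finset (ZMod q), ∏ b ∈ S, ψ b = ψ (∑ b ∈ S, b) := by
      intro S
      induction S using Finset.induction_on with
      | empty => simp
      | insert a S ha ih => rw [Finset.prod_insert ha, Finset.sum_insert ha, AddChar.map_add_eq_mul, ih]
    rw [hgen, hsum, AddChar.map_zero_eq_one]
  have hinj : Function.Injective ψ := by
    intro a b hab
    rw [hψ, AddChar.zmodChar_apply, AddChar.zmodChar_apply] at hab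
    exact ZMod.val_injective q (hξ.pow_inj (ZMod.val_lt a) (ZMod.val_lt b) hab)
  have himg : Finset.univ.image ψ = Polynomial.nthRootsFinset q (1 : C) := by
    apply Finset.eq_of_subset_of_card_le
    · intro x hx
      obtain ⟨b, -, rfl⟩ := Finset.mem_image.1 hx
      rw [Polynomial.mem_nthRootsFinset hq.pos, hψ, AddChar.zmodChar_apply, ← pow_mul, mul_comm, pow_mul,
        hξ.pow_eq_one, one_pow]
    · rw [hξ.card_nthRootsFinset, Finset.card_image_of_injective _ hinj, Finset.card_univ, ZMod.card]
  have h1 : FF ψ y Finset.univ = ∏ b : ZMod q, (ψ b * (y - ψ (-2 * b) * y⁻¹)) := by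
    apply Finset.prod_congr rfl
    intro b _
    have : ψ (-2 * b) = (ψ b)⁻¹ * (ψ b)⁻¹ := by
      rw [← AddChar.map_neg_eq_inv, ← AddChar.map_add_eq_mul]; congr 1; ring
    rw [this]
    have := hne b
    field_simp
  rw [h1, Finset.prod_mul_distrib, hprod, one_mul]
  have h2 : ∏ b : ZMod q, (y - ψ (-2 * b) * y⁻¹) = ∏ b : ZMod q, (y - ψ b * y⁻¹) :=
    Equiv.prod_comp (Equiv.mulLeft₀ (-2 : ZMod q) (neg_ne_zero.2 h20)) (fun b => y - ψ b * y⁻¹)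
  rw [h2, ← inv_pow, hξ.pow_sub_pow_eq_prod_sub_mul _ _ (hq.odd_of_ne_two hq2).pos, ← himg, Finset.prod_image (fun a _ b _ h => hinj h)]

/-- residues -/
noncomputable def SQ (q : ℕ) [Fact q.Prime] (c : ℤ) : Finset (ZMod q) :=
  Finset.univ.filter (fun b => quadraticChar (ZMod q) b = c)

lemma FF_split [Fact q.Prime] (hq2 : q ≠ 2) {ξ : C} (hξ : IsPrimitiveRoot ξ q) (y : C) (hy : y ≠ 0) :
    FF (AddChar.zmodChar q hξ.pow_eq_one) y (SQ q 1) * FF (AddChar.zmodChar q hξ.pow_eq_one) y (SQ q (-1)) * (y - y⁻¹) =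
      y ^ q - (y ^ q)⁻¹ := by
  classical
  rw [← FF_univ hq2 hξ y hy]
  have hu : (Finset.univ : Finset (ZMod q)) = (SQ q 1 ∪ SQ q (-1)) ∪ {0} := by
    ext b
    simp only [SQ, Finset.mem_union, Finset.mem_filter, Finset.mem_univ, true_and, Finset.mem_singleton, true_iff]
    by_cases hb : b = 0
    · right; exact hb
    · left; exact quadraticChar_dichotomy hb
  have d1 : Disjoint (SQ q 1) (SQ q (-1)) := by
    rw [Finset.disjoint_left]
    intro b h1 h2
    simp only [SQ, Finset.mem_filter, Finset.mem_univ, true_and] at h1 h2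
    rw [h1] at h2; norm_num at h2
  have d2 : Disjoint (SQ q 1 ∪ SQ q (-1)) {0} := by
    rw [Finset.disjoint_singleton_right]
    simp [SQ]
  simp only [FF]
  rw [hu, Finset.prod_union d2, Finset.prod_union d1, Finset.prod_singleton]
  simp

lemma FF_mul [Fact q.Prime] (ψ : AddChar (ZMod q) C) (y : C) (b c : ℤ) (a : ZMod q) (ha : a ≠ 0)
    (hac : quadraticChar (ZMod q) a * b = c) (hbc : b = quadraticChar (ZMod q) a * c) :
    ∏ x ∈ SQ q b, (y * ψ (a * x) - (y * ψ (a * x))⁻¹) = FF ψ y (SQ q c) := by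
  classical
  apply Finset.prod_bij (fun x _ => a * x)
  · intro x hx
    simp only [SQ, Finset.mem_filter, Finset.mem_univ, true_and] at hx ⊢
    rw [map_mul, hx, hac]
  · intro x _ x' _ h
    exact mul_left_cancel₀ ha h
  · intro z hz
    simp only [SQ, Finset.mem_filter, Finset.mem_univ, true_and] at hz
    refine ⟨a⁻¹ * z, ?_, by field_simp⟩
    simp only [SQ, Finset.mem_filter, Finset.mem_univ, true_and]
    have e : z = a * (a⁻¹ * z) := by field_simp
    rw [e, map_mul] at hz
    have h2 := quadraticChar_sq_one ha
    rw [hbc, ← hz, ← mul_assoc, ← sq, h2, one_mul]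
  · intro x hx; rfl

lemma FF_inv (ψ : AddChar (ZMod q) C) (y : C) (S : Finset (ZMod q)) :
    ∏ x ∈ S, (y⁻¹ * ψ (-x) - (y⁻¹ * ψ (-x))⁻¹) = (-1) ^ S.card * FF ψ y S := by
  rw [← Finset.prod_const, FF, ← Finset.prod_mul_distrib]
  apply Finset.prod_congr rfl
  intro x _
  rw [AddChar.map_neg_eq_inv, ← mul_inv, inv_inv]; ring

end stepA
end File_a1

section File_a2
open IntermediateField NumberField

section stepA2
variable {p q : ℕ} {C : Type} [Field C]

lemma A2_crt [CharZero C] (hp : p.Prime) (hq : q.Prime) (hpq : q ≠ p) [NeZero (p * q)] [IsCyclotomicExtension {p * q} ℚ C]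
    {z : C} (hz : IsPrimitiveRoot z (p * q)) (a b : ℕ) (ha : a.Coprime p) (hb : b.Coprime q) :
    ∃ σ : C ≃ₐ[ℚ] C, σ (z ^ q) = (z ^ q) ^ a ∧ σ (z ^ p) = (z ^ p) ^ b := by
  have hco : p.Coprime q := (Nat.coprime_primes hp hq).2 (Ne.symm hpq)
  obtain ⟨c, hc1, hc2⟩ := Nat.chineseRemainder hco a b
  have h1 : c.Coprime p := by
    rw [Nat.Coprime, hc1.gcd_eq]; exact ha
  have h2 : c.Coprime q := by
    rw [Nat.Coprime, hc2.gcd_eq]; exact hb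
  obtain ⟨σ, hσ⟩ := cyc_aut (p * q) C hz c (Nat.Coprime.mul_right h1 h2)
  refine ⟨σ, ?_, ?_⟩
  · rw [map_pow, hσ, ← pow_mul, ← pow_mul]
    refine pow_eq_pow_of_modEq ?_ hz.pow_eq_one
    rw [mul_comm c q, mul_comm p q]
    exact Nat.ModEq.mul_left' q hc1
  · rw [map_pow, hσ, ← pow_mul, ← pow_mul]
    refine pow_eq_pow_of_modEq ?_ hz.pow_eq_one
    rw [mul_comm c p]
    exact Nat.ModEq.mul_left' p hc2

lemma A2_psi [CharZero C] [Fact q.Prime] {ξ : C} (hξ : IsPrimitiveRoot ξ q) (σ : C ≃ₐ[ℚ] C) (b : ℕ) (hσ : σ ξ = ξ ^ b)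
    (x : ZMod q) : σ (AddChar.zmodChar q hξ.pow_eq_one x) = AddChar.zmodChar q hξ.pow_eq_one ((b : ZMod q) * x) := by
  rw [← nsmul_eq_mul, AddChar.map_nsmul_eq_pow, AddChar.zmodChar_apply, map_pow, hσ, ← pow_mul, ← pow_mul, mul_comm]

lemma A2_FF [CharZero C] [Fact q.Prime] {ξ : C} (hξ : IsPrimitiveRoot ξ q) (σ : C ≃ₐ[ℚ] C) (b : ℕ) (hσ : σ ξ = ξ ^ b)
    (y : C) (S : Finset (ZMod q)) : σ (FF (AddChar.zmodChar q hξ.pow_eq_one) y S) =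
      ∏ x ∈ S, (σ y * AddChar.zmodChar q hξ.pow_eq_one ((b : ZMod q) * x) -
        (σ y * AddChar.zmodChar q hξ.pow_eq_one ((b : ZMod q) * x))⁻¹) := by
  rw [FF, map_prod]
  apply Finset.prod_congr rfl
  intro x _
  rw [map_sub, map_inv₀, map_mul, A2_psi hξ σ b hσ]

/-- gauss sum -/
noncomputable def GG [Fact q.Prime] (ψ : AddChar (ZMod q) C) : C :=
  gaussSum ((quadraticChar (ZMod q)).ringHomComp (Int.castRingHom C)) ψ

lemma A2_g_sq [CharZero C] [Fact q.Prime] (hq3 : q % 4 = 3) {ξ : C} (hξ : IsPrimitiveRoot ξ q) :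
    (GG (AddChar.zmodChar q hξ.pow_eq_one)) ^ 2 = -(q : C) := by
  have hq := Fact.out (p := q.Prime)
  have hr : ringChar (ZMod q) ≠ 2 := by rw [ZMod.ringChar_zmod_n]; omega
  rw [GG, gaussSum_sq]
  · have h1 : quadraticChar (ZMod q) (-1) = -1 := by
      rw [quadraticChar_neg_one hr, ZMod.card, ZMod.χ₄_nat_three_mod_four hq3]
    rw [MulChar.ringHomComp_apply, h1, ZMod.card]
    simp
  · rw [MulChar.ringHomComp_ne_one_iff (RingHom.injective_int _)]
    exact quadraticChar_ne_one hr
  · exact (quadraticChar_isQuadratic (ZMod q)).comp _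
  · exact AddChar.zmodChar_primitive_of_primitive_root q hξ

lemma A2_g [CharZero C] [Fact q.Prime] {ξ : C} (hξ : IsPrimitiveRoot ξ q) (σ : C ≃ₐ[ℚ] C) (b : ℕ) (hσ : σ ξ = ξ ^ b)
    (hb : (b : ZMod q) ≠ 0) :
    σ (GG (AddChar.zmodChar q hξ.pow_eq_one)) = (quadraticChar (ZMod q) b : C) * GG (AddChar.zmodChar q hξ.pow_eq_one) := by
  have h := gaussSum_mulShift ((quadraticChar (ZMod q)).ringHomComp (Int.castRingHom C)) (AddChar.zmodChar q hξ.pow_eq_one) (Units.mk0 _ hb)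
  rw [MulChar.ringHomComp_apply, Units.val_mk0] at h
  have h2 : σ (GG (AddChar.zmodChar q hξ.pow_eq_one)) = gaussSum ((quadraticChar (ZMod q)).ringHomComp (Int.castRingHom C)) ((AddChar.zmodChar q hξ.pow_eq_one).mulShift b) := by
    rw [GG, gaussSum, gaussSum, map_sum]
    apply Finset.sum_congr rfl
    intro x _
    rw [map_mul, A2_psi hξ σ b hσ, MulChar.ringHomComp_apply, AddChar.mulShift_apply]
    simp
  have h3 : (quadraticChar (ZMod q) b : C) * (quadraticChar (ZMod q) b : C) = 1 := by
    have := quadraticChar_sq_one hb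
    rw [← Int.cast_mul, ← sq, this, Int.cast_one]
  rw [h2, GG, ← h, ← mul_assoc]
  simp only [eq_intCast]
  rw [h3, one_mul]

/-- the special unit -/
noncomputable def UU [Fact q.Prime] (ψ : AddChar (ZMod q) C) (ζ : C) (n : ℕ) : C :=
  ∏ i ∈ Finset.range n, FF ψ (ζ ^ (q ^ i)) (SQ q 1)

lemma A2_U [CharZero C] [Fact q.Prime] {ξ : C} (hξ : IsPrimitiveRoot ξ q) (ζ : C) (n : ℕ) (σ : C ≃ₐ[ℚ] C) (b : ℕ) (hσ : σ ξ = ξ ^ b)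
    (hb : (b : ZMod q) ≠ 0) (hσζ : σ ζ = ζ) :
    σ (UU (AddChar.zmodChar q hξ.pow_eq_one) ζ n) = 
      ∏ i ∈ Finset.range n, FF (AddChar.zmodChar q hξ.pow_eq_one) (ζ ^ (q ^ i)) (SQ q (quadraticChar (ZMod q) b)) := by
  rw [UU, map_prod]
  apply Finset.prod_congr rfl
  intro i _
  rw [A2_FF hξ σ b hσ, map_pow, hσζ]
  apply FF_mul _ _ _ _ _ hb (mul_one _)
  rw [← sq, quadraticChar_sq_one hb]

lemma A2_Uconj [CharZero C] [Fact q.Prime] {ξ : C} (hξ : IsPrimitiveRoot ξ q) (ζ : C) (n : ℕ) (hn : Even n) (σ : C ≃ₐ[ℚ] C) (b : ℕ) (hσ : σ ξ = ξ ^ b)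
    (hb : (b : ZMod q) = -1) (hσζ : σ ζ = ζ⁻¹) :
    σ (UU (AddChar.zmodChar q hξ.pow_eq_one) ζ n) = UU (AddChar.zmodChar q hξ.pow_eq_one) ζ n := by
  have h : σ (UU (AddChar.zmodChar q hξ.pow_eq_one) ζ n) = 
      ∏ i ∈ Finset.range n, ((-1) ^ (SQ q 1).card * FF (AddChar.zmodChar q hξ.pow_eq_one) (ζ ^ (q ^ i)) (SQ q 1)) := by
    rw [UU, map_prod]
    apply Finset.prod_congr rfl
    intro i _
    rw [A2_FF hξ σ b hσ, map_pow, hσζ, hb, ← FF_inv]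
    simp only [neg_one_mul, inv_pow]
  rw [h, Finset.prod_mul_distrib, Finset.prod_const, Finset.card_range, ← pow_mul, mul_comm _ n, pow_mul,
    hn.neg_one_pow, one_pow, one_mul, UU]

lemma A2_tel [CharZero C] [Fact q.Prime] (hq2 : q ≠ 2) {ξ : C} (hξ : IsPrimitiveRoot ξ q) (ζ : C) (hζ : ζ ≠ 0) (n : ℕ) :
    (∏ i ∈ Finset.range n, FF (AddChar.zmodChar q hξ.pow_eq_one) (ζ ^ (q ^ i)) (SQ q 1)) *
    (∏ i ∈ Finset.range n, FF (AddChar.zmodChar q hξ.pow_eq_one) (ζ ^ (q ^ i)) (SQ q (-1))) * (ζ - ζ⁻¹) = 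
      ζ ^ (q ^ n) - (ζ ^ (q ^ n))⁻¹ := by
  induction n with
  | zero => simp
  | succ n ih =>
    have h := FF_split hq2 hξ (ζ ^ (q ^ n)) (pow_ne_zero _ hζ)
    rw [← pow_mul, ← pow_succ] at h
    rw [Finset.prod_range_succ, Finset.prod_range_succ, ← h, ← ih]
    ring

lemma A2_int [CharZero C] [Fact q.Prime] {ξ : C} (hξ : IsPrimitiveRoot ξ q) (hp : p.Prime) (ζ : C) (hζ : IsPrimitiveRoot ζ p) (n : ℕ) :
    IsIntegral ℤ (UU (AddChar.zmodChar q hξ.pow_eq_one) ζ n) := by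
  have hq := Fact.out (p := q.Prime)
  apply IsIntegral.prod
  intro i _
  apply IsIntegral.prod
  intro x _
  have h1 : IsIntegral ℤ ζ := hζ.isIntegral hp.pos
  have h2 : IsIntegral ℤ ζ⁻¹ := hζ.inv.isIntegral hp.pos
  have h3 : IsIntegral ℤ ξ := hξ.isIntegral hq.pos
  have h4 : IsIntegral ℤ ξ⁻¹ := hξ.inv.isIntegral hq.pos
  rw [AddChar.zmodChar_apply, mul_inv, ← inv_pow, ← inv_pow]
  exact ((h1.pow _).mul (h3.pow _)).sub ((h2.pow _).mul (h4.pow _))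

end stepA2
end File_a2

section File_a3
open IntermediateField NumberField

section stepA3

theorem stepA' (p q : ℕ) (C : Type) [Field C] [NumberField C] [NeZero (p * q)] [IsCyclotomicExtension {p * q} ℚ C] (hp : p.Prime) (hp1 : p % 4 = 1) (hq : q.Prime) (hq3 : q % 4 = 3) (hpq : q ≠ p)
    (hqn : (q : ZMod p) ^ ((p - 1) / 2) = -1) :
    ∃ (K : Type) (_ : Field K) (_ : NumberField K) (j ζ u : K) (conj τ : K ≃ₐ[ℚ] K),
      IsPrimitiveRoot ζ p ∧ j ^ 2 = -(q : K) ∧ IntermediateField.adjoin ℚ {j, ζ} = ⊤ ∧ conj j = -j ∧ conj ζ = ζ⁻¹ ∧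
      τ j = -j ∧ τ ζ = ζ ∧ (∀ a : ℕ, a.Coprime p → ∃ σ : K ≃ₐ[ℚ] K, σ ζ = ζ ^ a ∧ σ j = j) ∧
      IsIntegral ℤ u ∧ u * τ u = -1 ∧ conj u = u := by
  have : Fact q.Prime := ⟨hq⟩
  have : Fact p.Prime := ⟨hp⟩
  let z : C := IsCyclotomicExtension.zeta (p * q) ℚ C
  have hz : IsPrimitiveRoot z (p * q) := IsCyclotomicExtension.zeta_spec (p * q) ℚ C
  have hζ : IsPrimitiveRoot (z ^ q) p := hz.pow (NeZero.pos _) (mul_comm p q)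
  have hξ : IsPrimitiveRoot (z ^ p) q := hz.pow (NeZero.pos _) rfl
  have hcrt := A2_crt (C := C) hp hq hpq hz
  generalize z ^ q = ζ at *
  generalize z ^ p = ξ at *
  have hab : IsAbelianGalois ℚ C := IsCyclotomicExtension.isAbelianGalois {p * q} ℚ C
  set g : C := GG (AddChar.zmodChar q hξ.pow_eq_one) with hg
  set u : C := UU (AddChar.zmodChar q hξ.pow_eq_one) ζ ((p - 1) / 2) with hu
  let K := IntermediateField.adjoin ℚ {g, ζ}
  have hgK : g ∈ K := subset_adjoin _ _ (by simp)
  have hζK : ζ ∈ K := subset_adjoin _ _ (by simp)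
  have hg2 : g ^ 2 = -(q : C) := A2_g_sq hq3 hξ
  have hg0 : g ≠ 0 := by
    intro h
    rw [h] at hg2
    have : (q : C) = 0 := by linear_combination hg2
    exact hq.ne_zero (by exact_mod_cast this)
  have huK : u ∈ K := by
    have h1 : u ∈ IntermediateField.fixedField K.fixingSubgroup := by
      rintro ⟨σ, hσ⟩
      rw [IntermediateField.mem_fixingSubgroup_iff] at hσ
      have h2 : σ ζ = ζ := hσ _ hζK
      have h3 : σ g = g := hσ _ hgK
      have h4 : (σ ξ) ^ q = 1 := by rw [← map_pow, hξ.pow_eq_one, map_one]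
      obtain ⟨b, -, hb⟩ := hξ.eq_pow_of_pow_eq_one h4
      have hb0 : (b : ZMod q) ≠ 0 := by
        intro h
        rw [ZMod.natCast_eq_zero_iff] at h
        rw [(hξ.pow_eq_one_iff_dvd b).2 h] at hb
        have : ξ = 1 := σ.injective (by rw [map_one, ← hb])
        rw [this] at hξ
        exact hq.one_lt.ne' (hξ.unique IsPrimitiveRoot.one)
      have h5 := A2_g hξ σ b hb.symm hb0
      rw [← hg, h3] at h5
      have h6 : (quadraticChar (ZMod q) b) = 1 := by
        have : (quadraticChar (ZMod q) b : C) = 1 := mul_right_cancel₀ hg0 (by rw [← h5, one_mul])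
        exact_mod_cast this
      have h7 := A2_U hξ ζ ((p - 1) / 2) σ b hb.symm hb0 h2
      rw [h6] at h7
      exact h7
    rwa [IsGalois.fixedField_fixingSubgroup] at h1
  have hrn0 : ∀ (σ : C ≃ₐ[ℚ] C), ∃ σ' : K ≃ₐ[ℚ] K, ∀ (x : K), ((σ' x : K) : C) = σ (x : C) := by
    intro σ
    letI alg : Algebra ℚ K := K.algebra'
    have hN : @Normal ℚ K _ _ K.algebra' := inferInstance
    have h := AlgEquiv.restrictNormal_commutes σ K
    generalize σ.restrictNormal K = s at h
    exact ⟨AlgEquiv.ofRingEquiv (f := (s : K ≃+* K)) (fun x => map_ratCast (s : K ≃+* K) x), h⟩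
  choose rn hrn using hrn0
  have hcast1 : ((q - 1 : ℕ) : ZMod q) = -1 := by
    rw [Nat.cast_sub hq.one_le]; simp
  have hm1 : quadraticChar (ZMod q) ((q - 1 : ℕ) : ZMod q) = -1 := by
    have hr : ringChar (ZMod q) ≠ 2 := by rw [ZMod.ringChar_zmod_n]; omega
    rw [hcast1, quadraticChar_neg_one hr, ZMod.card, ZMod.χ₄_nat_three_mod_four hq3]
  have hcq0 : ((q - 1 : ℕ) : ZMod q) ≠ 0 := by rw [hcast1]; exact neg_ne_zero.2 one_ne_zero
  have hcq : (q - 1).Coprime q := (Nat.coprime_self_sub_left hq.one_le).2 (Nat.coprime_one_left _)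
  have hcp : (p - 1).Coprime p := (Nat.coprime_self_sub_left hp.one_le).2 (Nat.coprime_one_left _)
  have hζ0 : ζ ≠ 0 := hζ.ne_zero hp.ne_zero
  have hinv : ζ ^ (p - 1) = ζ⁻¹ := by
    apply eq_inv_of_mul_eq_one_left
    rw [← pow_succ, Nat.sub_add_cancel hp.one_le, hζ.pow_eq_one]
  obtain ⟨c, hc1, hc2⟩ := hcrt (p - 1) (q - 1) hcp hcq
  obtain ⟨t, ht1, ht2⟩ := hcrt 1 (q - 1) (Nat.coprime_one_left p) hcq
  rw [hinv] at hc1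
  rw [pow_one] at ht1
  have hcu : c u = u := A2_Uconj hξ ζ _ (by rw [Nat.even_iff]; omega) c (q - 1) hc2 hcast1 hc1
  have hcg : c g = -g := by
    have := A2_g hξ c (q - 1) hc2 hcq0
    rw [hm1] at this
    rw [hg, this]; push_cast; ring
  have htg : t g = -g := by
    have := A2_g hξ t (q - 1) ht2 hcq0
    rw [hm1] at this
    rw [hg, this]; push_cast; ring
  have htu : u * t u = -1 := by
    have h1 := A2_U hξ ζ ((p - 1) / 2) t (q - 1) ht2 hcq0 ht1
    rw [hm1] at h1
    have h2 := A2_tel (by omega : q ≠ 2) hξ ζ hζ0 ((p - 1) / 2)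
    rw [← h1] at h2
    have h3 : ζ ^ (q ^ ((p - 1) / 2)) = ζ⁻¹ := by
      apply eq_inv_of_mul_eq_one_left
      rw [← pow_succ, hζ.pow_eq_one_iff_dvd, ← ZMod.natCast_eq_zero_iff]
      push_cast
      rw [hqn]; ring
    rw [h3, inv_inv] at h2
    have h4 : ζ - ζ⁻¹ ≠ 0 := by
      intro h
      have h5 : ζ ^ 2 = 1 := by
        have : ζ = ζ⁻¹ := sub_eq_zero.1 h
        nth_rewrite 1 [sq, this]
        exact inv_mul_cancel₀ hζ0
      rw [hζ.pow_eq_one_iff_dvd] at h5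
      have := Nat.le_of_dvd (by norm_num) h5
      have := hp.two_le
      omega
    apply mul_right_cancel₀ h4
    rw [hu]
    refine Eq.trans h2 (by ring)
  refine ⟨K, inferInstance, inferInstance, ⟨g, hgK⟩, ⟨ζ, hζK⟩, ⟨u, huK⟩, rn c, rn t,
    ?_, ?_, ?_, ?_, ?_, ?_, ?_, ?_, ?_, ?_, ?_⟩
  · rw [← IsPrimitiveRoot.coe_submonoidClass_iff]
    exact hζ
  · apply Subtype.ext
    push_cast
    exact hg2
  · rw [eq_top_iff]
    rintro ⟨x, hx⟩ -
    induction hx using IntermediateField.adjoin_induction with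
    | mem x hx =>
      rcases hx with rfl | rfl
      · exact subset_adjoin _ _ (by simp)
      · exact subset_adjoin _ _ (by simp)
    | algebraMap x => exact IntermediateField.algebraMap_mem _ x
    | add x y hx hy h1 h2 => exact add_mem h1 h2
    | inv x hx h1 => exact inv_mem h1
    | mul x y hx hy h1 h2 => exact mul_mem h1 h2
  · apply Subtype.ext; rw [hrn]; push_cast; exact hcg
  · apply Subtype.ext; rw [hrn]; push_cast; exact hc1
  · apply Subtype.ext; rw [hrn]; push_cast; exact htg
  · apply Subtype.ext; rw [hrn]; exact ht1
  · intro a ha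
    obtain ⟨σ, hσ1, hσ2⟩ := hcrt a 1 ha (Nat.coprime_one_left q)
    refine ⟨rn σ, ?_, ?_⟩
    · apply Subtype.ext; rw [hrn]; push_cast; exact hσ1
    · apply Subtype.ext; rw [hrn]
      have h := A2_g hξ σ 1 hσ2 (by simp)
      simpa using h
  · rw [← isIntegral_algebraMap_iff (B := C) (algebraMap K C).injective]
    exact A2_int hξ hp ζ hζ _
  · apply Subtype.ext
    push_cast
    rw [hrn]
    exact htu
  · apply Subtype.ext; rw [hrn]; exact hcu

theorem stepA (p q : ℕ) (hp : p.Prime) (hp1 : p % 4 = 1) (hq : q.Prime) (hq3 : q % 4 = 3) (hpq : q ≠ p)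
    (hqn : (q : ZMod p) ^ ((p - 1) / 2) = -1) :
    ∃ (K : Type) (_ : Field K) (_ : NumberField K) (j ζ u : K) (conj τ : K ≃ₐ[ℚ] K),
      IsPrimitiveRoot ζ p ∧ j ^ 2 = -(q : K) ∧ IntermediateField.adjoin ℚ {j, ζ} = ⊤ ∧ conj j = -j ∧ conj ζ = ζ⁻¹ ∧
      τ j = -j ∧ τ ζ = ζ ∧ (∀ a : ℕ, a.Coprime p → ∃ σ : K ≃ₐ[ℚ] K, σ ζ = ζ ^ a ∧ σ j = j) ∧
      IsIntegral ℤ u ∧ u * τ u = -1 ∧ conj u = u := by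
  have : NeZero (p * q) := ⟨mul_ne_zero hp.ne_zero hq.ne_zero⟩
  have h1 : IsCyclotomicExtension {p * q} ℚ (CyclotomicField (p * q) ℚ) := by
    convert CyclotomicField.isCyclotomicExtension (p * q) ℚ
    · rfl
    exact Subsingleton.elim (α := Algebra ℚ (CyclotomicField (p * q) ℚ)) _ _
  exact stepA' p q (CyclotomicField (p * q) ℚ) hp hp1 hq hq3 hpq hqn

end stepA3
end File_a3

section File_b1
open IntermediateField NumberField

section stepB1
open Polynomial
open scoped Pointwise

lemma B1_unit {R : Type} [Field R] {p : ℕ} (hp2 : p % 2 = 1) (hp : p.Prime) {ζ : R} (hζ : IsPrimitiveRoot ζ p) :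
    ∃ v ∈ Algebra.adjoin ℤ {ζ}, (1 + ζ) * v = 1 := by
  have hz : ζ ∈ Algebra.adjoin ℤ {ζ} := Algebra.self_mem_adjoin_singleton ℤ ζ
  refine ⟨∑ i ∈ Finset.range ((p + 1) / 2), (ζ ^ 2) ^ i, sum_mem fun i _ => pow_mem (pow_mem hz _) _, ?_⟩
  have h1 := geom_sum_mul (ζ ^ 2) ((p + 1) / 2)
  have h2 : (ζ ^ 2) ^ ((p + 1) / 2) = ζ := by
    rw [← pow_mul, show 2 * ((p + 1) / 2) = p + 1 by omega, pow_succ, hζ.pow_eq_one, one_mul]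
  rw [h2] at h1
  have h3 : ζ - 1 ≠ 0 := sub_ne_zero.2 (hζ.ne_one hp.one_lt)
  apply mul_right_cancel₀ h3
  linear_combination h1

lemma B1_dual {M : Type} [Field M] [NumberField M] {p : ℕ} (hp2 : p % 2 = 1) (hp : p.Prime) [NeZero p]
    [IsCyclotomicExtension {p} ℚ M] {ζ : M} (hζ : IsPrimitiveRoot ζ p) (c : M) :
    (∀ x ∈ Algebra.adjoin ℤ {ζ}, ∃ n : ℤ, Algebra.trace ℚ M ((ζ - ζ⁻¹) / p * c * x) = n) ↔ c ∈ Algebra.adjoin ℤ {ζ} := by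
  have : Fact p.Prime := ⟨hp⟩
  have htop : Algebra.adjoin ℚ {ζ} = ⊤ := IsCyclotomicExtension.adjoin_primitive_root_eq_top hζ
  have h := traceForm_dualSubmodule_adjoin ℤ ℚ htop (hζ.isIntegral hp.pos)
  rw [← hζ.minpoly_eq_cyclotomic_of_irreducible (cyclotomic.irreducible_rat hp.pos)] at h
  have hz : ζ ∈ Algebra.adjoin ℤ {ζ} := Algebra.self_mem_adjoin_singleton ℤ ζ
  have hζ0 : ζ ≠ 0 := hζ.ne_zero hp.ne_zero
  have h3 : ζ - 1 ≠ 0 := sub_ne_zero.2 (hζ.ne_one hp.one_lt)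
  have hzi : ζ⁻¹ ∈ Algebra.adjoin ℤ {ζ} := by
    have : ζ⁻¹ = ζ ^ (p - 1) := by
      symm
      apply eq_inv_of_mul_eq_one_left
      rw [← pow_succ, Nat.sub_add_cancel hp.one_le, hζ.pow_eq_one]
    rw [this]; exact pow_mem hz _
  have hp0 : (p : M) ≠ 0 := by exact_mod_cast hp.ne_zero
  have hD : (aeval ζ (derivative (cyclotomic p ℚ))) * (ζ - 1) = p * ζ⁻¹ := by
    have h1 := cyclotomic_prime_mul_X_sub_one ℚ p
    have h2 := congrArg (fun f => aeval ζ (derivative f)) h1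
    simp only [derivative_mul, derivative_sub, derivative_X, derivative_one, derivative_X_pow, map_add, map_mul, map_sub,
      aeval_X, map_one, map_pow, map_natCast, sub_zero, mul_one, map_zero] at h2
    have h4 : aeval ζ (cyclotomic p ℚ) = 0 := by
      rw [hζ.minpoly_eq_cyclotomic_of_irreducible (cyclotomic.irreducible_rat hp.pos)]
      exact minpoly.aeval _ _
    rw [h4, add_zero] at h2
    rw [h2]
    congr 1
    apply eq_inv_of_mul_eq_one_left
    rw [← pow_succ, Nat.sub_add_cancel hp.one_le, hζ.pow_eq_one]
  set D := aeval ζ (derivative (cyclotomic p ℚ)) with hDdef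
  have hD0 : D ≠ 0 := by
    intro h0
    rw [h0, zero_mul] at hD
    exact mul_ne_zero hp0 (inv_ne_zero hζ0) hD.symm
  have hδ : (ζ - ζ⁻¹) / p = D⁻¹ * (ζ⁻¹ * ζ⁻¹ * (1 + ζ)) := by
    field_simp
    field_simp at hD
    linear_combination (1 + ζ) * hD
  have hiff : (∀ x ∈ Algebra.adjoin ℤ {ζ}, ∃ n : ℤ, Algebra.trace ℚ M ((ζ - ζ⁻¹) / p * c * x) = n) ↔ 
      (ζ - ζ⁻¹) / p * c ∈ (Algebra.traceForm ℚ M).dualSubmodule (Subalgebra.toSubmodule (Algebra.adjoin ℤ {ζ})) := by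
    rw [LinearMap.BilinForm.mem_dualSubmodule]
    simp only [Subalgebra.mem_toSubmodule, Algebra.traceForm_apply, Submodule.mem_one]
    constructor
    · intro H x hx
      obtain ⟨n, hn⟩ := H x hx
      exact ⟨n, by rw [hn]; simp⟩
    · intro H x hx
      obtain ⟨n, hn⟩ := H x hx
      exact ⟨n, by rw [← hn]; simp⟩
  have hsm : ∀ x : M, D⁻¹ • x ∈ D⁻¹ • Subalgebra.toSubmodule (Algebra.adjoin ℤ {ζ}) ↔ x ∈ Algebra.adjoin ℤ {ζ} := by
    intro x
    rw [Submodule.mem_smul_pointwise_iff_exists]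
    constructor
    · rintro ⟨y, hy, hxy⟩
      rw [smul_eq_mul, smul_eq_mul] at hxy
      rw [← mul_left_cancel₀ (inv_ne_zero hD0) hxy]
      exact hy
    · intro hx
      exact ⟨x, hx, rfl⟩
  rw [hiff, h, hδ, mul_assoc, ← smul_eq_mul, hsm]
  obtain ⟨v, hv, hv1⟩ := B1_unit hp2 hp hζ
  constructor
  · intro H
    have := mul_mem (mul_mem (mul_mem hz hz) hv) H
    have e : ζ * ζ * v * (ζ⁻¹ * ζ⁻¹ * (1 + ζ) * c) = c := by
      field_simp
      linear_combination c * hv1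
    rwa [e] at this
  · intro H
    exact mul_mem (mul_mem (mul_mem hzi hzi) (add_mem (one_mem _) hz)) H

variable {K : Type} [Field K] [NumberField K] {p : ℕ} {α ζ : K} {l : ℕ}

lemma B1_dualK (hp2 : p % 2 = 1) (hp : p.Prime) (hζ : IsPrimitiveRoot ζ p) (hα : α ^ 2 = -(l : K)) (hnm : α ∉ ℚ⟮ζ⟯)
    (hgen : IntermediateField.adjoin ℚ {α, ζ} = ⊤) (c : K) (hc : c ∈ ℚ⟮ζ⟯) :
    (∀ x ∈ Algebra.adjoin ℤ {ζ}, ∃ n : ℤ, Algebra.trace ℚ K ((ζ - ζ⁻¹) / p * c * x) = 2 * n) ↔ c ∈ Algebra.adjoin ℤ {ζ} := by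
  have : NeZero p := ⟨hp.ne_zero⟩
  have hcyc := L0_cyc hp hζ
  let ζM : ℚ⟮ζ⟯ := AdjoinSimple.gen ℚ ζ
  have hζMc : (ζM : K) = ζ := AdjoinSimple.coe_gen ℚ ζ
  have hζM : IsPrimitiveRoot ζM p := by
    rw [← hζMc] at hζ
    exact IsPrimitiveRoot.coe_submonoidClass_iff.1 hζ
  have hadj : ∀ x : ℚ⟮ζ⟯, (x : K) ∈ Algebra.adjoin ℤ {ζ} ↔ x ∈ Algebra.adjoin ℤ {ζM} := by
    intro x
    have e1 : (ℚ⟮ζ⟯.val.restrictScalars ℤ) ζM = ζ := hζMc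
    have h2 : Algebra.adjoin ℤ {ζ} = (Algebra.adjoin ℤ {ζM}).map (ℚ⟮ζ⟯.val.restrictScalars ℤ) := by
      rw [AlgHom.map_adjoin, Set.image_singleton, e1]
    rw [h2]
    constructor
    · rintro ⟨y, hy, hyx⟩
      have : y = x := Subtype.ext hyx
      rwa [← this]
    · intro h; exact ⟨x, h, rfl⟩
  have htr : ∀ x : ℚ⟮ζ⟯, Algebra.trace ℚ K (x : K) = 2 * Algebra.trace ℚ ℚ⟮ζ⟯ x := by
    intro x
    have h1 : (x : K) = algebraMap ℚ⟮ζ⟯ K x := rfl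
    rw [← Algebra.trace_trace (S := ℚ⟮ζ⟯), h1, Algebra.trace_algebraMap, L0_finrank2 hα hnm hgen, map_nsmul]
    simp
  have hle : ∀ x ∈ Algebra.adjoin ℤ {ζ}, x ∈ ℚ⟮ζ⟯ := by
    intro x hx
    induction hx using Algebra.adjoin_induction with
    | mem x hx => obtain rfl : x = ζ := hx; exact mem_adjoin_simple_self ℚ x
    | algebraMap r => simp
    | add x y _ _ hx hy => exact add_mem hx hy
    | mul x y _ _ hx hy => exact mul_mem hx hy
  have h := B1_dual hp2 hp hζM ⟨c, hc⟩
  rw [← hadj] at h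
  rw [← h]
  constructor
  · intro H x hx
    obtain ⟨n, hn⟩ := H x ((hadj x).2 hx)
    refine ⟨n, ?_⟩
    have e : (ζ - ζ⁻¹) / p * c * x = (((ζM - ζM⁻¹) / p * ⟨c, hc⟩ * x : ℚ⟮ζ⟯) : K) := by
      push_cast; rw [hζMc]
    rw [e, htr] at hn
    linarith
  · intro H x hx
    obtain ⟨n, hn⟩ := H ⟨x, hle x hx⟩ ((hadj _).1 hx)
    refine ⟨n, ?_⟩
    have e : (ζ - ζ⁻¹) / p * c * x = (((ζM - ζM⁻¹) / p * ⟨c, hc⟩ * ⟨x, hle x hx⟩ : ℚ⟮ζ⟯) : K) := by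
      push_cast; rw [hζMc]
    rw [e, htr, hn]

lemma B1_adj_le {ζ x : K} (hx : x ∈ Algebra.adjoin ℤ {ζ}) : x ∈ ℚ⟮ζ⟯ := by
  induction hx using Algebra.adjoin_induction with
  | mem x hx => obtain rfl : x = ζ := hx; exact mem_adjoin_simple_self ℚ x
  | algebraMap r => simp
  | add x y _ _ hx hy => exact add_mem hx hy
  | mul x y _ _ hx hy => exact mul_mem hx hy

lemma B1_fix {ζ x : K} (hx : x ∈ ℚ⟮ζ⟯) (τ : K ≃ₐ[ℚ] K) (hτ : τ ζ = ζ) : τ x = x := by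
  have : ℚ⟮ζ⟯ ≤ (AlgHom.equalizer (τ : K →ₐ[ℚ] K) (AlgHom.id ℚ K)).toIntermediateField (by
      intro x hx
      rw [AlgHom.mem_equalizer] at hx ⊢
      rw [map_inv₀, map_inv₀, hx]) := by
    rw [IntermediateField.adjoin_le_iff]
    rintro x rfl
    exact hτ
  exact this hx

lemma B1_adj_int {ζ x : K} (hp : p.Prime) (hζ : IsPrimitiveRoot ζ p) (hx : x ∈ Algebra.adjoin ℤ {ζ}) : IsIntegral ℤ x := by
  have : Algebra.adjoin ℤ {ζ} ≤ integralClosure ℤ K := Algebra.adjoin_le (by rintro x rfl; exact hζ.isIntegral hp.pos)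
  exact this hx

lemma B1_theta {q : ℕ} {j : K} (hq3 : q % 4 = 3) (hj : j ^ 2 = -(q : K)) : IsIntegral ℤ ((1 + j) / 2) := by
  obtain ⟨k, hk⟩ : ∃ k : ℕ, q = 4 * k + 3 := ⟨q / 4, by omega⟩
  refine ⟨X ^ 2 - X + C ((k : ℤ) + 1), by monicity!, ?_⟩
  rw [hk] at hj
  push_cast at hj
  simp
  linear_combination hj / 4

lemma B1_core {q : ℕ} {j : K} (hp2 : p % 2 = 1) (hp : p.Prime) (hζ : IsPrimitiveRoot ζ p) (hq0 : 0 < q) (hq3 : q % 4 = 3) (hj : j ^ 2 = -(q : K)) (hnm : j ∉ ℚ⟮ζ⟯)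
    (hgen : IntermediateField.adjoin ℚ {j, ζ} = ⊤) (τ : K ≃ₐ[ℚ] K) (hτj : τ j = -j) (hτζ : τ ζ = ζ)
    (hint : ∀ x, IsIntegral ℤ x → ∃ a ∈ Algebra.adjoin ℤ {ζ}, ∃ b ∈ Algebra.adjoin ℤ {ζ}, x = a + b * ((1 + j) / 2))
    (y : K) : (∀ x, IsIntegral ℤ x → ∃ n : ℤ, Algebra.trace ℚ K (j * (ζ - ζ⁻¹) / (p * q) * x * y) = n) ↔ IsIntegral ℤ y := by
  have hθ := B1_theta hq3 hj
  have hp0 : (p : K) ≠ 0 := by exact_mod_cast hp.ne_zero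
  have hq0' : (q : K) ≠ 0 := by exact_mod_cast hq0.ne'
  have hζm : ζ ∈ ℚ⟮ζ⟯ := mem_adjoin_simple_self ℚ ζ
  have hδm : (ζ - ζ⁻¹) / p ∈ ℚ⟮ζ⟯ := div_mem (sub_mem hζm (inv_mem hζm)) (_root_.natCast_mem _ _)
  have htr0 : ∀ m ∈ ℚ⟮ζ⟯, Algebra.trace ℚ K (m * j) = 0 := by
    intro m hm
    have h1 := Algebra.trace_eq_of_algEquiv τ (m * j)
    rw [map_mul, B1_fix hm τ hτζ, hτj, mul_neg, map_neg] at h1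
    linarith
  have hqm : ∀ n : ℕ, (n : K) ∈ ℚ⟮ζ⟯ := fun n => _root_.natCast_mem _ _
  have h2m : (2 : K) ∈ ℚ⟮ζ⟯ := by exact_mod_cast hqm 2
  constructor
  · intro H
    obtain ⟨m0, hm0, m1, hm1, rfl⟩ := L0_decomp hj hgen y
    have hc1 : 2 * m1 ∈ Algebra.adjoin ℤ {ζ} := by
      rw [← B1_dualK hp2 hp hζ hj hnm hgen _ (mul_mem h2m hm1)]
      intro x hx
      obtain ⟨n, hn⟩ := H x (B1_adj_int hp hζ hx)
      refine ⟨-n, ?_⟩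
      have e : j * (ζ - ζ⁻¹) / (p * q) * x * (m0 + m1 * j) = ((ζ - ζ⁻¹) / p * x * m0 / q) * j - ((ζ - ζ⁻¹) / p * m1 * x) := by
        generalize ζ - ζ⁻¹ = w
        field_simp
        linear_combination w * x * m1 * hj
      have e2 : (ζ - ζ⁻¹) / p * (2 * m1) * x = (2 : ℚ) • ((ζ - ζ⁻¹) / p * m1 * x) := by
        rw [Algebra.smul_def]; simp; ring
      rw [e, map_sub, htr0 _ (div_mem (mul_mem (mul_mem hδm (B1_adj_le hx)) hm0) (hqm q))] at hn
      rw [e2, map_smul, smul_eq_mul]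
      push_cast
      linarith
    have hc2 : m0 + m1 ∈ Algebra.adjoin ℤ {ζ} := by
      rw [← B1_dualK hp2 hp hζ hj hnm hgen _ (add_mem hm0 hm1)]
      intro x hx
      obtain ⟨n, hn⟩ := H (x * ((1 + j) / 2)) ((B1_adj_int hp hζ hx).mul hθ)
      refine ⟨-n, ?_⟩
      have e : j * (ζ - ζ⁻¹) / (p * q) * (x * ((1 + j) / 2)) * (m0 + m1 * j) = ((ζ - ζ⁻¹) / p * x * (m0 - q * m1) / (2 * q)) * j - (1 / 2 : ℚ) • ((ζ - ζ⁻¹) / p * (m0 + m1) * x) := by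
        rw [Algebra.smul_def]
        simp only [map_div₀, map_one, map_ofNat]
        generalize ζ - ζ⁻¹ = w
        field_simp
        linear_combination w * x * (m0 + m1 + m1 * j) * hj
      rw [e, map_sub, htr0 _ (div_mem (mul_mem (mul_mem hδm (B1_adj_le hx)) (sub_mem hm0 (mul_mem (hqm q) hm1))) (mul_mem h2m (hqm q))), map_smul, smul_eq_mul] at hn
      push_cast
      linarith
    have e : m0 + m1 * j = (m0 + m1) - 2 * m1 + 2 * m1 * ((1 + j) / 2) := by ring
    rw [e]
    exact ((B1_adj_int hp hζ hc2).sub (B1_adj_int hp hζ hc1)).add ((B1_adj_int hp hζ hc1).mul hθ)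
  · intro hy x hx
    obtain ⟨a, ha, b, hb, hab⟩ := hint _ (hx.mul hy)
    obtain ⟨n, hn⟩ := (B1_dualK hp2 hp hζ hj hnm hgen _ (B1_adj_le hb)).2 hb 1 (one_mem _)
    refine ⟨-n, ?_⟩
    have e : j * (ζ - ζ⁻¹) / (p * q) * x * y = ((ζ - ζ⁻¹) / p * (a + b / 2) / q) * j - (1 / 2 : ℚ) • ((ζ - ζ⁻¹) / p * b * 1) := by
      rw [mul_assoc, hab, Algebra.smul_def]
      simp only [map_div₀, map_one, map_ofNat]
      generalize ζ - ζ⁻¹ = w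
      field_simp
      linear_combination w * b * hj
    rw [e, map_sub, htr0 _ (div_mem (mul_mem hδm (add_mem (B1_adj_le ha) (div_mem (B1_adj_le hb) h2m))) (hqm q)), map_smul, hn, smul_eq_mul]
    push_cast
    ring

end stepB1
end File_b1

section File_b2
open IntermediateField NumberField

section stepB2
variable {K : Type} [Field K] [NumberField K] {p : ℕ} {α ζ : K} {l : ℕ}

lemma B2_star (hp : p.Prime) (hζ : IsPrimitiveRoot ζ p) (hα : α ^ 2 = -(l : K))
    (hgen : IntermediateField.adjoin ℚ {α, ζ} = ⊤) (conj : K ≃ₐ[ℚ] K) (hcα : conj α = -α) (hcζ : conj ζ = ζ⁻¹)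
    (φ : K →ₐ[ℚ] ℂ) (x : K) : φ (conj x) = star (φ x) := by
  have h : φ.comp (conj : K →ₐ[ℚ] K) = ((Complex.conjAe.restrictScalars ℚ : ℂ ≃ₐ[ℚ] ℂ) : ℂ →ₐ[ℚ] ℂ).comp φ := by
    apply L0_ext hgen
    · change φ (conj α) = star (φ α)
      rw [hcα, map_neg]
      have h1 : (φ α) ^ 2 = -(l : ℂ) := by rw [← map_pow, hα]; simp
      have hre : (φ α).re = 0 := by
        have h2 := congrArg Complex.re h1
        have h3 := congrArg Complex.im h1
        simp [sq] at h2 h3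
        by_contra hne
        have h4 : (φ α).im = 0 := by
          have : (φ α).re * (φ α).im = 0 := by linarith
          exact (mul_eq_zero.1 this).resolve_left hne
        rw [h4] at h2
        have h5 : (0 : ℝ) ≤ l := Nat.cast_nonneg l
        have h6 : 0 < (φ α).re * (φ α).re := mul_self_pos.2 hne
        linarith
      apply Complex.ext
      · simp [hre]
      · simp
    · change φ (conj ζ) = star (φ ζ)
      rw [hcζ, map_inv₀]
      have h1 : ‖φ ζ‖ = 1 := (hζ.map_of_injective φ.injective).norm'_eq_one hp.ne_zero
      rw [Complex.inv_def, Complex.normSq_eq_norm_sq, h1]; simp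
  exact congrArg (fun f : K →ₐ[ℚ] ℂ => f x) h

lemma B2_real (hp : p.Prime) (hζ : IsPrimitiveRoot ζ p) (hα : α ^ 2 = -(l : K))
    (hgen : IntermediateField.adjoin ℚ {α, ζ} = ⊤) (conj : K ≃ₐ[ℚ] K) (hcα : conj α = -α) (hcζ : conj ζ = ζ⁻¹)
    (φ : K →ₐ[ℚ] ℂ) (x : K) (hx : conj x = x) : φ x = ((φ x).re : ℂ) := by
  have := B2_star hp hζ hα hgen conj hcα hcζ φ x
  rw [hx] at this
  exact (Complex.conj_eq_iff_re.1 this.symm).symm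

lemma B2_pos (hp : p.Prime) (hζ : IsPrimitiveRoot ζ p) (hα : α ^ 2 = -(l : K))
    (hgen : IntermediateField.adjoin ℚ {α, ζ} = ⊤) (conj : K ≃ₐ[ℚ] K) (hcα : conj α = -α) (hcζ : conj ζ = ζ⁻¹)
    (d : K) (hd : conj d = d) (hpos : ∀ φ : K →ₐ[ℚ] ℂ, 0 < (φ d).re) (x : K) (hx : x ≠ 0) :
    0 < Algebra.trace ℚ K (d * x * conj x) := by
  have h := trace_eq_sum_embeddings (K := ℚ) ℂ (x := d * x * conj x)
  have h2 : (algebraMap ℚ ℂ) (Algebra.trace ℚ K (d * x * conj x)) = ((∑ φ : K →ₐ[ℚ] ℂ, (φ d).re * Complex.normSq (φ x) : ℝ) : ℂ) := by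
    rw [h, Complex.ofReal_sum]
    apply Finset.sum_congr rfl
    intro φ _
    rw [map_mul, map_mul, B2_star hp hζ hα hgen conj hcα hcζ φ x, Complex.ofReal_mul, ← B2_real hp hζ hα hgen conj hcα hcζ φ d hd,
      mul_assoc]
    congr 1
    exact Complex.mul_conj _
  have h3 : ((Algebra.trace ℚ K (d * x * conj x) : ℚ) : ℝ) = ∑ φ : K →ₐ[ℚ] ℂ, (φ d).re * Complex.normSq (φ x) := by
    have : (((Algebra.trace ℚ K (d * x * conj x) : ℚ) : ℝ) : ℂ) = ((∑ φ : K →ₐ[ℚ] ℂ, (φ d).re * Complex.normSq (φ x) : ℝ) : ℂ) := by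
      rw [← h2]; simp
    exact_mod_cast this
  have h4 : (0 : ℝ) < ((Algebra.trace ℚ K (d * x * conj x) : ℚ) : ℝ) := by
    rw [h3]
    apply Finset.sum_pos
    · intro φ _
      exact mul_pos (hpos φ) (Complex.normSq_pos.2 ((map_ne_zero φ).2 hx))
    · exact ⟨IsAlgClosed.lift, Finset.mem_univ _⟩
  exact_mod_cast h4

/-- sign -/
noncomputable def sg (r : ℝ) : ZMod 2 := if 0 < r then 0 else 1

lemma sg_mul {a b : ℝ} (ha : a ≠ 0) (hb : b ≠ 0) : sg (a * b) = sg a + sg b := by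
  have h2 : (1 : ZMod 2) + 1 = 0 := by decide
  unfold sg
  rcases lt_or_gt_of_ne ha with h | h <;> rcases lt_or_gt_of_ne hb with h' | h'
  · rw [if_pos (mul_pos_of_neg_of_neg h h'), if_neg (by linarith), if_neg (by linarith), h2]
  · rw [if_neg (by have := mul_neg_of_neg_of_pos h h'; linarith), if_neg (by linarith), if_pos h']; simp
  · rw [if_neg (by have := mul_neg_of_pos_of_neg h h'; linarith), if_pos h, if_neg (by linarith)]; simp
  · rw [if_pos (mul_pos h h'), if_pos h, if_pos h']; simp

lemma sg_prod {ι : Type} (S : Finset ι) (f : ι → ℝ) (hf : ∀ i ∈ S, f i ≠ 0) : sg (∏ i ∈ S, f i) = ∑ i ∈ S, sg (f i) := by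
  classical
  induction S using Finset.induction_on with
  | empty => simp [sg]
  | insert a S ha ih =>
    rw [Finset.prod_insert ha, Finset.sum_insert ha, sg_mul (hf a (by simp)) , ih (fun i hi => hf i (by simp [hi]))]
    exact Finset.prod_ne_zero_iff.2 (fun i hi => hf i (by simp [hi]))

lemma sg_pos {a : ℝ} (h : sg a = 0) : 0 < a := by
  unfold sg at h
  by_contra h'
  rw [if_neg h'] at h
  exact one_ne_zero h

lemma B2_quot {η : K} (hη : IsIntegral ℤ η) (h1 : η - 1 ≠ 0) (a : ℕ) : IsIntegral ℤ ((η ^ a - 1) / (η - 1)) := by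
  have h := geom_sum_mul η a
  rw [← h, mul_div_cancel_right₀ _ h1]
  exact IsIntegral.sum _ (fun i _ => hη.pow i)

/-- the quotients of the sine values are units -/
lemma B2_unit (hp : p.Prime) (hp2 : p % 2 = 1) (hζ : IsPrimitiveRoot ζ p) (a : ℕ) (ha : a.Coprime p) :
    IsIntegral ℤ ((ζ ^ a - (ζ ^ a)⁻¹) / (ζ - ζ⁻¹)) ∧ IsIntegral ℤ ((ζ - ζ⁻¹) / (ζ ^ a - (ζ ^ a)⁻¹)) := by
  have h2 : Nat.Coprime 2 p := by
    rw [Nat.coprime_two_left, Nat.odd_iff]; exact hp2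
  have key : ∀ (η : K), IsPrimitiveRoot η p → ∀ a : ℕ, IsIntegral ℤ ((η ^ a - (η ^ a)⁻¹) / (η - η⁻¹)) := by
    intro η hη a
    have hη0 : η ≠ 0 := hη.ne_zero hp.ne_zero
    have hne : η ^ 2 - 1 ≠ 0 := sub_ne_zero.2 ((hη.pow_of_coprime 2 h2).ne_one hp.one_lt)
    have hi := hη.isIntegral hp.pos
    have hi' := hη.inv.isIntegral hp.pos
    have e : (η ^ a - (η ^ a)⁻¹) / (η - η⁻¹) = η⁻¹ ^ a * η * (((η ^ 2) ^ a - 1) / (η ^ 2 - 1)) := by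
      have e1 : η - η⁻¹ = η⁻¹ * (η ^ 2 - 1) := by field_simp
      have e2 : η ^ a - (η ^ a)⁻¹ = (η ^ a)⁻¹ * ((η ^ 2) ^ a - 1) := by
        rw [← pow_mul, mul_comm 2 a, pow_mul]; field_simp
      rw [e1, e2, inv_pow]
      field_simp
    rw [e]
    exact ((hi'.pow a).mul hi).mul (B2_quot (hi.pow 2) hne a)
  refine ⟨key ζ hζ a, ?_⟩
  obtain ⟨b, hb⟩ := Nat.exists_mul_mod_eq_one_of_coprime ha hp.one_lt
  have h1 := key (ζ ^ a) (hζ.pow_of_coprime a ha) b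
  have h3 : (ζ ^ a) ^ b = ζ := by
    rw [← pow_mul, ← pow_mod_orderOf, ← hζ.eq_orderOf, hb.2, pow_one]
  rwa [h3] at h1

end stepB2
end File_b2

section File_b3
open IntermediateField NumberField

section stepB3

lemma B3_gen (p : ℕ) (hp : p.Prime) (hp2 : p ≠ 2) : ∃ g : ℕ, g.Coprime p ∧ (g : ZMod p) ^ ((p - 1) / 2) = -1 ∧
    ∀ a : ℕ, a.Coprime p → ∃ i : ℕ, (a : ZMod p) = (g : ZMod p) ^ i := by
  have : Fact p.Prime := ⟨hp⟩
  obtain ⟨g, hg⟩ := IsCyclic.exists_generator (α := (ZMod p)ˣ)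
  have hv : ((((g : ZMod p).val : ℕ)) : ZMod p) = (g : ZMod p) := ZMod.natCast_zmod_val _
  have ho : orderOf g = p - 1 := by
    rw [orderOf_eq_card_of_forall_mem_zpowers hg, Nat.card_eq_fintype_card, ZMod.card_units]
  have hodd := hp.odd_of_ne_two hp2
  have h2 := hp.two_le
  rw [Nat.odd_iff] at hodd
  refine ⟨(g : ZMod p).val, ZMod.val_coe_unit_coprime g, ?_, ?_⟩
  · rw [hv]
    have h1 : ((g : ZMod p) ^ ((p - 1) / 2)) ^ 2 = 1 := by
      rw [← pow_mul, show (p - 1) / 2 * 2 = p - 1 by omega, ← ho, ← Units.val_pow_eq_pow_val, pow_orderOf_eq_one, Units.val_one]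
    rcases sq_eq_sq_iff_eq_or_eq_neg.1 (h1.trans (one_pow 2).symm) with h | h
    · exfalso
      rw [← Units.val_pow_eq_pow_val, Units.val_eq_one] at h
      have := orderOf_dvd_of_pow_eq_one h
      rw [ho] at this
      have := Nat.le_of_dvd (by omega) this
      omega
    · exact h
  · intro a ha
    have h := hg (ZMod.unitOfCoprime a ha)
    rw [← mem_powers_iff_mem_zpowers] at h
    obtain ⟨i, hi⟩ := h
    refine ⟨i, ?_⟩
    rw [hv, ← Units.val_pow_eq_pow_val]
    have := congrArg (fun x : (ZMod p)ˣ => (x : ZMod p)) hi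
    simp at this
    rw [Units.val_pow_eq_pow_val, this]

variable {K : Type} [Field K] [NumberField K] {p q : ℕ} {j ζ u : K}

theorem stepB (hp : p.Prime) (hp1 : p % 4 = 1) (hq : q.Prime) (hq3 : q % 4 = 3) (hpq : q ≠ p)
    (conj τ : K ≃ₐ[ℚ] K) (hζ : IsPrimitiveRoot ζ p) (hj : j ^ 2 = -(q : K)) (hgen : IntermediateField.adjoin ℚ {j, ζ} = ⊤)
    (hcj : conj j = -j) (hcζ : conj ζ = ζ⁻¹) (hτj : τ j = -j) (hτζ : τ ζ = ζ)
    (hσ : ∀ a : ℕ, a.Coprime p → ∃ σ : K ≃ₐ[ℚ] K, σ ζ = ζ ^ a ∧ σ j = j)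
    (hu : IsIntegral ℤ u) (huτ : u * τ u = -1) (hcu : conj u = u) :
    ∃ d u' : K, conj d = d ∧ conj u' = u' ∧ IsIntegral ℤ u' ∧ u' * τ u' = -1 ∧ τ (d * u') = -(d * u') ∧
      (∀ x, x ≠ 0 → 0 < Algebra.trace ℚ K (d * x * conj x)) ∧
      (∀ y, (∀ x, IsIntegral ℤ x → ∃ n : ℤ, Algebra.trace ℚ K (d * x * conj y) = n) ↔ IsIntegral ℤ y) := by
  have hζ0 : ζ ≠ 0 := hζ.ne_zero hp.ne_zero
  have hp0 : (p : K) ≠ 0 := by exact_mod_cast hp.ne_zero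
  have hq0 : (q : K) ≠ 0 := by exact_mod_cast hq.ne_zero
  have hj0 : j ≠ 0 := by
    intro h
    rw [h] at hj
    apply hq0
    linear_combination hj
  have hnm := L0_notmem hp hp1 hζ hq.pos hj conj hcj hcζ
  have hint := L1_odd hp (by omega) hζ hq.pos hq.prime.squarefree (fun h => hpq ((Nat.prime_dvd_prime_iff_eq hp hq).1 h).symm) hj hnm hq3 hgen
  have hcore := B1_core (by omega) hp hζ hq.pos hq3 hj hnm hgen τ hτj hτζ hint
  have hext : ∀ f g : K ≃ₐ[ℚ] K, f j = g j → f ζ = g ζ → ∀ x, f x = g x := by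
    intro f g h1 h2 x
    have := L0_ext hgen (f : K →ₐ[ℚ] K) (g : K →ₐ[ℚ] K) h1 h2
    exact congrArg (fun f : K →ₐ[ℚ] K => f x) this
  obtain ⟨g0, hg0, hg1, hg2⟩ := B3_gen p hp (by omega)
  obtain ⟨σ, hσζ, hσj⟩ := hσ g0 hg0
  have hkj : ∀ k : ℕ, (σ ^ k) j = j := by
    intro k
    induction k with
    | zero => simp
    | succ k ih => rw [pow_succ, AlgEquiv.mul_apply, hσj, ih]
  have hkζ : ∀ k : ℕ, (σ ^ k) ζ = ζ ^ (g0 ^ k) := by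
    intro k
    induction k with
    | zero => simp
    | succ k ih => rw [pow_succ, AlgEquiv.mul_apply, hσζ, map_pow, ih, ← pow_mul, pow_succ]
  have hadd : ∀ (i k : ℕ) (x : K), (σ ^ (i + k)) x = (σ ^ i) ((σ ^ k) x) := by
    intro i k x; rw [pow_add, AlgEquiv.mul_apply]
  have hζpow : ∀ a b : ℕ, (a : ZMod p) = (b : ZMod p) → ζ ^ a = ζ ^ b := by
    intro a b h
    exact pow_eq_pow_of_modEq ((ZMod.natCast_eq_natCast_iff _ _ _).1 h) hζ.pow_eq_one
  set n := (p - 1) / 2 with hn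
  have hζn : ζ ^ (g0 ^ n) = ζ⁻¹ := by
    apply eq_inv_of_mul_eq_one_left
    rw [← pow_succ, hζ.pow_eq_one_iff_dvd, ← ZMod.natCast_eq_zero_iff]
    push_cast
    rw [hg1]; ring
  -- commutations
  have hτk : ∀ (k : ℕ) (x : K), τ ((σ ^ k) x) = (σ ^ k) (τ x) := by
    intro k x
    refine hext ((σ ^ k).trans τ) (τ.trans (σ ^ k)) ?_ ?_ x
    · simp only [AlgEquiv.trans_apply]; rw [hkj, hτj, map_neg, hkj]
    · simp only [AlgEquiv.trans_apply]; rw [hkζ, map_pow, hτζ, hkζ]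
  have hck : ∀ (k : ℕ) (x : K), conj ((σ ^ k) x) = (σ ^ k) (conj x) := by
    intro k x
    refine hext ((σ ^ k).trans conj) (conj.trans (σ ^ k)) ?_ ?_ x
    · simp only [AlgEquiv.trans_apply]; rw [hkj, hcj, map_neg, hkj]
    · simp only [AlgEquiv.trans_apply]; rw [hkζ, map_pow, hcζ, map_inv₀, hkζ, inv_pow]
  have hnτ : ∀ x, conj x = x → (σ ^ n) x = τ x := by
    intro x hx
    have := hext (σ ^ n) (conj.trans τ) (by simp only [AlgEquiv.trans_apply]; rw [hkj, hcj, map_neg, hτj, neg_neg])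
      (by simp only [AlgEquiv.trans_apply]; rw [hkζ, hcζ, map_inv₀, hτζ, hζn]) x
    rw [this, AlgEquiv.trans_apply, hx]
  have hcc : ∀ x, conj (conj x) = x := by
    intro x
    refine hext (conj.trans conj) AlgEquiv.refl ?_ ?_ x
    · simp [hcj]
    · simp [hcζ]
  -- embedding
  let φ0 : K →ₐ[ℚ] ℂ := IsAlgClosed.lift
  let v : K → ℕ → ℝ := fun x i => (φ0 ((σ ^ i) x)).re
  have hreal : ∀ x, conj x = x → ∀ i, φ0 ((σ ^ i) x) = (v x i : ℂ) := by
    intro x hx i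
    exact B2_real hp hζ hj hgen conj hcj hcζ φ0 ((σ ^ i) x) (by rw [hck, hx])
  have hv0 : ∀ x, conj x = x → x ≠ 0 → ∀ i, v x i ≠ 0 := by
    intro x hx hx0 i h
    have h1 := hreal x hx i
    rw [h, Complex.ofReal_zero, map_eq_zero, map_eq_zero] at h1
    exact hx0 h1
  have hvmul : ∀ x y, conj x = x → conj y = y → ∀ i, v (x * y) i = v x i * v y i := by
    intro x y hx hy i
    have h1 := hreal (x * y) (by rw [map_mul, hx, hy]) i
    rw [map_mul, map_mul, hreal x hx i, hreal y hy i] at h1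
    exact_mod_cast h1.symm
  have hvshift : ∀ x k i, v ((σ ^ k) x) i = v x (i + k) := by
    intro x k i
    simp only [v, hadd]
  have hvone : ∀ i, v 1 i = 1 := by intro i; simp [v]
  have hvprod : ∀ (S : Finset ℕ) (f : ℕ → K), (∀ k, conj (f k) = f k) → ∀ i, v (∏ k ∈ S, f k) i = ∏ k ∈ S, v (f k) i := by
    intro S f hf i
    classical
    induction S using Finset.induction_on with
    | empty => simp [hvone]
    | insert a S ha ih =>
      rw [Finset.prod_insert ha, Finset.prod_insert ha, hvmul _ _ (hf a) (by rw [map_prod]; exact Finset.prod_congr rfl (fun k _ => hf k)), ih]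
  have hu0 : u ≠ 0 := by
    rintro rfl
    rw [zero_mul] at huτ
    norm_num at huτ
  set γ : K := j * (ζ - ζ⁻¹) with hγ
  have hw0 : ∀ a : ℕ, a.Coprime p → ζ ^ a - (ζ ^ a)⁻¹ ≠ 0 := by
    intro a ha h
    have h1 := hζ.pow_of_coprime a ha
    have h2 : (ζ ^ a) ^ 2 = 1 := by
      have h3 : ζ ^ a = (ζ ^ a)⁻¹ := sub_eq_zero.1 h
      have h4 := mul_inv_cancel₀ (h1.ne_zero hp.ne_zero)
      rw [← h3] at h4
      rw [sq, h4]
    rw [h1.pow_eq_one_iff_dvd] at h2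
    have := Nat.le_of_dvd (by norm_num) h2
    have := hp.two_le
    omega
  have hw01 : ζ - ζ⁻¹ ≠ 0 := by
    have := hw0 1 (Nat.coprime_one_left p)
    rwa [pow_one] at this
  have hγ0 : γ ≠ 0 := mul_ne_zero hj0 hw01
  have hcγ : conj γ = γ := by rw [hγ, map_mul, map_sub, map_inv₀, hcj, hcζ, inv_inv]; ring
  have hτγ : τ γ = -γ := by rw [hγ, map_mul, map_sub, map_inv₀, hτj, hτζ]; ring
  have hσγ : ∀ k, (σ ^ k) γ / γ = (ζ ^ (g0 ^ k) - (ζ ^ (g0 ^ k))⁻¹) / (ζ - ζ⁻¹) := by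
    intro k
    rw [hγ, map_mul, map_sub, map_inv₀, hkj, hkζ, mul_div_mul_left _ _ hj0]
  have hsm1 : sg (-1) = 1 := by unfold sg; rw [if_neg (by norm_num)]
  have hs1 : ∀ i, sg (v u (i + n)) = sg (v u i) + 1 := by
    intro i
    have hct : conj (τ u) = τ u := by rw [← hnτ u hcu, hck, hcu]
    have h0 : v (u * τ u) i = -1 := by rw [huτ]; simp [v]
    rw [hvmul _ _ hcu hct, ← hnτ u hcu, hvshift] at h0
    have h1 := sg_mul (hv0 u hcu hu0 i) (hv0 u hcu hu0 (i + n))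
    rw [h0, hsm1] at h1
    have h2 : ∀ a b : ZMod 2, 1 = a + b → b = a + 1 := by decide
    exact h2 _ _ h1
  have hs2 : ∀ i, sg (v γ (i + n)) = sg (v γ i) + 1 := by
    intro i
    have h0 : v (τ γ) i = (-1) * v γ i := by rw [hτγ]; simp [v]
    rw [← hnτ γ hcγ, hvshift] at h0
    rw [h0, sg_mul (by norm_num) (hv0 γ hcγ hγ0 i), hsm1, add_comm]
  obtain ⟨A, B, hA, hB, hAB⟩ := sign_lemma n (by have := hp.two_le; omega) (fun i => sg (v u i)) (fun i => sg (v γ i)) hs1 hs2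
  have hcuk : ∀ k, conj ((σ ^ k) u) = (σ ^ k) u := fun k => by rw [hck, hcu]
  have hcγk : ∀ k, conj ((σ ^ k) γ) = (σ ^ k) γ := fun k => by rw [hck, hcγ]
  have hcγk' : ∀ k, conj ((σ ^ k) γ / γ) = (σ ^ k) γ / γ := fun k => by rw [map_div₀, hcγk, hcγ]
  set u' : K := ∏ k ∈ A, (σ ^ k) u with hu'
  set ε : K := ∏ k ∈ B, ((σ ^ k) γ / γ) with hε
  have hcu' : conj u' = u' := by rw [hu', map_prod]; exact Finset.prod_congr rfl (fun k _ => hcuk k)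
  have hcε : conj ε = ε := by rw [hε, map_prod]; exact Finset.prod_congr rfl (fun k _ => hcγk' k)
  have hτε : τ ε = ε := by
    rw [hε, map_prod]
    refine Finset.prod_congr rfl (fun k _ => ?_)
    rw [map_div₀, hτk, hτγ, map_neg, neg_div_neg_eq]
  have hu'i : IsIntegral ℤ u' := IsIntegral.prod _ (fun k _ => hu.map ((σ ^ k : K ≃ₐ[ℚ] K) : K →ₐ[ℚ] K))
  have hu'τ : u' * τ u' = -1 := by
    rw [hu', map_prod, ← Finset.prod_mul_distrib]
    have : ∀ k ∈ A, (σ ^ k) u * τ ((σ ^ k) u) = -1 := by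
      intro k _
      rw [hτk, ← map_mul, huτ, map_neg, map_one]
    rw [Finset.prod_congr rfl this, Finset.prod_const, hA.neg_one_pow]
  have hu'0 : u' ≠ 0 := by
    intro h
    rw [h, zero_mul] at hu'τ
    norm_num at hu'τ
  have hu'inv : IsIntegral ℤ u'⁻¹ := by
    have : u'⁻¹ = -τ u' := by
      symm; apply eq_inv_of_mul_eq_one_right
      linear_combination -hu'τ
    rw [this]
    exact (hu'i.map (τ : K →ₐ[ℚ] K)).neg
  have hcop : ∀ k, (g0 ^ k).Coprime p := fun k => Nat.Coprime.pow_left k hg0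
  have hεi : IsIntegral ℤ ε := IsIntegral.prod _ (fun k _ => by rw [hσγ]; exact (B2_unit hp (by omega) hζ _ (hcop k)).1)
  have hεinv : IsIntegral ℤ ε⁻¹ := by
    rw [hε, ← Finset.prod_inv_distrib]
    exact IsIntegral.prod _ (fun k _ => by rw [hσγ, inv_div]; exact (B2_unit hp (by omega) hζ _ (hcop k)).2)
  have hγk0 : ∀ k, (σ ^ k) γ / γ ≠ 0 := fun k => div_ne_zero ((map_ne_zero _).2 hγ0) hγ0
  have hε0 : ε ≠ 0 := Finset.prod_ne_zero_iff.2 (fun k _ => hγk0 k)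
  -- sign comparison
  have h2z : ∀ a : ZMod 2, a + a = 0 := by decide
  have hsgu : ∀ i, sg (v u' i) = ∑ k ∈ A, sg (v u (i + k)) := by
    intro i
    rw [hu', hvprod A _ hcuk, sg_prod _ _ (fun k _ => hv0 _ (hcuk k) ((map_ne_zero _).2 hu0) i)]
    exact Finset.sum_congr rfl (fun k _ => by rw [hvshift])
  have hsgε : ∀ i, sg (v (ε * γ) i) = ∑ k ∈ B, sg (v γ (i + k)) := by
    intro i
    rw [hvmul _ _ hcε hcγ, sg_mul (hv0 _ hcε hε0 i) (hv0 _ hcγ hγ0 i), hε, hvprod B _ hcγk', sg_prod _ _ (fun k _ => hv0 _ (hcγk' k) (hγk0 k) i)]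
    have : ∀ k ∈ B, sg (v ((σ ^ k) γ / γ) i) = sg (v γ (i + k)) + sg (v γ i) := by
      intro k _
      have h1 := hvmul _ _ (hcγk' k) hcγ i
      rw [div_mul_cancel₀ _ hγ0, hvshift] at h1
      rw [h1, sg_mul (hv0 _ (hcγk' k) (hγk0 k) i) (hv0 _ hcγ hγ0 i), add_assoc, h2z, add_zero]
    rw [Finset.sum_congr rfl this, Finset.sum_add_distrib, Finset.sum_const, add_assoc]
    obtain ⟨m, hm⟩ := hB
    rw [hm]
    have : (2 * m + 1) • sg (v γ i) + sg (v γ i) = 0 := by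
      rw [add_smul, mul_comm 2 m, mul_smul, one_smul, two_smul, h2z, smul_zero, zero_add, h2z]
    rw [this, add_zero]
  have hpos0 : ∀ i, 0 < v (ε * γ * u') i := by
    intro i
    apply sg_pos
    have hcεγ : conj (ε * γ) = ε * γ := by rw [map_mul, hcε, hcγ]
    rw [hvmul _ _ hcεγ hcu', sg_mul (hv0 _ hcεγ (mul_ne_zero hε0 hγ0) i) (hv0 _ hcu' hu'0 i), hsgu, hsgε]
    have := hAB i
    rw [this, h2z]
  have hpos1 : ∀ φ : K →ₐ[ℚ] ℂ, 0 < (φ (ε * γ * u')).re := by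
    intro φ
    have hcx : conj (ε * γ * u') = ε * γ * u' := by rw [map_mul, map_mul, hcε, hcγ, hcu']
    have hφζ0 : IsPrimitiveRoot (φ0 ζ) p := hζ.map_of_injective φ0.injective
    have : NeZero p := ⟨hp.ne_zero⟩
    obtain ⟨a, ha, haζ⟩ := hφζ0.eq_pow_of_pow_eq_one (ξ := φ ζ) (by rw [← map_pow, hζ.pow_eq_one, map_one])
    have hac : a.Coprime p := by
      have h1 : IsPrimitiveRoot (φ ζ) p := hζ.map_of_injective φ.injective
      rw [← haζ] at h1
      exact (hφζ0.pow_iff_coprime hp.pos a).1 h1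
    obtain ⟨i, hi⟩ := hg2 a hac
    have hai : ζ ^ a = ζ ^ (g0 ^ i) := hζpow _ _ (by push_cast; exact hi)
    have hjj : (φ j) ^ 2 = (φ0 j) ^ 2 := by rw [← map_pow, ← map_pow, hj]; simp
    rcases sq_eq_sq_iff_eq_or_eq_neg.1 hjj with h | h
    · have h1 : φ = φ0.comp ((σ ^ i : K ≃ₐ[ℚ] K) : K →ₐ[ℚ] K) := by
        apply L0_ext hgen
        · rw [h]; change φ0 j = φ0 ((σ ^ i) j); rw [hkj]
        · rw [← haζ, ← map_pow, hai]; change _ = φ0 ((σ ^ i) ζ); rw [hkζ]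
      rw [h1]
      exact hpos0 i
    · have h1 : φ = φ0.comp ((conj.trans (σ ^ (i + n)) : K ≃ₐ[ℚ] K) : K →ₐ[ℚ] K) := by
        apply L0_ext hgen
        · rw [h]; change _ = φ0 ((σ ^ (i + n)) (conj j)); rw [hcj, map_neg, hkj, map_neg]
        · rw [← haζ, ← map_pow, hai]; change _ = φ0 ((σ ^ (i + n)) (conj ζ))
          rw [hcζ, map_inv₀, hkζ, pow_add, mul_comm, pow_mul, hζn, inv_pow, inv_inv]
      rw [h1]
      change 0 < (φ0 ((σ ^ (i + n)) (conj (ε * γ * u')))).re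
      rw [hcx]
      exact hpos0 (i + n)
  set d : K := ε * γ / (p * q * u') with hd
  have hcd : conj d = d := by
    rw [hd, map_div₀, map_mul conj ε, hcε, hcγ, map_mul, map_mul, hcu', map_natCast, map_natCast]
  refine ⟨d, u', hcd, hcu', hu'i, hu'τ, ?_, ?_, ?_⟩
  · have e : d * u' = ε * γ / (p * q) := by rw [hd]; field_simp
    rw [e, map_div₀, map_mul τ ε, hτε, hτγ, map_mul, map_natCast, map_natCast]; ring
  · intro x hx
    refine B2_pos hp hζ hj hgen conj hcj hcζ d hcd ?_ x hx
    intro φ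
    have h1 := hpos1 φ
    have e : ε * γ * u' = ((p * q : ℕ) : K) * (u' ^ 2) * d := by
      rw [hd]; push_cast; field_simp
    have hr1 := B2_real hp hζ hj hgen conj hcj hcζ φ u' hcu'
    have hr2 := B2_real hp hζ hj hgen conj hcj hcζ φ d hcd
    rw [e, map_mul, map_mul, map_natCast, map_pow, hr1, hr2] at h1
    have e2 : (((p * q : ℕ) : ℂ) * ((φ u').re : ℂ) ^ 2 * ((φ d).re : ℂ)) = ((((p * q : ℕ) : ℝ) * (φ u').re ^ 2 * (φ d).re : ℝ) : ℂ) := by push_cast; ring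
    rw [e2, Complex.ofReal_re] at h1
    by_contra hneg
    have h3 : 0 ≤ ((p * q : ℕ) : ℝ) * (φ u').re ^ 2 := by positivity
    have := mul_nonpos_of_nonneg_of_nonpos h3 (not_lt.1 hneg)
    linarith
  · intro y
    have hcy : IsIntegral ℤ (conj y) ↔ IsIntegral ℤ y := by
      constructor
      · intro h
        have := h.map (conj : K →ₐ[ℚ] K)
        change IsIntegral ℤ (conj (conj y)) at this
        rwa [hcc] at this
      · intro h; exact h.map (conj : K →ₐ[ℚ] K)
    rw [← hcy, ← hcore]
    constructor
    · intro H x hx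
      obtain ⟨n, hn⟩ := H (ε⁻¹ * u' * x) ((hεinv.mul hu'i).mul hx)
      refine ⟨n, ?_⟩
      rw [← hn, hd, hγ]
      congr 1
      field_simp
    · intro H x hx
      obtain ⟨n, hn⟩ := H (ε * u'⁻¹ * x) ((hεi.mul hu'inv).mul hx)
      refine ⟨n, ?_⟩
      rw [← hn, hd, hγ]
      congr 1
      field_simp

end stepB3
end File_b3

section File_d1
open IntermediateField NumberField

section stepD1

variable {E : Type} [Field E] [NumberField E] {q l : ℕ} {j ζ d u : E}

lemma D1_tr (σ : E ≃ₐ[ℚ] E) (x : E) : Algebra.trace ℚ E (σ x) = Algebra.trace ℚ E x :=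
  Algebra.trace_eq_of_algEquiv σ x

lemma D1_sm (σ : E ≃ₐ[ℚ] E) (r : ℚ) (x : E) : σ (r • x) = r • σ x := by
  rw [Algebra.smul_def, Algebra.smul_def, map_mul, AlgEquiv.commutes]

lemma D1_core (hq3 : q % 4 = 3) (conj τ : E ≃ₐ[ℚ] E) (hj : j ^ 2 = -(q : E))
    (hcc : ∀ x, conj (conj x) = x) (hττ : ∀ x, τ (τ x) = x) (hcτ : ∀ x, conj (τ x) = τ (conj x))
    (hcj : conj j = -j) (hcζ : conj ζ = ζ⁻¹) (hτj : τ j = -j)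
    (hcd : conj d = d) (hcu : conj u = u) (hu : IsIntegral ℤ u) (huτ : u * τ u = -1)
    (hdu : τ (d * u) = -(d * u))
    (hpos : ∀ x, x ≠ 0 → 0 < Algebra.trace ℚ E (d * x * conj x))
    (hdual : ∀ y, (∀ x, IsIntegral ℤ x → ∃ n : ℤ, Algebra.trace ℚ E (d * x * conj y) = n) ↔ IsIntegral ℤ y)
    (s t z w e N c ε k0 k1 k2 : ℤ) (hz : 0 < z) (hN : 0 < N) (hst : s ^ 2 + q * t ^ 2 = 4 * l * z ^ 2)
    (hw : s + q * t = 2 * w) (hk : N * k0 + s * k1 + w * k2 = 1)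
    (hc : e ^ 2 + z ^ 2 * l = N ^ 2 * c) (he : 2 * e = ε * N) :
    ∃ (W : E →ₗ[ℚ] E) (P : AddSubgroup E) (B : E →ₗ[ℚ] E →ₗ[ℚ] ℚ),
      (∀ m x, τ m = m → W (m * x) = m * W x) ∧ (∀ x, W (W x) = -(l : E) * x) ∧
      (∀ x y, B (W x) y = - B x (W y)) ∧ (∀ x y, B (ζ * x) y = B x (ζ⁻¹ * y)) ∧
      (∀ x y, B x y = B y x) ∧ (∀ x, x ≠ 0 → 0 < B x x) ∧ (∀ x ∈ P, ∃ n : ℤ, B x x = 2 * n) ∧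
      (∀ y, (∀ x ∈ P, ∃ n : ℤ, B x y = n) ↔ y ∈ P) ∧
      (∀ m, τ m = m → IsIntegral ℤ m → ∀ x ∈ P, m * x ∈ P) ∧
      (∀ x ∈ P, ((e : E) * x + z * W x) / N ∈ P) ∧ (∀ x ∈ P, IsIntegral ℤ ((N : E) * x)) := by
  have hz0 : (z : E) ≠ 0 := by exact_mod_cast hz.ne'
  have hN0 : (N : E) ≠ 0 := by exact_mod_cast hN.ne'
  have hNQ : (N : ℚ) ≠ 0 := by exact_mod_cast hN.ne'
  have hint : ∀ n : ℤ, IsIntegral ℤ (n : E) := fun n => isIntegral_algebraMap (R := ℤ) (A := E) (x := n)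
  set θ : E := (1 + j) / 2 with hθ
  have hθi : IsIntegral ℤ θ := B1_theta hq3 hj
  set β : E := (s + t * j) / 2 with hβ
  have hβi : IsIntegral ℤ β := by
    obtain ⟨k, hk⟩ : ∃ k : ℤ, (q : ℤ) = 2 * k - 1 := ⟨(q + 1) / 2, by omega⟩
    have e1 : s = 2 * w - (2 * k - 1) * t := by rw [← hk]; linarith
    have : β = ((w - t * k : ℤ) : E) + (t : E) * θ := by
      rw [hβ, hθ, e1]; push_cast; ring
    rw [this]
    exact (hint _).add ((hint _).mul hθi)
  have hc2 : conj 2 = 2 := map_ofNat conj 2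
  have hτ2 : τ 2 = 2 := map_ofNat τ 2
  have hcβ : conj β = (s - t * j) / 2 := by rw [hβ, map_div₀, map_add, map_mul, map_intCast, map_intCast, hc2, hcj]; ring
  have hτβ : τ β = (s - t * j) / 2 := by rw [hβ, map_div₀, map_add, map_mul, map_intCast, map_intCast, hτ2, hτj]; ring
  have hstE : (s : E) ^ 2 + q * t ^ 2 = 4 * l * z ^ 2 := by exact_mod_cast hst
  have hββ : β * τ β = l * z ^ 2 := by
    rw [hτβ, hβ]; linear_combination hstE / 4 - (t : E) ^ 2 / 4 * hj
  -- the operators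
  let X : E → E → E := fun κ v => κ * u * τ v
  have hXadd : ∀ κ v v', X κ (v + v') = X κ v + X κ v' := fun κ v v' => by simp only [X, map_add]; ring
  have hXi : ∀ κ v, IsIntegral ℤ κ → IsIntegral ℤ v → IsIntegral ℤ (X κ v) := fun κ v h1 h2 =>
    (h1.mul hu).mul (h2.map (τ : E →ₐ[ℚ] E))
  have hXX : ∀ κ μ v, X κ (X μ v) = - (κ * τ μ) * v := fun κ μ v => by
    simp only [X, map_mul, hττ]; linear_combination κ * τ μ * v * huτ
  have hXm : ∀ κ m v, τ m = m → X κ (m * v) = m * X κ v := fun κ m v h => by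
    simp only [X, map_mul, h]; ring
  have hXn : ∀ κ (m : ℤ) v, X κ (m * v) = m * X κ v := fun κ m v => hXm _ _ _ (map_intCast τ m)
  let b : E → E → ℚ := fun x y => Algebra.trace ℚ E (d * x * conj y)
  have bl : ∀ x x' y, b (x + x') y = b x y + b x' y := fun x x' y => by
    simp only [b]; rw [← map_add]; congr 1; ring
  have br : ∀ x y y', b x (y + y') = b x y + b x y' := fun x y y' => by
    simp only [b]; rw [← map_add, map_add conj]; congr 1; ring
  have bls : ∀ (r : ℚ) x y, b (r • x) y = r * b x y := fun r x y => by
    simp only [b]; rw [mul_smul_comm, smul_mul_assoc, map_smul, smul_eq_mul]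
  have brs : ∀ (r : ℚ) x y, b x (r • y) = r * b x y := fun r x y => by
    simp only [b]; rw [D1_sm, mul_smul_comm, map_smul, smul_eq_mul]
  have bln : ∀ (n : ℤ) x y, b (n * x) y = n * b x y := fun n x y => by
    rw [← bls]; congr 1; rw [Algebra.smul_def]; simp
  have brn : ∀ (n : ℤ) x y, b x (n * y) = n * b x y := fun n x y => by
    rw [← brs]; congr 1; rw [Algebra.smul_def]; simp
  have bsymm : ∀ x y, b x y = b y x := fun x y => by
    simp only [b]; rw [← D1_tr conj]; congr 1; rw [map_mul, map_mul, hcd, hcc]; ring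
  have bX : ∀ κ x y, conj κ = τ κ → b (X κ x) y = - b x (X κ y) := fun κ x y h => by
    simp only [b, X]; rw [← D1_tr τ, ← map_neg]; congr 1
    have h1 : d * (κ * u * τ x) * conj y = (d * u) * κ * τ x * conj y := by ring
    rw [h1, map_mul, map_mul, map_mul, hdu, hττ, map_mul conj, map_mul conj, hcu, h, hcτ]; ring
  have bint : ∀ x y, IsIntegral ℤ x → IsIntegral ℤ y → ∃ n : ℤ, b x y = n := fun x y hx hy =>
    (hdual y).2 hy x hx
  have bev : ∀ x, IsIntegral ℤ x → ∃ n : ℤ, b x x = 2 * n := fun x hx => by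
    obtain ⟨n, hn⟩ := bint (θ * x) x (hθi.mul hx) hx
    refine ⟨n, ?_⟩
    rw [← hn, two_mul]
    have h1 : b (θ * x) x = b ((1 - θ) * x) x := by
      simp only [b]
      rw [← D1_tr conj]; congr 1
      have h2 : conj θ = 1 - θ := by rw [hθ, map_div₀, map_add, map_one, hc2, hcj]; field_simp; ring
      rw [map_mul, map_mul, map_mul, hcd, hcc, h2]; ring
    nth_rewrite 2 [h1]
    rw [← bl]; congr 1; ring
  let η : E → E := fun v => e * v + X β v
  let η' : E → E := fun v => e * v - X β v
  have bη : ∀ x y, b (η x) y = b x (η' y) := fun x y => by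
    simp only [η, η']
    rw [bl, bln, bX _ _ _ (hcβ.trans hτβ.symm), sub_eq_add_neg, br, brn]
    congr 1
    have := brn (-1) x (X β y)
    push_cast at this
    rw [neg_one_mul, neg_one_mul] at this
    exact this.symm
  have hηi : ∀ v, IsIntegral ℤ v → IsIntegral ℤ (η v) := fun v h => ((hint _).mul h).add (hXi _ _ hβi h)
  have hη'i : ∀ v, IsIntegral ℤ v → IsIntegral ℤ (η' v) := fun v h => ((hint _).mul h).sub (hXi _ _ hβi h)
  have hcE : (e : E) ^ 2 + z ^ 2 * l = N ^ 2 * c := by exact_mod_cast hc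
  have heE : 2 * (e : E) = ε * N := by exact_mod_cast he
  have hη'η : ∀ v, η' (η v) = (N : E) ^ 2 * c * v := fun v => by
    simp only [η, η']
    rw [hXadd, hXn, hXX, hββ]
    linear_combination v * hcE
  have hηadd : ∀ v v', η (v + v') = η v + η v' := fun v v' => by simp only [η, hXadd]; ring
  have hη'add : ∀ v v', η' (v + v') = η' v + η' v' := fun v v' => by simp only [η', hXadd]; ring
  have hX1 : ∀ κ v, X κ ((N : E)⁻¹ * v) = (N : E)⁻¹ * X κ v := fun κ v => hXm _ _ _ (by rw [map_inv₀, map_intCast])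
  have hηN : ∀ v, η ((N : E)⁻¹ * v) = (N : E)⁻¹ * η v := fun v => by simp only [η, hX1]; ring
  have hη'N : ∀ v, η' ((N : E)⁻¹ * v) = (N : E)⁻¹ * η' v := fun v => by simp only [η', hX1]; ring
  let P : AddSubgroup E :=
    { carrier := {v | IsIntegral ℤ (N * v) ∧ IsIntegral ℤ (η' v)}
      zero_mem' := by
        constructor
        · rw [mul_zero]; exact isIntegral_zero
        · simp only [η', X, map_zero, mul_zero, sub_zero]; exact isIntegral_zero
      add_mem' := fun {a b} ha hb => ⟨by rw [mul_add]; exact ha.1.add hb.1, by rw [hη'add]; exact ha.2.add hb.2⟩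
      neg_mem' := fun {a} ha => ⟨by rw [mul_neg]; exact ha.1.neg, by
        have : η' (-a) = - η' a := by simp only [η', X, map_neg]; ring
        rw [this]; exact ha.2.neg⟩ }
  have hP : ∀ v, v ∈ P ↔ IsIntegral ℤ (N * v) ∧ IsIntegral ℤ (η' v) := fun v => Iff.rfl
  have hP1 : ∀ v, IsIntegral ℤ v → v ∈ P := fun v h => ⟨(hint _).mul h, hη'i _ h⟩
  have hP2 : ∀ v, IsIntegral ℤ v → (N : E)⁻¹ * η v ∈ P := fun v h => by
    constructor
    · rw [mul_inv_cancel_left₀ hN0]; exact hηi _ h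
    · rw [hη'N, hη'η]
      have : (N : E)⁻¹ * ((N : E) ^ 2 * c * v) = ((N * c : ℤ) : E) * v := by push_cast; field_simp
      rw [this]; exact (hint _).mul h
  have hdec : ∀ v ∈ P, ∃ a a', IsIntegral ℤ a ∧ IsIntegral ℤ a' ∧ v = a + (N : E)⁻¹ * η a' := fun v hv => by
    set μ : E := -(k1 + k2 * θ) with hμ
    have hμi : IsIntegral ℤ μ := ((hint _).add ((hint _).mul hθi)).neg
    refine ⟨N * v * k0 - X μ (η' v), X μ (N * v), (hv.1.mul (hint _)).sub (hXi _ _ hμi hv.2), hXi _ _ hμi hv.1, ?_⟩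
    have hτμ : τ μ = -(k1 + k2 * ((1 - j) / 2)) := by rw [hμ, hθ, map_neg, map_add, map_mul, map_intCast, map_intCast, map_div₀, map_add, map_one, hτ2, hτj]; ring
    have hkE : (N : E) * k0 + s * k1 + w * k2 = 1 := by exact_mod_cast hk
    have hwE : (s : E) + q * t = 2 * w := by exact_mod_cast hw
    have h1 : X μ (N * v) = N * X μ v := hXn _ _ _
    have h2 : X μ (η' v) = e * X μ v + μ * τ β * v := by
      simp only [η']
      have : X μ (e * v - X β v) = e * X μ v - X μ (X β v) := by
        rw [← hXn, eq_sub_iff_add_eq, ← hXadd, sub_add_cancel]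
      rw [this, hXX]; ring
    have h3 : η (X μ (N * v)) = N * (e * X μ v - β * τ μ * v) := by
      simp only [η]
      rw [hXX, h1]; ring
    rw [h2, h3, inv_mul_cancel_left₀ hN0, hτμ, hτβ, hμ, hθ, hβ]
    linear_combination (-v) * hkE - v * k2 / 2 * hwE + v * k2 * t / 2 * hj
  let W : E →ₗ[ℚ] E :=
    { toFun := fun v => (z : E)⁻¹ * X β v
      map_add' := fun v v' => by rw [hXadd, mul_add]
      map_smul' := fun r v => by
        simp only [X, RingHom.id_apply]
        rw [D1_sm, mul_smul_comm, mul_smul_comm] }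
  have hW : ∀ v, W v = (z : E)⁻¹ * X β v := fun v => rfl
  let B : E →ₗ[ℚ] E →ₗ[ℚ] ℚ := LinearMap.mk₂ ℚ (fun x y => N * b x y)
    (fun x x' y => by rw [bl, mul_add]) (fun r x y => by rw [bls, smul_eq_mul]; ring)
    (fun x x' y => by rw [br, mul_add]) (fun r x y => by rw [brs, smul_eq_mul]; ring)
  have hB : ∀ x y, B x y = N * b x y := fun x y => rfl
  have hNQp : (0 : ℚ) < N := by exact_mod_cast hN
  have hzm : ∀ v, (z : E)⁻¹ * v = ((z : ℚ)⁻¹) • v := fun v => by rw [Algebra.smul_def]; simp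
  have hNm : ∀ v, (N : E)⁻¹ * v = ((N : ℚ)⁻¹) • v := fun v => by rw [Algebra.smul_def]; simp
  have hBη : ∀ a' y, N * b ((N : E)⁻¹ * η a') y = b a' (η' y) := fun a' y => by
    rw [hNm, bls, bη]; field_simp
  refine ⟨W, P, B, ?_, ?_, ?_, ?_, ?_, ?_, ?_, ?_, ?_, ?_, ?_⟩
  · intro m x hm
    rw [hW, hW, hXm _ _ _ hm]; ring
  · intro x
    rw [hW, hW, hXm _ _ _ (by rw [map_inv₀, map_intCast]), hXX, hββ]
    field_simp
  · intro x y
    rw [hB, hB, hW, hW, hzm, hzm, bls, brs, bX _ _ _ (hcβ.trans hτβ.symm)]; ring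
  · intro x y
    rw [hB, hB]
    congr 1
    simp only [b]
    congr 1
    rw [map_mul, map_inv₀, hcζ, inv_inv]; ring
  · intro x y
    rw [hB, hB, bsymm]
  · intro x hx
    rw [hB]
    exact mul_pos hNQp (hpos x hx)
  · intro x hx
    obtain ⟨a, a', ha, ha', h⟩ := hdec x hx
    obtain ⟨n1, h1⟩ := bev a ha
    obtain ⟨n2, h2⟩ := bint _ _ ha (hηi _ ha')
    obtain ⟨n3, h3⟩ := bev a' ha'
    refine ⟨N * n1 + n2 + N * c * n3, ?_⟩
    have h4 : b ((N : E)⁻¹ * η a') ((N : E)⁻¹ * η a') = c * b a' a' := by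
      have := hBη a' ((N : E)⁻¹ * η a')
      rw [hη'N, hη'η] at this
      have e1 : (N : E)⁻¹ * ((N : E) ^ 2 * c * a') = ((N * c : ℤ) : E) * a' := by push_cast; field_simp
      rw [e1, brn] at this
      push_cast at this
      have h5 : (N : ℚ) * (b ((N : E)⁻¹ * η a') ((N : E)⁻¹ * η a') - c * b a' a') = 0 := by linear_combination this
      rcases mul_eq_zero.1 h5 with h6 | h6
      · exact absurd h6 hNQ
      · linear_combination h6
    have h5 : (N : ℚ) * b a ((N : E)⁻¹ * η a') = b a (η a') := by
      rw [hNm, brs]; field_simp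
    have h6 : b ((N : E)⁻¹ * η a') a = b a ((N : E)⁻¹ * η a') := bsymm _ _
    rw [hB]
    conv_lhs => rw [h]
    rw [bl, br, br, h4, h6]
    push_cast
    linear_combination (N : ℚ) * h1 + 2 * h2 + N * c * h3 + 2 * h5
  · intro y
    constructor
    · intro H
      constructor
      · rw [← hdual]
        intro x hx
        obtain ⟨n, hn⟩ := H x (hP1 x hx)
        exact ⟨n, by rw [← hn, hB, ← brn]⟩
      · rw [← hdual]
        intro x hx
        obtain ⟨n, hn⟩ := H _ (hP2 x hx)
        exact ⟨n, by rw [← hn, hB, hBη]⟩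
    · intro hy x hx
      obtain ⟨a, a', ha, ha', h⟩ := hdec x hx
      obtain ⟨n1, h1⟩ := bint a _ ha hy.1
      obtain ⟨n2, h2⟩ := bint a' _ ha' hy.2
      refine ⟨n1 + n2, ?_⟩
      rw [hB, h, bl, mul_add, hBη, h2, ← brn, h1]; push_cast; rfl
  · intro m hm hmi x hx
    constructor
    · rw [mul_left_comm]; exact hmi.mul hx.1
    · have : η' (m * x) = m * η' x := by simp only [η', hXm _ _ _ hm]; ring
      rw [this]; exact hmi.mul hx.2
  · intro x hx
    have e1 : ((e : E) * x + z * W x) / N = (N : E)⁻¹ * η x := by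
      rw [hW, mul_inv_cancel_left₀ hz0, div_eq_inv_mul]
    rw [e1]
    constructor
    · rw [mul_inv_cancel_left₀ hN0]
      have : η x = ε * (N * x) - η' x := by
        simp only [η, η']; linear_combination x * heE
      rw [this]
      exact ((hint _).mul hx.1).sub hx.2
    · rw [hη'N, hη'η]
      have : (N : E)⁻¹ * ((N : E) ^ 2 * c * x) = c * (N * x) := by field_simp
      rw [this]; exact (hint _).mul hx.1
  · intro x hx
    exact hx.1

end stepD1
end File_d1

section File_d2
open IntermediateField NumberField

section stepD2

lemma D2 (l p : ℕ) (hl : 0 < l) (hp : p.Prime) (hp1 : p % 4 = 1) (hpl : ¬ p ∣ l)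
    (h4 : l % 4 = 3 ∨ l % 4 = 1 ∨ l % 4 = 2) :
    ∃ (E : Type) (_ : Field E) (_ : NumberField E) (ζ : E) (τ : E ≃ₐ[ℚ] E) (N : ℤ)
      (W : E →ₗ[ℚ] E) (P : AddSubgroup E) (B : E →ₗ[ℚ] E →ₗ[ℚ] ℚ), IsPrimitiveRoot ζ p ∧
      Module.finrank ℚ E = 2 * (p - 1) ∧ τ ζ = ζ ∧ N ≠ 0 ∧ 
      (∀ m x, τ m = m → W (m * x) = m * W x) ∧ (∀ x, W (W x) = -(l : E) * x) ∧
      (∀ x y, B (W x) y = - B x (W y)) ∧ (∀ x y, B (ζ * x) y = B x (ζ⁻¹ * y)) ∧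
      (∀ x y, B x y = B y x) ∧ (∀ x, x ≠ 0 → 0 < B x x) ∧ (∀ x ∈ P, ∃ n : ℤ, B x x = 2 * n) ∧
      (∀ y, (∀ x ∈ P, ∃ n : ℤ, B x y = n) ↔ y ∈ P) ∧
      (∀ m, τ m = m → IsIntegral ℤ m → ∀ x ∈ P, m * x ∈ P) ∧
      (l % 4 = 3 → ∀ x ∈ P, (x + W x) / 2 ∈ P) ∧ (l % 4 = 1 ∨ l % 4 = 2 → ∀ x ∈ P, W x ∈ P) ∧
      (∀ x ∈ P, IsIntegral ℤ ((N : E) * x)) := by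
  obtain ⟨q, hq, hq3, hqp, hqn, s, t, z, w, hz, hst, hw, hk, hk'⟩ := stepC l p hl hp hp1 hpl
  obtain ⟨E, iF, iN, j, ζ, u, conj, τ, hζ, hj, hgen, hcj, hcζ, hτj, hτζ, hσ, hu, huτ, hcu⟩ :=
    stepA p q hp hp1 hq hq3 hqp hqn
  obtain ⟨d, u', hcd, hcu', hu', huτ', hdu, hpos, hdual⟩ :=
    stepB hp hp1 hq hq3 hqp conj τ hζ hj hgen hcj hcζ hτj hτζ hσ hu huτ hcu
  have hext : ∀ f g : E →ₐ[ℚ] E, f j = g j → f ζ = g ζ → ∀ x, f x = g x := by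
    intro f g h1 h2 x
    rw [L0_ext hgen f g h1 h2]
  have hcc : ∀ x, conj (conj x) = x := hext ((conj : E →ₐ[ℚ] E).comp (conj : E →ₐ[ℚ] E)) (AlgHom.id ℚ E)
    (by change conj (conj j) = j; rw [hcj, map_neg, hcj, neg_neg])
    (by change conj (conj ζ) = ζ; rw [hcζ, map_inv₀, hcζ, inv_inv])
  have hττ : ∀ x, τ (τ x) = x := hext ((τ : E →ₐ[ℚ] E).comp (τ : E →ₐ[ℚ] E)) (AlgHom.id ℚ E)
    (by change τ (τ j) = j; rw [hτj, map_neg, hτj, neg_neg])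
    (by change τ (τ ζ) = ζ; rw [hτζ, hτζ])
  have hcτ : ∀ x, conj (τ x) = τ (conj x) := hext ((conj : E →ₐ[ℚ] E).comp (τ : E →ₐ[ℚ] E)) ((τ : E →ₐ[ℚ] E).comp (conj : E →ₐ[ℚ] E))
    (by change conj (τ j) = τ (conj j); rw [hτj, map_neg, hcj, map_neg, hτj])
    (by change conj (τ ζ) = τ (conj ζ); rw [hτζ, hcζ, map_inv₀, hτζ])
  have hnm := L0_notmem hp hp1 hζ hq.pos hj conj hcj hcζ
  have hfr := L0_finrank hp hζ hj hnm hgen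
  have hz0 : (z : E) ≠ 0 := by exact_mod_cast hz.ne'
  rcases h4 with h4 | h4
  · obtain ⟨k0, k1, k2, hk⟩ := hk' (by omega)
    obtain ⟨c, hc⟩ : ∃ c : ℤ, 1 + (l : ℤ) = 4 * c := ⟨(1 + l) / 4, by omega⟩
    obtain ⟨W, P, B, h1, h2, h3, h5, h6, h7, h8, h9, h10, h11, h12⟩ :=
      D1_core (l := l) hq3 conj τ hj hcc hττ hcτ hcj hcζ hτj hcd hcu' hu' huτ' hdu hpos hdual s t z w z (2 * z) c 1 k0 k1 k2
        hz (by omega) hst hw hk (by linear_combination z ^ 2 * hc) (by ring)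
    refine ⟨E, iF, iN, ζ, τ, 2 * z, W, P, B, hζ, hfr, hτζ, by omega, h1, h2, h3, h5, h6, h7, h8, h9, h10, ?_, fun h => absurd h (by omega), h12⟩
    intro _ x hx
    have := h11 x hx
    have e : ((z : E) * x + z * W x) / ((2 * z : ℤ) : E) = (x + W x) / 2 := by push_cast; field_simp
    rwa [e] at this
  · obtain ⟨k0, k1, k2, hk⟩ := hk
    obtain ⟨W, P, B, h1, h2, h3, h5, h6, h7, h8, h9, h10, h11, h12⟩ :=
      D1_core (l := l) hq3 conj τ hj hcc hττ hcτ hcj hcζ hτj hcd hcu' hu' huτ' hdu hpos hdual s t z w 0 z l 0 k0 k1 k2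
        hz hz hst hw hk (by ring) (by ring)
    refine ⟨E, iF, iN, ζ, τ, z, W, P, B, hζ, hfr, hτζ, by omega, h1, h2, h3, h5, h6, h7, h8, h9, h10, fun h => absurd h (by omega), ?_, h12⟩
    intro _ x hx
    have := h11 x hx
    have e : (((0 : ℤ) : E) * x + z * W x) / (z : E) = W x := by push_cast; field_simp; ring
    rwa [e] at this

end stepD2
end File_d2

section File_d3
open IntermediateField NumberField

section stepD3
variable {K : Type} [Field K] [NumberField K] {p l : ℕ} {α ζ : K}

lemma D3_pos (hp : p.Prime) (hζ : IsPrimitiveRoot ζ p) (hα : α ^ 2 = -(l : K))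
    (hgen : IntermediateField.adjoin ℚ {α, ζ} = ⊤) (conj : K ≃ₐ[ℚ] K) (hcα : conj α = -α) (hcζ : conj ζ = ζ⁻¹)
    (d : K) (hd : conj d = d) (hpos : ∀ x, x ≠ 0 → 0 < Algebra.trace ℚ K (d * x * conj x)) (ψ : K →ₐ[ℚ] ℂ) :
    0 < (ψ d).re := by
  have h3 : ∀ x, ((Algebra.trace ℚ K (d * x * conj x) : ℚ) : ℝ) = ∑ φ : K →ₐ[ℚ] ℂ, (φ d).re * ‖φ x‖ ^ 2 := by
    intro x
    have h := trace_eq_sum_embeddings (K := ℚ) ℂ (x := d * x * conj x)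
    have h2 : (algebraMap ℚ ℂ) (Algebra.trace ℚ K (d * x * conj x)) = ((∑ φ : K →ₐ[ℚ] ℂ, (φ d).re * ‖φ x‖ ^ 2 : ℝ) : ℂ) := by
      rw [h, Complex.ofReal_sum]
      apply Finset.sum_congr rfl
      intro φ _
      rw [map_mul, map_mul, B2_star hp hζ hα hgen conj hcα hcζ φ x, Complex.ofReal_mul, ← B2_real hp hζ hα hgen conj hcα hcζ φ d hd,
        mul_assoc, ← Complex.normSq_eq_norm_sq]
      congr 1
      exact Complex.mul_conj _
    have : (((Algebra.trace ℚ K (d * x * conj x) : ℚ) : ℝ) : ℂ) = ((∑ φ : K →ₐ[ℚ] ℂ, (φ d).re * ‖φ x‖ ^ 2 : ℝ) : ℂ) := by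
      rw [← h2]; simp
    exact_mod_cast this
  have hd0 : d ≠ 0 := by
    rintro rfl
    have := hpos 1 one_ne_zero
    simp at this
  by_contra hneg
  have hneg' : (ψ d).re < 0 := by
    refine lt_of_le_of_ne (not_lt.1 hneg) (fun h0 => ?_)
    have := B2_real hp hζ hα hgen conj hcα hcζ ψ d hd
    rw [h0, Complex.ofReal_zero] at this
    exact hd0 ((map_eq_zero ψ).1 this)
  let mk : (K →ₐ[ℚ] ℂ) → InfinitePlace K := fun φ => InfinitePlace.mk (φ : K →+* ℂ)
  have hcont : Continuous (fun y : (v : InfinitePlace K) → WithAbs v.1 => ∑ φ : K →ₐ[ℚ] ℂ, (φ d).re * ‖y (mk φ)‖ ^ 2) := by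
    fun_prop
  have hall : ∀ y : (v : InfinitePlace K) → WithAbs v.1, 0 ≤ ∑ φ : K →ₐ[ℚ] ℂ, (φ d).re * ‖y (mk φ)‖ ^ 2 := by
    intro y
    refine (InfinitePlace.denseRange_algebraMap_pi K).induction_on (p := fun y => 0 ≤ ∑ φ : K →ₐ[ℚ] ℂ, (φ d).re * ‖y (mk φ)‖ ^ 2) y
      (isClosed_le continuous_const hcont) ?_
    intro x
    have e : ∑ φ : K →ₐ[ℚ] ℂ, (φ d).re * ‖(algebraMap K ((v : InfinitePlace K) → WithAbs v.1) x) (mk φ)‖ ^ 2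
        = ∑ φ : K →ₐ[ℚ] ℂ, (φ d).re * ‖φ x‖ ^ 2 := rfl
    rw [e, ← h3]
    by_cases hx : x = 0
    · rw [hx]; simp
    · exact_mod_cast (hpos x hx).le
  classical
  have h5 := hall (Pi.single (mk ψ) 1)
  have h6 : ∑ φ : K →ₐ[ℚ] ℂ, (φ d).re * ‖(Pi.single (mk ψ) 1 : (v : InfinitePlace K) → WithAbs v.1) (mk φ)‖ ^ 2 < 0 := by
    apply Finset.sum_neg'
    · intro φ _
      by_cases h : mk φ = mk ψ
      · have h7 : (φ d).re = (ψ d).re := by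
          rcases InfinitePlace.mk_eq_iff.1 h with h | h
          · exact congrArg Complex.re (RingHom.congr_fun h d)
          · have := congrArg Complex.re (RingHom.congr_fun h d)
            rw [ComplexEmbedding.conjugate_coe_eq, Complex.conj_re] at this
            exact this
        rw [h7]
        exact mul_nonpos_of_nonpos_of_nonneg hneg'.le (sq_nonneg _)
      · rw [Pi.single_eq_of_ne h]; simp
    · refine ⟨ψ, Finset.mem_univ _, ?_⟩
      rw [Pi.single_eq_same, norm_one]; simpa using hneg'
  linarith

end stepD3
end File_d3

section File_d4
open IntermediateField NumberField Polynomial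

section stepD4
variable {K : Type} [Field K] [NumberField K] {p l : ℕ} {α ζ : K} {E : Type} [Field E] [NumberField E] {ζ' : E}

lemma D4_f (hp : p.Prime) (hζ : IsPrimitiveRoot ζ p) (hζ' : IsPrimitiveRoot ζ' p) :
    ∃ f : ℚ⟮ζ⟯ →ₐ[ℚ] E, f (AdjoinSimple.gen ℚ ζ) = ζ' := by
  have hi : IsIntegral ℚ ζ := Algebra.IsIntegral.isIntegral ζ
  have hr : ζ' ∈ (minpoly ℚ ζ).aroots E := by
    rw [mem_aroots]
    refine ⟨minpoly.ne_zero hi, ?_⟩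
    rw [← cyclotomic_eq_minpoly_rat hζ hp.pos, cyclotomic_eq_minpoly_rat hζ' hp.pos]
    exact minpoly.aeval _ _
  exact ⟨(algHomAdjoinIntegralEquiv ℚ hi).symm ⟨ζ', hr⟩, algHomAdjoinIntegralEquiv_symm_apply_gen ℚ hi _⟩

lemma D4_tau (f : ℚ⟮ζ⟯ →ₐ[ℚ] E) (hf : f (AdjoinSimple.gen ℚ ζ) = ζ') (τ : E ≃ₐ[ℚ] E) (hτ : τ ζ' = ζ') (m : ℚ⟮ζ⟯) :
    τ (f m) = f m := by
  have : (τ : E →ₐ[ℚ] E).comp f = f := by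
    refine IntermediateField.algHom_ext_of_eq_adjoin ℚ (S := ℚ⟮ζ⟯) (s := ({ζ} : Set K)) rfl ?_
    intro x hx
    obtain rfl : x = ζ := hx
    change τ (f (AdjoinSimple.gen ℚ x)) = f (AdjoinSimple.gen ℚ x)
    rw [hf, hτ]
  exact congrArg (fun g : ℚ⟮ζ⟯ →ₐ[ℚ] E => g m) this

lemma D4_psi (hα : α ^ 2 = -(l : K)) (hnm : α ∉ ℚ⟮ζ⟯)
    (hgen : IntermediateField.adjoin ℚ {α, ζ} = ⊤) (hfr : Module.finrank ℚ K = Module.finrank ℚ E)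
    (f : ℚ⟮ζ⟯ →ₐ[ℚ] E) (W : E →ₗ[ℚ] E) (hW : ∀ m x, W (f m * x) = f m * W x) (hWW : ∀ x, W (W x) = -(l : E) * x) :
    ∃ Ψ : K ≃ₗ[ℚ] E, (∀ (m : ℚ⟮ζ⟯) x, Ψ (m * x) = f m * Ψ x) ∧ ∀ x, Ψ (α * x) = W (Ψ x) := by
  letI : Algebra ℚ⟮ζ⟯ E := f.toRingHom.toAlgebra
  have hsm : ∀ (m : ℚ⟮ζ⟯) (x : E), m • x = f m * x := fun m x => Algebra.smul_def m x
  let W' : Module.End ℚ⟮ζ⟯ E :=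
    { toFun := W
      map_add' := map_add W
      map_smul' := fun m x => by rw [hsm, hW, RingHom.id_apply, hsm] }
  have hW' : ∀ x, W' x = W x := fun x => rfl
  have h0 : aeval W' (minpoly ℚ⟮ζ⟯ (L0_pb hgen).gen) = 0 := by
    rw [L0_pb_gen, L0_minpoly hα hnm]
    ext x
    simp only [map_add, map_pow, aeval_X, aeval_C, LinearMap.add_apply, LinearMap.zero_apply]
    rw [pow_two, Module.End.mul_apply, hW', hW', hWW, Module.algebraMap_end_apply, hsm, map_natCast]
    ring
  have h1 := (L0_pb hgen).lift_gen W' h0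
  generalize (L0_pb hgen).lift W' h0 = ρ at h1
  rw [L0_pb_gen] at h1
  have hρm : ∀ (m : ℚ⟮ζ⟯) (x : K) (y : E), ρ (m * x) y = f m * ρ x y := by
    intro m x y
    have : ρ ((algebraMap ℚ⟮ζ⟯ K m) * x) y = f m * ρ x y := by
      rw [map_mul, AlgHom.commutes, Module.End.mul_apply, Module.algebraMap_end_apply, hsm]
    exact this
  let Ψ0 : K →ₗ[ℚ] E :=
    { toFun := fun x => ρ x 1
      map_add' := fun x y => by rw [map_add]; rfl
      map_smul' := fun r x => by
        have := hρm (r : ℚ⟮ζ⟯) x 1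
        rw [map_ratCast] at this
        rw [RingHom.id_apply, Algebra.smul_def, Algebra.smul_def, eq_ratCast, eq_ratCast, ← this]
        rfl }
  have hΨ0 : ∀ x, Ψ0 x = ρ x 1 := fun x => rfl
  have hinj : Function.Injective Ψ0 := by
    rw [← LinearMap.ker_eq_bot, LinearMap.ker_eq_bot']
    intro x hx
    by_contra hne
    rw [hΨ0] at hx
    have h2 : ρ (x⁻¹ * x) 1 = 0 := by rw [map_mul, Module.End.mul_apply, hx, map_zero]
    rw [inv_mul_cancel₀ hne, map_one ρ] at h2
    exact one_ne_zero h2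
  refine ⟨LinearEquiv.ofInjectiveOfFinrankEq Ψ0 hinj hfr, ?_, ?_⟩
  · intro m x
    exact hρm m x 1
  · intro x
    change ρ (α * x) 1 = W (ρ x 1)
    rw [map_mul, h1]; rfl

end stepD4
end File_d4

section File_d5
open IntermediateField NumberField Polynomial
open scoped nonZeroDivisors

section stepD5
variable {K : Type} [Field K] [NumberField K] {p l : ℕ} {α ζ : K}

lemma D5 (hl : 0 < l) (hsq : Squarefree l) (h4 : l % 4 = 3 ∨ l % 4 = 1 ∨ l % 4 = 2)
    (hp : p.Prime) (hp1 : p % 4 = 1) (hpl : ¬ p ∣ l) (hζ : IsPrimitiveRoot ζ p) (hα : α ^ 2 = -(l : K))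
    (hgen : IntermediateField.adjoin ℚ {α, ζ} = ⊤) (conj : K ≃ₐ[ℚ] K) (hcα : conj α = -α) (hcζ : conj ζ = ζ⁻¹) :
    ∃ (𝒜 : FractionalIdeal (𝓞 K)⁰ K) (d : K), 𝒜 ≠ 0 ∧ conj d = d ∧ (∀ ψ : K →ₐ[ℚ] ℂ, 0 < (ψ d).re) ∧
      (∀ x ∈ 𝒜, ∃ n : ℤ, Algebra.trace ℚ K (d * x * conj x) = 2 * n) ∧
      (∀ x, x ≠ 0 → 0 < Algebra.trace ℚ K (d * x * conj x)) ∧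
      (∀ y, (∀ x ∈ 𝒜, ∃ n : ℤ, Algebra.trace ℚ K (d * x * conj y) = n) ↔ y ∈ 𝒜) ∧
      Module.finrank ℚ K = 2 * (p - 1) := by
  obtain ⟨E, iF, iN, ζ', τ, N, W, P, B, hζ', hfrE, hτ, hN, h1, h2, h3, h5, h6, h7, h8, h9, h10, h11, h12, h13⟩ :=
    D2 l p hl hp hp1 hpl h4
  have hnm := L0_notmem hp hp1 hζ hl hα conj hcα hcζ
  have hfr := L0_finrank hp hζ hα hnm hgen
  obtain ⟨f, hf⟩ := D4_f (E := E) hp hζ hζ'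
  have hτf := D4_tau f hf τ hτ
  obtain ⟨Ψ, hΨm, hΨα⟩ := D4_psi hα hnm hgen (hfr.trans hfrE.symm) f W (fun m x => h1 _ _ (hτf m)) h2
  have hcc : ∀ x, conj (conj x) = x := fun x => by
    have := L0_ext hgen ((conj : K →ₐ[ℚ] K).comp (conj : K →ₐ[ℚ] K)) (AlgHom.id ℚ K)
      (by change conj (conj α) = α; rw [hcα, map_neg, hcα, neg_neg])
      (by change conj (conj ζ) = ζ; rw [hcζ, map_inv₀, hcζ, inv_inv])
    exact congrArg (fun f : K →ₐ[ℚ] K => f x) this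
  have hadj : ∀ κ x y, B (Ψ (κ * x)) (Ψ y) = B (Ψ x) (Ψ (conj κ * y)) := by
    intro κ
    have hκ : κ ∈ IntermediateField.adjoin ℚ {α, ζ} := by rw [hgen]; trivial
    induction hκ using IntermediateField.adjoin_induction with
    | mem κ hκ =>
      intro x y
      rcases hκ with rfl | hκ
      · rw [hΨα, h3, hcα, neg_mul, map_neg, hΨα, map_neg]
      · obtain rfl : κ = ζ := hκ
        have e1 := hΨm (AdjoinSimple.gen ℚ κ) x
        have e2 := hΨm (AdjoinSimple.gen ℚ κ)⁻¹ y
        rw [map_inv₀, hf] at e2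
        rw [hf] at e1
        have e3 : ((AdjoinSimple.gen ℚ κ : ℚ⟮κ⟯) : K) = κ := AdjoinSimple.coe_gen ℚ κ
        rw [IntermediateField.coe_inv, e3] at e2
        rw [e3] at e1
        rw [e1, hcζ, e2, h5]
    | algebraMap r =>
      intro x y
      rw [AlgEquiv.commutes, ← Algebra.smul_def, ← Algebra.smul_def, map_smul, map_smul, map_smul, map_smul, LinearMap.smul_apply]
    | add a b _ _ ha hb =>
      intro x y
      rw [add_mul, map_add, map_add, LinearMap.add_apply, ha, hb, map_add, add_mul, map_add, map_add]
    | inv a _ ha =>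
      intro x y
      by_cases h0 : a = 0
      · simp [h0]
      · have e1 : y = conj a * (conj a⁻¹ * y) := by
          rw [map_inv₀, mul_inv_cancel_left₀ ((map_ne_zero conj).2 h0)]
        conv_lhs => rw [e1]
        rw [← ha, mul_inv_cancel_left₀ h0]
    | mul a b _ _ ha hb =>
      intro x y
      have e : conj b * (conj a * y) = conj (a * b) * y := by rw [map_mul]; ring
      rw [mul_assoc, ha, hb, e]
  -- the element d
  obtain ⟨d, hd⟩ : ∃ d : K, ∀ κ, Algebra.trace ℚ K (d * κ) = B (Ψ κ) (Ψ 1) := by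
    let T : K →ₗ[ℚ] ℚ := (B.flip (Ψ 1)).comp (Ψ : K →ₗ[ℚ] E)
    refine ⟨((Algebra.traceForm ℚ K).toDual (traceForm_nondegenerate ℚ K)).symm T, fun κ => ?_⟩
    exact LinearMap.BilinForm.apply_toDual_symm_apply (hB := traceForm_nondegenerate ℚ K) T κ
  have hdB : ∀ x y, Algebra.trace ℚ K (d * x * conj y) = B (Ψ x) (Ψ y) := by
    intro x y
    rw [mul_assoc, hd, mul_comm x, hadj, hcc, mul_one]
  have htr : ∀ x, Algebra.trace ℚ K (conj x) = Algebra.trace ℚ K x := fun x => Algebra.trace_eq_of_algEquiv conj x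
  have hcd : conj d = d := by
    have hz : ∀ x, Algebra.trace ℚ K ((conj d - d) * x) = 0 := by
      intro x
      have e1 := hdB x 1
      have e2 := hdB 1 x
      rw [h6, ← e1, map_one, mul_one, mul_one, ← htr, map_mul, hcc] at e2
      rw [sub_mul, map_sub, e2, sub_self]
    by_contra hne
    have := hz (conj d - d)⁻¹
    rw [mul_inv_cancel₀ (sub_ne_zero.2 hne), show (1 : K) = algebraMap ℚ K 1 by simp, Algebra.trace_algebraMap, hfr] at this
    have h2 := hp.two_le
    have h3 : 2 * (p - 1) ≠ 0 := by omega
    simp only [nsmul_eq_mul, mul_one] at this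
    exact h3 (by exact_mod_cast this)
  have hposd : ∀ x, x ≠ 0 → 0 < Algebra.trace ℚ K (d * x * conj x) := by
    intro x hx
    rw [hdB]
    exact h7 _ (by rwa [Ne, LinearEquiv.map_eq_zero_iff])
  -- stability
  have hst0 : ∀ a ∈ Algebra.adjoin ℤ {ζ}, ∀ x, Ψ x ∈ P → Ψ (a * x) ∈ P := by
    intro a ha x hx
    have e := hΨm ⟨a, B1_adj_le ha⟩ x
    change Ψ (a * x) = _ at e
    rw [e]
    refine h10 _ (hτf _) ?_ _ hx
    have hi := B1_adj_int hp hζ ha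
    have : IsIntegral ℤ (⟨a, B1_adj_le ha⟩ : ℚ⟮ζ⟯) := by
      rw [← isIntegral_algebraMap_iff (B := K) (algebraMap ℚ⟮ζ⟯ K).injective]
      exact hi
    exact this.map f
  have hst : ∀ a, IsIntegral ℤ a → ∀ x, Ψ x ∈ P → Ψ (a * x) ∈ P := by
    intro a ha x hx
    rcases h4 with h4 | h4
    · obtain ⟨b, hb, c, hc, rfl⟩ := L1_odd hp (by omega) hζ hl hsq hpl hα hnm h4 hgen a ha
      rw [add_mul, map_add, mul_assoc]
      refine add_mem (hst0 b hb x hx) (hst0 c hc _ ?_)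
      have e : Ψ ((1 + α) / 2 * x) = (Ψ x + W (Ψ x)) / 2 := by
        have e1 : (1 + α) / 2 * x = (2⁻¹ : ℚ) • (x + α * x) := by
          rw [Algebra.smul_def]; simp; ring
        rw [e1, map_smul, map_add, hΨα, Algebra.smul_def]; simp; ring
      rw [e]
      exact h11 h4 _ hx
    · obtain ⟨b, hb, c, hc, rfl⟩ := L1_even hp (by omega) hζ hl hsq hpl hα hnm h4 hgen a ha
      rw [add_mul, map_add, mul_assoc]
      refine add_mem (hst0 b hb x hx) (hst0 c hc _ ?_)
      rw [hΨα]
      exact h12 h4 _ hx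
  let A : Submodule (𝓞 K) K :=
    { carrier := {x | Ψ x ∈ P}
      zero_mem' := by change Ψ 0 ∈ P; rw [map_zero]; exact zero_mem _
      add_mem' := fun {a b} ha hb => by change Ψ (a + b) ∈ P; rw [map_add]; exact add_mem ha hb
      smul_mem' := fun c x hx => hst (c : K) c.isIntegral_coe x hx }
  have hA : ∀ x, x ∈ A ↔ Ψ x ∈ P := fun x => Iff.rfl
  have hfg : A.FG := by
    let g0 : A →+ 𝓞 E := AddMonoidHom.mk' (fun x => (⟨(N : E) * Ψ x, h13 _ x.2⟩ : 𝓞 E)) (by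
      intro x y
      apply RingOfIntegers.ext
      change (N : E) * Ψ ((x : K) + y) = (N : E) * Ψ x + (N : E) * Ψ y
      rw [map_add, mul_add])
    let g : A →ₗ[ℤ] 𝓞 E := g0.toIntLinearMap
    have hg : Function.Injective g := by
      intro x y hxy
      have h := congrArg (fun z : 𝓞 E => (z : E)) hxy
      change (N : E) * Ψ x = (N : E) * Ψ y at h
      have := mul_left_cancel₀ (by exact_mod_cast hN) h
      exact Subtype.ext (Ψ.injective this)
    have : Module.Finite ℤ A := Module.Finite.of_injective g hg
    have : Module.Finite (𝓞 K) A := Module.Finite.of_restrictScalars_finite ℤ (𝓞 K) A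
    exact Module.Finite.iff_fg.1 this
  let 𝒜 : FractionalIdeal (𝓞 K)⁰ K := ⟨A, FractionalIdeal.isFractional_of_fg hfg⟩
  have h𝒜 : ∀ x, x ∈ 𝒜 ↔ Ψ x ∈ P := fun x => Iff.rfl
  refine ⟨𝒜, d, ?_, hcd, D3_pos hp hζ hα hgen conj hcα hcζ d hcd hposd, ?_, hposd, ?_, hfr⟩
  · intro h0
    have hall : ∀ x ∈ P, x = 0 := by
      intro x hx
      have : Ψ.symm x ∈ 𝒜 := by rw [h𝒜, LinearEquiv.apply_symm_apply]; exact hx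
      rw [h0, FractionalIdeal.mem_zero_iff] at this
      simpa using this
    have : (1 : E) ∈ P := by
      rw [← h9]
      intro x hx
      exact ⟨0, by rw [hall x hx]; simp⟩
    exact one_ne_zero (hall 1 this)
  · intro x hx
    rw [hdB]
    exact h8 _ hx
  · intro y
    rw [h𝒜, ← h9]
    constructor
    · intro H x hx
      obtain ⟨n, hn⟩ := H (Ψ.symm x) (by rw [h𝒜, LinearEquiv.apply_symm_apply]; exact hx)
      rw [hdB, LinearEquiv.apply_symm_apply] at hn
      exact ⟨n, hn⟩
    · intro H x hx
      obtain ⟨n, hn⟩ := H (Ψ x) hx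
      exact ⟨n, by rw [hdB, hn]⟩

end stepD5
end File_d5

open NumberField
open scoped nonZeroDivisors

lemma fin_ext {F K : Type} [Field F] [Field K] [Algebra F K] [Algebra.IsAlgebraic F K] (φ : F →+* ℂ) :
    ∃ ψ : K →+* ℂ, ∀ x, ψ (algebraMap F K x) = φ x := by
  letI : Algebra F ℂ := φ.toAlgebra
  exact ⟨((IsAlgClosed.lift : K →ₐ[F] ℂ) : K →+* ℂ), fun x => (IsAlgClosed.lift : K →ₐ[F] ℂ).commutes x⟩

/-- There exist a fractional `O_K`-ideal `𝒜` and a totally positive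
`d ∈ F` such that `b_d(x,y) = Tr_{K/ℚ}(d x ȳ)` makes `(𝒜, b_d)` a positive definite even
unimodular `ℤ`-lattice of rank `2(p-1)`. -/
theorem exists_even_unimodular_ideal_lattice (ℓ : ℕ) (hℓpos : 0 < ℓ)
    (hfund : (ℓ % 4 = 3 ∧ Squarefree ℓ) ∨
      ∃ m : ℕ, ℓ = 4 * m ∧ Squarefree m ∧ (m % 4 = 1 ∨ m % 4 = 2))
    (p : ℕ) (hp : p.Prime) (hp1 : p % 4 = 1) (hpℓ : ¬ p ∣ ℓ)
    (K : Type) [Field K] [NumberField K]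
    (α ζ : K) (hα : α ^ 2 = -(ℓ : K)) (hζ : IsPrimitiveRoot ζ p)
    (hgen : IntermediateField.adjoin ℚ {α, ζ} = ⊤)
    (conj : K ≃ₐ[ℚ] K) (hconjα : conj α = -α) (hconjζ : conj ζ = ζ⁻¹)
    (F : IntermediateField ℚ K)
    (hF : F = IntermediateField.fixedField (Subgroup.zpowers conj)) :
    ∃ (𝒜 : FractionalIdeal (𝓞 K)⁰ K) (d : F), 𝒜 ≠ 0 ∧
      (∀ φ : F →+* ℝ, 0 < φ d) ∧
      (∀ x ∈ 𝒜, ∃ n : ℤ, Algebra.trace ℚ K ((d : K) * x * conj x) = 2 * (n : ℚ)) ∧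
      (∀ x ∈ 𝒜, x ≠ 0 → 0 < Algebra.trace ℚ K ((d : K) * x * conj x)) ∧
      ({y : K | ∀ x ∈ 𝒜, ∃ n : ℤ, Algebra.trace ℚ K ((d : K) * x * conj y) = (n : ℚ)} =
        {y : K | y ∈ 𝒜}) ∧
      Module.finrank ℚ K = 2 * (p - 1) := by
  have main : ∃ (𝒜 : FractionalIdeal (𝓞 K)⁰ K) (d : K), 𝒜 ≠ 0 ∧ conj d = d ∧
      (∀ ψ : K →ₐ[ℚ] ℂ, 0 < (ψ d).re) ∧
      (∀ x ∈ 𝒜, ∃ n : ℤ, Algebra.trace ℚ K (d * x * conj x) = 2 * n) ∧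
      (∀ x, x ≠ 0 → 0 < Algebra.trace ℚ K (d * x * conj x)) ∧
      (∀ y, (∀ x ∈ 𝒜, ∃ n : ℤ, Algebra.trace ℚ K (d * x * conj y) = n) ↔ y ∈ 𝒜) ∧
      Module.finrank ℚ K = 2 * (p - 1) := by
    rcases hfund with ⟨h3, hsq⟩ | ⟨m, rfl, hsq, h4⟩
    · exact D5 hℓpos hsq (Or.inl h3) hp hp1 hpℓ hζ hα hgen conj hconjα hconjζ
    · refine D5 (l := m) (α := α / 2) (by omega) hsq (Or.inr h4) hp hp1
        (fun h => hpℓ (h.mul_left 4)) hζ ?_ ?_ conj ?_ hconjζ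
      · rw [div_pow, hα]; push_cast; ring
      · rw [eq_top_iff, ← hgen, IntermediateField.adjoin_le_iff]
        rintro x (rfl | hx)
        · have h1 : x / 2 ∈ IntermediateField.adjoin ℚ {x / 2, ζ} :=
            IntermediateField.subset_adjoin _ _ (Set.mem_insert _ _)
          have h2 : x = x / 2 + x / 2 := by ring
          have h3 := add_mem h1 h1
          rw [← h2] at h3
          exact h3
        · exact IntermediateField.subset_adjoin _ _ (Set.mem_insert_of_mem _ hx)
      · rw [map_div₀, hconjα, map_ofNat, neg_div]
  obtain ⟨𝒜, d, h0, hcd, hpos, hev, hpd, hdual, hfr⟩ := main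
  have hdF : d ∈ F := by
    rw [hF, IntermediateField.mem_fixedField_iff]
    have hle : Subgroup.zpowers conj ≤ MulAction.stabilizer (K ≃ₐ[ℚ] K) d := by
      rw [Subgroup.zpowers_le, MulAction.mem_stabilizer_iff]
      exact hcd
    intro f hf
    exact MulAction.mem_stabilizer_iff.1 (hle hf)
  refine ⟨𝒜, ⟨d, hdF⟩, h0, ?_, hev, fun x _ hx => hpd x hx, Set.ext hdual, hfr⟩
  intro φ
  obtain ⟨ψ, hψ⟩ := fin_ext (F := F) (K := K) (Complex.ofRealHom.comp φ)
  have h1 : ψ (algebraMap F K ⟨d, hdF⟩) = ((φ ⟨d, hdF⟩ : ℝ) : ℂ) := hψ _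
  let ψ' : K →ₐ[ℚ] ℂ := ψ.toRatAlgHom
  have h2 := hpos ψ'
  have h3 : ψ' d = ((φ ⟨d, hdF⟩ : ℝ) : ℂ) := h1
  rw [h3, Complex.ofReal_re] at h2
  exact h2
end

section
/- Let Λ be an O_L-lattice in a finite-dimensional positive definite Hermitian vector space (V,h) over L, let q be a prime, and let σ be an O_L-linear automorphism of Λ of order q preserving h (h(σx, σy) = h(x,y)) whose only fixed point in Λ is 0. Then for every n ≥ 1 and every nonzero Hermitian matrix A ∈ L^{n×n}, the representation number R_A := |{(x₁,…,x_n) ∈ Λ^n : (h(x_i,x_j))_{i,j} = A}| is finite and divisible by q. -/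
open NumberField


theorem aux_bdd {M : Type*} [AddCommGroup M] [Module.Finite ℤ M] (f : M →ₗ[ℤ] ℚ) (C : ℚ) :
    {y : ℚ | y ∈ LinearMap.range f ∧ |y| ≤ C}.Finite := by
  have hfg : (LinearMap.range f).FG := by
    rw [LinearMap.range_eq_map]
    exact Submodule.FG.map f Module.Finite.fg_top
  obtain ⟨N, hN, hI⟩ := FractionalIdeal.isFractional_of_fg (S := nonZeroDivisors ℤ) hfg
  have hN0 : (N : ℚ) ≠ 0 := by
    exact_mod_cast nonZeroDivisors.ne_zero hN
  refine Set.Finite.subset ((Set.finite_Icc (-⌈|(N : ℚ)| * C⌉) ⌈|(N : ℚ)| * C⌉).image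
    (fun k : ℤ => (k : ℚ) / N)) ?_
  rintro y ⟨hy, hyC⟩
  obtain ⟨k, hk⟩ := hI y hy
  have hk' : (k : ℚ) = N * y := by simpa using hk
  have h1 : |(k : ℚ)| ≤ |(N : ℚ)| * C := by
    rw [hk', abs_mul]
    exact mul_le_mul_of_nonneg_left hyC (abs_nonneg _)
  have h2 : |(k : ℚ)| ≤ (⌈|(N : ℚ)| * C⌉ : ℤ) := h1.trans (Int.le_ceil _)
  have h3 : |k| ≤ ⌈|(N : ℚ)| * C⌉ := by exact_mod_cast h2
  refine ⟨k, ?_, ?_⟩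
  · exact Set.mem_Icc.mpr (abs_le.mp h3)
  · simp only [hk']
    field_simp

theorem aux_fin {M : Type*} [AddCommGroup M] [Module.Finite ℤ M] (B : M →ₗ[ℤ] M →ₗ[ℤ] ℚ)
    (hs : ∀ x y, B x y = B y x) (hp : ∀ x, x ≠ 0 → 0 < B x x) (c : ℚ) :
    {x : M | B x x = c}.Finite := by
  have hnn : ∀ x, 0 ≤ B x x := by
    intro x
    by_cases hx : x = 0
    · simp [hx]
    · exact (hp x hx).le
  obtain ⟨S, hS⟩ := (Module.Finite.fg_top : (⊤ : Submodule ℤ M).FG)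
  let F : M → (S → ℚ) := fun x v => B v x
  have hinj : Function.Injective F := by
    intro x y hxy
    by_contra hne
    have h0 : ∀ w : M, B w (x - y) = 0 := by
      intro w
      have hw : w ∈ Submodule.span ℤ (S : Set M) := by rw [hS]; trivial
      induction hw using Submodule.span_induction with
      | mem v hv =>
        have := congrFun hxy ⟨v, hv⟩
        simp only [F] at this
        simp [this]
      | zero => simp
      | add a b _ _ ha hb => rw [map_add, LinearMap.add_apply, ha, hb, add_zero]
      | smul a b _ hb => rw [map_smul, LinearMap.smul_apply, hb, smul_zero]
    exact (hp _ (sub_ne_zero.mpr hne)).ne' (h0 _)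
  refine Set.Finite.of_finite_image ?_ hinj.injOn
  refine Set.Finite.subset (Set.Finite.pi' (fun v : S => aux_bdd (B v) (c + B v v))) ?_
  rintro _ ⟨x, hx, rfl⟩ v
  refine ⟨⟨x, rfl⟩, ?_⟩
  have hx' : B x x = c := hx
  have h1 := hnn (x + v)
  have h2 := hnn (x - v)
  have h3 := hs x v
  have h4 := hnn x
  have h5 := hnn v
  simp only [map_add, map_sub, LinearMap.add_apply, LinearMap.sub_apply] at h1 h2
  simp only [F]
  rw [abs_le]
  constructor <;> linarith

/-- If `σ` is an `O_L`-linear automorphism of the lattice `Λ` of prime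
order `q`, preserving `h` and fixing only `0`, then every representation number
`R_A = |{x ∈ Λⁿ : (h(xᵢ,xⱼ)) = A}|` for a nonzero Hermitian matrix `A` is finite and
divisible by `q`. -/
theorem representation_numbers_divisible (ℓ : ℕ) (hℓpos : 0 < ℓ)
    (hfund : (ℓ % 4 = 3 ∧ Squarefree ℓ) ∨
      ∃ m : ℕ, ℓ = 4 * m ∧ Squarefree m ∧ (m % 4 = 1 ∨ m % 4 = 2))
    (L : Type) [Field L] [NumberField L]
    (α : L) (hα : α ^ 2 = -(ℓ : L)) (hdim : Module.finrank ℚ L = 2)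
    (conj : L ≃ₐ[ℚ] L) (hconjα : conj α = -α)
    (V : Type) [AddCommGroup V] [Module L V] [FiniteDimensional L V]
    [Module (𝓞 L) V] [IsScalarTower (𝓞 L) L V]
    (h : V → V → L)
    (hadd : ∀ x y z : V, h (x + y) z = h x z + h y z)
    (hsmul : ∀ (a : L) (x y : V), h (a • x) y = a * h x y)
    (hswap : ∀ x y : V, h y x = conj (h x y))
    (hpos : ∀ x : V, x ≠ 0 → ∃ r : ℚ, 0 < r ∧ h x x = algebraMap ℚ L r)
    (Λ : Submodule (𝓞 L) V) (hfg : Λ.FG)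
    (hspan : Submodule.span L (Λ : Set V) = ⊤)
    (q : ℕ) (hq : q.Prime)
    (σ : Λ ≃ₗ[𝓞 L] Λ) (hord : orderOf σ = q)
    (hiso : ∀ x y : Λ, h (σ x : V) (σ y : V) = h (x : V) (y : V))
    (hfix : ∀ x : Λ, σ x = x → x = 0) :
    ∀ (n : ℕ), 1 ≤ n → ∀ A : Matrix (Fin n) (Fin n) L, A ≠ 0 →
      (∀ i j, A j i = conj (A i j)) →
      {x : Fin n → Λ | ∀ i j, h (x i : V) (x j : V) = A i j}.Finite ∧
      q ∣ Set.ncard {x : Fin n → Λ | ∀ i j, h (x i : V) (x j : V) = A i j} := by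
  intro n _hn A hA _hH
  have h0l : ∀ y, h 0 y = 0 := by
    intro y
    have := hadd 0 0 y
    simpa using this
  have haddr : ∀ x y z : V, h x (y + z) = h x y + h x z := by
    intro x y z
    rw [hswap (y + z) x, hadd, map_add, ← hswap, ← hswap]
  have hQ : ∀ x : V, ∃ r : ℚ, h x x = algebraMap ℚ L r := by
    intro x
    by_cases hx : x = 0
    · exact ⟨0, by rw [hx, h0l, map_zero]⟩
    · obtain ⟨r, _, hr⟩ := hpos x hx
      exact ⟨r, hr⟩
  choose Q hQ using hQ
  have hinj : Function.Injective (algebraMap ℚ L) := (algebraMap ℚ L).injective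
  have hb : ∀ x y : V, algebraMap ℚ L (Q (x + y) - Q x - Q y) = h x y + h y x := by
    intro x y
    rw [map_sub, map_sub, ← hQ, ← hQ, ← hQ, hadd, haddr, haddr]
    ring
  have hbl : ∀ x y z : V, Q (x + y + z) - Q (x + y) - Q z =
      (Q (x + z) - Q x - Q z) + (Q (y + z) - Q y - Q z) := by
    intro x y z
    apply hinj
    rw [map_add, hb, hb, hb, hadd, haddr]
    ring
  have hbs : ∀ x y : V, Q (x + y) - Q x - Q y = Q (y + x) - Q y - Q x := by
    intro x y
    rw [add_comm x y]; ring
  have hbr : ∀ x y z : V, Q (x + (y + z)) - Q x - Q (y + z) =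
      (Q (x + y) - Q x - Q y) + (Q (x + z) - Q x - Q z) := by
    intro x y z
    rw [hbs x (y + z), hbl, hbs y x, hbs z x]
  let B : Λ →ₗ[ℤ] Λ →ₗ[ℤ] ℚ :=
    (AddMonoidHom.mk' (fun x : Λ => (AddMonoidHom.mk'
      (fun y : Λ => Q ((x : V) + y) - Q x - Q y)
      (fun y z => hbr x y z)).toIntLinearMap)
      (fun x y => by
        ext z
        exact hbl x y z)).toIntLinearMap
  have hB : ∀ x y : Λ, B x y = Q ((x : V) + y) - Q x - Q y := fun _ _ => rfl
  have hBQ : ∀ x : Λ, B x x = 2 * Q x := by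
    intro x
    rw [hB]
    apply hinj
    rw [hb, map_mul, ← hQ, map_ofNat]
    ring
  have hfinO : Module.Finite (𝓞 L) Λ := Module.Finite.iff_fg.mpr hfg
  have hfinZ : Module.Finite ℤ Λ := Module.Finite.trans (𝓞 L) Λ
  have hfin1 : ∀ a : L, {x : Λ | h (x : V) (x : V) = a}.Finite := by
    intro a
    by_cases ha : ∃ r : ℚ, a = algebraMap ℚ L r
    · obtain ⟨r, rfl⟩ := ha
      refine (aux_fin B (fun x y => hbs x y) ?_ (2 * r)).subset ?_
      · intro x hx
        obtain ⟨s, hs, hs'⟩ := hpos x (by simpa using hx)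
        rw [hBQ, hinj ((hQ x).symm.trans hs')]
        positivity
      · intro x hx
        have hx' : h (x : V) (x : V) = algebraMap ℚ L r := hx
        show B x x = 2 * r
        rw [hBQ, hinj ((hQ x).symm.trans hx')]
    · refine Set.finite_empty.subset ?_
      intro x hx
      exact ha ⟨Q x, hx.symm.trans (hQ x)⟩
  have hfinS : {x : Fin n → Λ | ∀ i j, h (x i : V) (x j : V) = A i j}.Finite :=
    (Set.Finite.pi' (fun i => hfin1 (A i i))).subset (fun x hx i => hx i i)
  refine ⟨hfinS, ?_⟩
  set S := {x : Fin n → Λ | ∀ i j, h (x i : V) (x j : V) = A i j} with hSdef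
  haveI : Fintype S := hfinS.fintype
  haveI : Fact q.Prime := ⟨hq⟩
  classical
  let f : Function.End S := fun x => ⟨fun i => σ (x.1 i), fun i j => by
    rw [hiso]; exact x.2 i j⟩
  have hfk : ∀ (k : ℕ) (x : S) (i : Fin n), ((f ^ k) x).1 i = (σ ^ k) (x.1 i) := by
    intro k
    induction k with
    | zero => intro x i; rfl
    | succ k ih =>
      intro x i
      rw [pow_succ', pow_succ']
      show σ (((f ^ k) x).1 i) = σ ((σ ^ k) (x.1 i))
      rw [ih]
  have hf : f ^ q ^ 1 = 1 := by
    funext x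
    apply Subtype.ext
    funext i
    rw [hfk, pow_one, ← hord, pow_orderOf_eq_one]
    rfl
  have hmod := Equiv.Perm.card_fixedPoints_modEq hf
  have hempty : IsEmpty (Function.fixedPoints f) := by
    refine ⟨fun ⟨x, hx⟩ => hA ?_⟩
    ext i j
    have hx0 : x.1 i = 0 := hfix _ (congrFun (congrArg Subtype.val hx) i)
    rw [← x.2 i j, hx0]
    simp [h0l]
  rw [Fintype.card_eq_zero (α := Function.fixedPoints f)] at hmod
  rw [← Nat.card_coe_set_eq, Nat.card_eq_fintype_card]
  exact (Nat.modEq_zero_iff_dvd).mp hmod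
end
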